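/- arXiv:2306.03720 — 2 statements merged into one kernel-verified Lean document; each statement's English description precedes it below -/
import Mathlib

section
/- Assume d ≥ 2, 2 < p < 2_s^⋆, and let (g_ε) be (s,γ)-admissible for some s > d/(d+1) and γ > 1. Let (δ_ε)_{ε>0} be positive numbers with δ_ε → 0 as ε → 0⁺. For each ε ∈ (0,1) let u_ε ∈ H^s(ℝ^d) be nonzero with q_ε(u_ε)/‖u_ε‖_{L^p}² = R^∘_ε(p), and decompose u_ε = v_ε + w_ε where v̂_ε = 1_{A_{ε,δ_ε}} û_ε and ŵ_ε = (1 − 1_{A_{ε,δ_ε}}) û_ε. Then, as ε → 0⁺, ‖w_ε‖_{L^p}/‖v_ε‖_{L^p} → 0 and q_ε(w_ε)/q_ε(v_ε) → 0 (in particular v_ε ≠ 0 for all sufficiently small ε). -/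
open MeasureTheory Real Filter
open scoped ENNReal FourierTransform RealInnerProductSpace Topology

noncomputable section

/-- Euclidean space `ℝ^d`. -/
abbrev Rd (d : ℕ) : Type := EuclideanSpace ℝ (Fin d)

/-- `U` is the (distributional, hence `L²`-) Fourier transform of `u`:
it pairs against Schwartz functions the way the Fourier transform of `u` must. -/
def IsFT {d : ℕ} (U u : Rd d → ℂ) : Prop :=
  ∀ φ : SchwartzMap (Rd d) ℂ, ∫ ξ, U ξ * φ ξ = ∫ x, u x * 𝓕 (⇑φ) x

/-- An element of `H^s(ℝ^d)`: an `L²` function `toFun` together with its Fourier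
transform `ft`, satisfying the `H^s` integrability condition. -/
structure HsFn (d : ℕ) (s : ℝ) where
  toFun : Rd d → ℂ
  ft : Rd d → ℂ
  memL2 : MemLp toFun 2 volume
  ft_memL2 : MemLp ft 2 volume
  isFT : IsFT ft toFun
  memHs : Integrable (fun ξ : Rd d => ‖ft ξ‖ ^ 2 * (1 + ‖ξ‖ ^ 2) ^ s) volume

/-- The quadratic form `q_ε(u) = ∫ |û(ξ)|² g(|ξ|) dξ` (for a fixed symbol `g`). -/
def qeps {d : ℕ} {s : ℝ} (g : ℝ → ℝ) (u : HsFn d s) : ℝ :=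
  ∫ ξ : Rd d, ‖u.ft ξ‖ ^ 2 * g ‖ξ‖

/-- The `L^p` norm (as a real number). -/
def LpN {d : ℕ} (p : ℝ) (f : Rd d → ℂ) : ℝ :=
  (eLpNorm f (ENNReal.ofReal p) volume).toReal

/-- The set of values of the Rayleigh quotient `q_ε(u)/‖u‖_p²` over nonzero
`u ∈ H^s` satisfying the symmetry constraint `P`. -/
def RayleighSet (d : ℕ) (s p : ℝ) (g : ℝ → ℝ) (P : (Rd d → ℂ) → Prop) : Set ℝ :=
  {t | ∃ u : HsFn d s, P u.toFun ∧ ¬ u.toFun =ᵐ[volume] (fun _ => (0 : ℂ)) ∧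
      MemLp u.toFun (ENNReal.ofReal p) volume ∧
      t = qeps g u / LpN p u.toFun ^ 2}

/-- The Rayleigh quotient infimum. -/
def Rayleigh (d : ℕ) (s p : ℝ) (g : ℝ → ℝ) (P : (Rd d → ℂ) → Prop) : ℝ :=
  sInf (RayleighSet d s p g P)

/-- The Rayleigh quotient infimum is attained. -/
def Attained (d : ℕ) (s p : ℝ) (g : ℝ → ℝ) (P : (Rd d → ℂ) → Prop) : Prop :=
  ∃ u : HsFn d s, P u.toFun ∧ ¬ u.toFun =ᵐ[volume] (fun _ => (0 : ℂ)) ∧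
      MemLp u.toFun (ENNReal.ofReal p) volume ∧
      qeps g u / LpN p u.toFun ^ 2 = Rayleigh d s p g P

/-- A radial function. -/
def Radial {d : ℕ} (f : Rd d → ℂ) : Prop := ∀ x y : Rd d, ‖x‖ = ‖y‖ → f x = f y

/-- The squared norm of the first block of coordinates (the first `d - k` ones),
under the identification `ℝ^d = ℝ^{d-k} × ℝ^k`. -/
def blockSq (d k : ℕ) (x : Rd d) : ℝ := ∑ i : Fin d, if (i : ℕ) < d - k then x i ^ 2 else 0

/-- A `G_k = O(d-k) × O(k)`-symmetric function: it depends only on the norms of the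
two blocks of coordinates. -/
def GkSymmetric (d k : ℕ) (f : Rd d → ℂ) : Prop :=
  ∀ x y : Rd d, blockSq d k x = blockSq d k y → ‖x‖ = ‖y‖ → f x = f y

/-- An `(s,γ)`-admissible family of symbols, with admissibility constants `c, C`. -/
def IsAdmissible (s γ c C : ℝ) (g : ℝ → ℝ → ℝ) : Prop :=
  (∀ ε ∈ Set.Ioo (0:ℝ) 1, Measurable (g ε)) ∧
  (∀ ε ∈ Set.Ioo (0:ℝ) 1, ∀ r : ℝ, 0 < g ε r) ∧
  (∀ ε ∈ Set.Ioo (0:ℝ) 1, ∀ r : ℝ, 1/2 ≤ |r - 1| →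
      c * (1 + |r| ^ (2*s)) ≤ g ε r ∧ g ε r ≤ C * (1 + |r| ^ (2*s))) ∧
  (∀ ε ∈ Set.Ioo (0:ℝ) 1, ∀ r : ℝ, |r - 1| ≤ 1/2 →
      c * (ε + |r - 1| ^ γ) ≤ g ε r ∧ g ε r ≤ C * (ε + |r - 1| ^ γ))

/-- The `G_k`-symmetric Stein–Tomas exponent `2_⋆^k`. -/
def twoStarK (d k : ℕ) : ℝ :=
  2 * ((d : ℝ) + (min k (d - k) : ℕ)) / ((d : ℝ) - 2 + (min k (d - k) : ℕ))

/-- The interpolation parameter `α_k`. -/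
def alphaK (d k : ℕ) (p : ℝ) : ℝ := (1/2 - 1/p) / (1/2 - 1/twoStarK d k)

/-- The spherical shell `A_{ε,δ}` around the unit sphere (with `I_{ε,δ}` scale `ε^{1/γ}`). -/
def Aset (d : ℕ) (γ ε δ : ℝ) : Set (Rd d) :=
  {ξ | δ * ε ^ (1/γ) ≤ |‖ξ‖ - 1| ∧ |‖ξ‖ - 1| ≤ δ⁻¹ * ε ^ (1/γ)}

/-!
Write `R` for the infimum of the Rayleigh quotient and `t = ε ^ (1 / γ)`. By definition of `R`,
every `U` supported in the shell of half-width `t` around the unit sphere satisfies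
`‖𝓕⁻ U‖_p² ≤ (2 C ε / R) ‖U‖₂²`, so minimality itself supplies the restriction estimate at scale `t`
and no Stein–Tomas theorem is needed. It improves off the annulus `Aset d γ ε δ`:

* at distance at most `δ t` from the sphere, about `1 / δ` translates of `U` with modulated phases
  fit into the `t`-shell, and comparing the `L^p` and `L²` norms of their sum gains the factor
  `δ ^ (1 - 2 / p)`;
* at distance between `t / δ` and `1 / 2`, slabs of width comparable to `t` are rescaled to the
  `t`-shell, and the growth of the symbol over the slabs gains a power of `δ`;
* at distance at least `1 / 2` the Sobolev inequality is compared with `R ≲ ε ^ (1 - 1 / γ) → 0`,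
  which follows by testing with the indicator function of the `t`-shell.

Hence `R ‖w‖_p² ≤ η q(w)` with `η → 0`. Together with `R ‖v‖_p² ≤ q(v)` and
`q(v) + q(w) = R ‖v + w‖_p²` this forces `‖w‖_p = O(η) ‖v‖_p` and `q(w) = O(η) q(v)`.
-/

/-! ### The inverse Fourier integral -/

section FourierInv

variable {V F : Type*} [NormedAddCommGroup V] [InnerProductSpace ℝ V] [MeasurableSpace V]
  [BorelSpace V] [FiniteDimensional ℝ V] [NormedAddCommGroup F] [NormedSpace ℂ F]

lemma continuous_fourierInv {U : V → F} (hU : Integrable U) : Continuous (𝓕⁻ U) :=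
  VectorFourier.fourierIntegral_continuous continuous_fourierChar continuous_inner.neg hU

lemma norm_fourierInv_le_integral_norm (U : V → F) (x : V) : ‖𝓕⁻ U x‖ ≤ ∫ ξ, ‖U ξ‖ :=
  VectorFourier.norm_fourierIntegral_le_integral_norm 𝐞 volume (-innerₗ V) U x

lemma norm_fourierInv_rpow_le {p : ℝ} (hp : 2 ≤ p) (U : V → F) (x : V) :
    ‖𝓕⁻ U x‖ ^ p ≤ (∫ ξ, ‖U ξ‖) ^ (p - 2) * ‖𝓕⁻ U x‖ ^ 2 := by
  have hp' : 0 ≤ p - 2 := by linarith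
  calc ‖𝓕⁻ U x‖ ^ p = ‖𝓕⁻ U x‖ ^ (p - 2) * ‖𝓕⁻ U x‖ ^ 2 := by
        rw [← Real.rpow_two, ← Real.rpow_add_of_nonneg (norm_nonneg _) hp' two_pos.le,
          sub_add_cancel]
    _ ≤ _ := by
        gcongr
        exact norm_fourierInv_le_integral_norm U x

lemma fourierInv_add_of_integrable {U₁ U₂ : V → F} (h₁ : Integrable U₁) (h₂ : Integrable U₂) :
    𝓕⁻ (U₁ + U₂) = 𝓕⁻ U₁ + 𝓕⁻ U₂ :=
  VectorFourier.fourierIntegral_add continuous_fourierChar continuous_inner.neg h₁ h₂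

lemma fourierInv_zero_fun : 𝓕⁻ (0 : V → F) = 0 := by
  ext x
  simp [Real.fourierInv_eq]

lemma fourierInv_sum_of_integrable {ι : Type*} (J : Finset ι) {U : ι → V → F}
    (hU : ∀ i ∈ J, Integrable (U i)) : 𝓕⁻ (∑ i ∈ J, U i) = ∑ i ∈ J, 𝓕⁻ (U i) := by
  classical
  induction J using Finset.induction_on with
  | empty => exact fourierInv_zero_fun
  | insert a J ha ih =>
    rw [Finset.forall_mem_insert] at hU
    rw [Finset.sum_insert ha, Finset.sum_insert ha,
      fourierInv_add_of_integrable hU.1 (integrable_finsetSum' J hU.2), ih hU.2]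

lemma fourierInv_const_smul (a : ℂ) (U : V → F) : 𝓕⁻ (a • U) = a • 𝓕⁻ U :=
  VectorFourier.fourierIntegral_const_smul 𝐞 volume (-innerₗ V) U a

lemma fourierInv_comp_sub_right (a : V) (U : V → F) (x : V) :
    𝓕⁻ (fun ξ => U (ξ - a)) x = 𝐞 ⟪a, x⟫ • 𝓕⁻ U x := by
  have h := congrFun
    (VectorFourier.fourierIntegral_comp_add_right 𝐞 volume (-innerₗ V) U (-a)) x
  simp only [Function.comp_def, ← sub_eq_add_neg, LinearMap.neg_apply, innerₗ_apply_apply,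
    inner_neg_left, neg_neg] at h
  exact h

lemma fourierInv_comp_smul {r : ℝ} (hr : 0 < r) (U : V → F) (x : V) :
    𝓕⁻ (fun ξ => U (r • ξ)) x = (r ^ Module.finrank ℝ V)⁻¹ • 𝓕⁻ U (r⁻¹ • x) := by
  simp only [Real.fourierInv_eq]
  have h := Measure.integral_comp_smul (volume : Measure V) (fun ξ => 𝐞 ⟪ξ, r⁻¹ • x⟫ • U ξ) r
  rw [abs_of_pos (by positivity)] at h
  simpa [inner_smul_left, inner_smul_right, hr.ne'] using h

end FourierInv

/-! ### The distributional Fourier transform on `L²` -/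

section IsFT

variable {d : ℕ} {U V u v : Rd d → ℂ}

lemma IsFT.congr_left (h : IsFT U u) (hUV : U =ᵐ[volume] V) : IsFT V u := fun φ => by
  rw [← h φ]
  exact integral_congr_ae (hUV.mono fun ξ hξ => by simp only [hξ])

lemma IsFT.ae_eq (hu : LocallyIntegrable u) (hv : LocallyIntegrable v) (h₁ : IsFT U u)
    (h₂ : IsFT U v) : u =ᵐ[volume] v := by
  refine ae_eq_of_integral_contDiff_smul_eq hu hv fun φ hφ hφ_cpt => ?_
  have hsmooth : ContDiff ℝ (⊤ : ℕ∞) (Complex.ofRealCLM ∘ φ) :=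
    Complex.ofRealCLM.contDiff.comp hφ
  have hcpt : HasCompactSupport (Complex.ofRealCLM ∘ φ) := hφ_cpt.comp_left rfl
  have h := (h₁ (𝓕⁻ (hcpt.toSchwartzMap hsmooth))).symm.trans (h₂ _)
  rw [← SchwartzMap.fourier_coe, FourierTransform.fourier_fourierInv_eq] at h
  simpa [mul_comm] using h

lemma integrable_mul_schwartz (hU : MemLp U 2) (φ : SchwartzMap (Rd d) ℂ) :
    Integrable fun ξ => U ξ * φ ξ :=
  hU.integrable_mul (φ.memLp 2)

lemma IsFT.sub (hU : MemLp U 2) (hV : MemLp V 2) (hu : MemLp u 2) (hv : MemLp v 2)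
    (h₁ : IsFT U u) (h₂ : IsFT V v) : IsFT (U - V) (u - v) := fun φ => by
  have hφ := integrable_mul_schwartz hu (𝓕 φ)
  have hφ' := integrable_mul_schwartz hv (𝓕 φ)
  rw [SchwartzMap.fourier_coe] at hφ hφ'
  simp only [Pi.sub_apply, sub_mul]
  rw [integral_sub (integrable_mul_schwartz hU φ) (integrable_mul_schwartz hV φ),
    integral_sub hφ hφ', h₁ φ, h₂ φ]

lemma isFT_fourierInv_lp (T : Lp (α := Rd d) ℂ 2 volume) :
    IsFT T (𝓕⁻ T : Lp (α := Rd d) ℂ 2 volume) := fun φ => by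
  have h := Lp.fourier_toTemperedDistribution_eq (𝓕⁻ T : Lp (α := Rd d) ℂ 2 volume)
  rw [FourierTransform.fourier_fourierInv_eq] at h
  have hφ := congrArg (fun S => S φ) h
  simp only [TemperedDistribution.fourier_apply, Lp.toTemperedDistribution_apply,
    SchwartzMap.fourier_coe] at hφ
  simpa [mul_comm] using hφ.symm

lemma isFT_fourierInv (hU : Integrable U) : IsFT U (𝓕⁻ U) := fun φ => by
  have hφ : Integrable (𝓕 ⇑φ) := by
    rw [← SchwartzMap.fourier_coe]
    exact (𝓕 φ).integrable
  have hinv : 𝓕⁻ (𝓕 ⇑φ) = φ := by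
    rw [← SchwartzMap.fourier_coe, ← SchwartzMap.fourierInv_coe,
      FourierTransform.fourierInv_fourier_eq]
  have hflip : (-innerₗ (Rd d)).flip = -innerₗ (Rd d) := by
    ext ξ x
    simp [real_inner_comm]
  have h := VectorFourier.integral_fourierIntegral_smul_eq_flip (L := -innerₗ (Rd d))
    continuous_fourierChar continuous_inner.neg hU hφ
  rw [hflip] at h
  refine Eq.trans ?_ h.symm
  exact integral_congr_ae (.of_forall fun ξ => congrArg (U ξ * ·) (congrFun hinv ξ).symm)

lemma IsFT.memLp_and_eLpNorm_eq (hU : MemLp U 2) (hu : LocallyIntegrable u) (h : IsFT U u) :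
    MemLp u 2 ∧ eLpNorm u 2 = eLpNorm U 2 := by
  set T := hU.toLp U
  have hT : (𝓕⁻ T : Lp (α := Rd d) ℂ 2 volume) =ᵐ[volume] u :=
    IsFT.ae_eq ((Lp.memLp _).locallyIntegrable (by norm_num)) hu
      ((isFT_fourierInv_lp T).congr_left hU.coeFn_toLp) h
  have hnorm : ‖(𝓕⁻ T : Lp (α := Rd d) ℂ 2 volume)‖ = ‖T‖ := by
    rw [← Lp.norm_fourier_eq (𝓕⁻ T), FourierTransform.fourier_fourierInv_eq]
  rw [Lp.norm_def, Lp.norm_def,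
    ENNReal.toReal_eq_toReal_iff' (Lp.eLpNorm_ne_top _) (Lp.eLpNorm_ne_top _)] at hnorm
  exact ⟨(memLp_congr_ae hT).1 (Lp.memLp _),
    (eLpNorm_congr_ae hT.symm).trans (hnorm.trans (eLpNorm_congr_ae hU.coeFn_toLp))⟩

end IsFT

/-! ### Band-limited functions and weighted energies -/

/-- A frequency-side function in `L²` with bounded support. Its inverse Fourier integral converges
absolutely and lies in every `L^p`, `2 ≤ p`, so that the bounds below can be tested on such
functions without any convergence question. -/
structure IsBandLimited {d : ℕ} (U : Rd d → ℂ) : Prop where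
  memLp : MemLp U 2
  isBounded_support : Bornology.IsBounded (Function.support U)

/-- A nonnegative weight on the frequency side which is bounded on balls; these are the weights for
which every band-limited function has finite energy. -/
structure IsWeight {d : ℕ} (ω : Rd d → ℝ) : Prop where
  measurable : Measurable ω
  nonneg : 0 ≤ ω
  bounded_on_balls : ∀ ρ : ℝ, ∃ M, ∀ ξ, ‖ξ‖ ≤ ρ → ω ξ ≤ M

/-- The weighted energy `∫ |U|² ω`. The form `q_ε(u)` is the energy of `û` for `ω = g_ε(|·|)`. -/
def energy {d : ℕ} (ω : Rd d → ℝ) (U : Rd d → ℂ) : ℝ := ∫ ξ, ‖U ξ‖ ^ 2 * ω ξ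

section LpN

variable {d : ℕ} {p : ℝ} {f g : Rd d → ℂ}

lemma LpN_nonneg (p : ℝ) (f : Rd d → ℂ) : 0 ≤ LpN p f := ENNReal.toReal_nonneg

lemma LpN_congr (h : f =ᵐ[volume] g) : LpN p f = LpN p g := by
  rw [LpN, LpN, eLpNorm_congr_ae h]

lemma LpN_of_ae_eq_zero (h : f =ᵐ[volume] fun _ => 0) : LpN p f = 0 := by
  rw [LpN_congr h, LpN]
  simp

lemma LpN_add_le (hp : 1 ≤ p) (hf : MemLp f (ENNReal.ofReal p))
    (hg : MemLp g (ENNReal.ofReal p)) : LpN p (f + g) ≤ LpN p f + LpN p g := by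
  rw [LpN, LpN, LpN, ← ENNReal.toReal_add hf.eLpNorm_ne_top hg.eLpNorm_ne_top]
  exact ENNReal.toReal_mono (ENNReal.add_ne_top.2 ⟨hf.eLpNorm_ne_top, hg.eLpNorm_ne_top⟩)
    (eLpNorm_add_le hf.1 hg.1 (ENNReal.one_le_ofReal.2 hp))

lemma LpN_rpow (hp : 0 < p) (hf : MemLp f (ENNReal.ofReal p)) :
    LpN p f ^ p = ∫ x, ‖f x‖ ^ p := by
  have h := hf.eLpNorm_eq_integral_rpow_norm (by simpa using hp) ENNReal.ofReal_ne_top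
  rw [LpN, h, ENNReal.toReal_ofReal (by positivity), ENNReal.toReal_ofReal hp.le,
    Real.rpow_inv_rpow (by positivity) hp.ne']

lemma LpN_const_smul (a : ℝ) (f : Rd d → ℂ) : LpN p (a • f) = |a| * LpN p f := by
  simp [LpN, eLpNorm_const_smul]

lemma LpN_comp_inv_smul (hp : 0 < p) {r : ℝ} (hr : 0 < r) (f : Rd d → ℂ) :
    LpN p (fun x => f (r⁻¹ • x)) = (r ^ d) ^ (1 / p) * LpN p f := by
  have hmap : Measure.map (fun x : Rd d => r⁻¹ • x) volume = ENNReal.ofReal (r ^ d) • volume := by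
    rw [Measure.map_addHaar_smul _ (inv_ne_zero hr.ne'), finrank_euclideanSpace_fin,
      inv_pow, inv_inv, abs_of_pos (by positivity)]
  have hemb : MeasurableEmbedding fun x : Rd d => r⁻¹ • x :=
    (Homeomorph.smulOfNeZero r⁻¹ (inv_ne_zero hr.ne')).measurableEmbedding
  change (eLpNorm (f ∘ fun x => r⁻¹ • x) _ _).toReal = _
  rw [← hemb.eLpNorm_map_measure, hmap,
    eLpNorm_smul_measure_of_ne_top ENNReal.ofReal_ne_top, smul_eq_mul, ENNReal.toReal_mul,
    ← ENNReal.toReal_rpow, ENNReal.toReal_ofReal (by positivity), ENNReal.toReal_div,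
    ENNReal.toReal_one, ENNReal.toReal_ofReal hp.le, LpN]

end LpN

section Weight

variable {d : ℕ} {ω : Rd d → ℝ} {U : Rd d → ℂ}

lemma isWeight_of_continuous (hω : Continuous ω) (h₀ : 0 ≤ ω) : IsWeight ω where
  measurable := hω.measurable
  nonneg := h₀
  bounded_on_balls ρ := by
    obtain ⟨M, hM⟩ := (isCompact_closedBall (0 : Rd d) ρ).bddAbove_image hω.continuousOn
    exact ⟨M, fun ξ hξ => hM ⟨ξ, by simpa using hξ, rfl⟩⟩

lemma isWeight_one : IsWeight (1 : Rd d → ℝ) :=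
  isWeight_of_continuous continuous_one zero_le_one

lemma energy_nonneg (hω : 0 ≤ ω) (U : Rd d → ℂ) : 0 ≤ energy ω U :=
  integral_nonneg fun ξ => mul_nonneg (by positivity) (hω ξ)

lemma energy_one (U : Rd d → ℂ) : energy 1 U = ∫ ξ, ‖U ξ‖ ^ 2 := by simp [energy]

lemma integrable_norm_sq (hU : MemLp U 2) : Integrable fun ξ => ‖U ξ‖ ^ 2 :=
  hU.integrable_norm_pow two_ne_zero

lemma energy_one_eq_toReal_sq (hU : MemLp U 2) : energy 1 U = (eLpNorm U 2).toReal ^ 2 := by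
  have h := LpN_rpow two_pos (by simpa using hU)
  simp only [LpN, Real.rpow_two, ENNReal.ofReal_ofNat] at h
  rw [energy_one, h]

end Weight

namespace IsBandLimited

variable {d : ℕ} {U V : Rd d → ℂ}

lemma zero : IsBandLimited (0 : Rd d → ℂ) := ⟨MemLp.zero, by simp⟩

lemma add (hU : IsBandLimited U) (hV : IsBandLimited V) : IsBandLimited (U + V) :=
  ⟨hU.1.add hV.1, (hU.2.union hV.2).subset (Function.support_add U V)⟩

lemma sum {ι : Type*} (J : Finset ι) {U : ι → Rd d → ℂ} (hU : ∀ i ∈ J, IsBandLimited (U i)) :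
    IsBandLimited (∑ i ∈ J, U i) :=
  Finset.sum_induction U IsBandLimited (fun _ _ => add) zero hU

lemma const_smul (hU : IsBandLimited U) (a : ℂ) : IsBandLimited (a • U) :=
  ⟨hU.1.const_smul a, hU.2.subset (Function.support_const_smul_subset a U)⟩

lemma indicator (hU : IsBandLimited U) {A : Set (Rd d)} (hA : MeasurableSet A) :
    IsBandLimited (A.indicator U) :=
  ⟨hU.1.indicator hA, hU.2.subset (by rw [Set.support_indicator]; exact Set.inter_subset_right)⟩

lemma comp_sub_right (hU : IsBandLimited U) (a : Rd d) : IsBandLimited fun ξ => U (ξ - a) where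
  memLp := hU.1.comp_measurePreserving (measurePreserving_sub_right volume a)
  isBounded_support := by
    refine (hU.2.vadd a).subset fun ξ hξ => ⟨ξ - a, hξ, by simp⟩

lemma comp_smul (hU : IsBandLimited U) {r : ℝ} (hr : r ≠ 0) :
    IsBandLimited fun ξ => U (r • ξ) where
  memLp := by
    have hmeas : AEStronglyMeasurable (fun ξ => U (r • ξ)) :=
      hU.1.1.comp_quasiMeasurePreserving (Measure.quasiMeasurePreserving_smul _ hr)
    rw [← integrable_norm_rpow_iff hmeas two_ne_zero ENNReal.ofNat_ne_top]
    exact (hU.1.integrable_norm_rpow two_ne_zero ENNReal.ofNat_ne_top).comp_smul hr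
  isBounded_support :=
    (hU.2.smul₀ r⁻¹).subset fun ξ hξ => ⟨r • ξ, hξ, inv_smul_smul₀ hr ξ⟩

lemma integrable (hU : IsBandLimited U) : Integrable U := by
  rw [← integrableOn_iff_integrable_of_support_subset subset_closure]
  have : IsFiniteMeasure (volume.restrict (closure (Function.support U))) :=
    isFiniteMeasure_restrict.2 hU.2.closure.measure_lt_top.ne
  exact (hU.1.restrict _).integrable one_le_two

lemma integrable_energy (hU : IsBandLimited U) {ω : Rd d → ℝ} (hω : IsWeight ω) :
    Integrable fun ξ => ‖U ξ‖ ^ 2 * ω ξ := by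
  obtain ⟨ρ, hρ⟩ := hU.2.exists_norm_le
  obtain ⟨M, hM⟩ := hω.bounded_on_balls ρ
  refine ((integrable_norm_sq hU.1).mul_const M).mono'
    ((hU.1.1.norm.pow 2).mul hω.measurable.aestronglyMeasurable) (.of_forall fun ξ => ?_)
  rw [Real.norm_of_nonneg (mul_nonneg (by positivity) (hω.nonneg ξ))]
  by_cases hξ : U ξ = 0
  · simp [hξ]
  · gcongr
    exact hM ξ (hρ ξ hξ)

lemma memLp_two_fourierInv (hU : IsBandLimited U) :
    MemLp (𝓕⁻ U) 2 ∧ eLpNorm (𝓕⁻ U) 2 = eLpNorm U 2 :=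
  (isFT_fourierInv hU.integrable).memLp_and_eLpNorm_eq hU.1
    (continuous_fourierInv hU.integrable).locallyIntegrable

lemma energy_one_fourierInv (hU : IsBandLimited U) : energy 1 (𝓕⁻ U) = energy 1 U := by
  rw [energy_one_eq_toReal_sq hU.memLp_two_fourierInv.1, energy_one_eq_toReal_sq hU.1,
    hU.memLp_two_fourierInv.2]

lemma memLp_fourierInv (hU : IsBandLimited U) {p : ℝ} (hp : 2 ≤ p) :
    MemLp (𝓕⁻ U) (ENNReal.ofReal p) := by
  have hmeas : AEStronglyMeasurable (𝓕⁻ U) := hU.memLp_two_fourierInv.1.1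
  rw [← integrable_norm_rpow_iff hmeas (by simp; linarith) ENNReal.ofReal_ne_top,
    ENNReal.toReal_ofReal (by linarith)]
  refine ((integrable_norm_sq hU.memLp_two_fourierInv.1).const_mul ((∫ ξ, ‖U ξ‖) ^ (p - 2))).mono'
    (hmeas.norm.aemeasurable.pow_const p).aestronglyMeasurable (.of_forall fun x => ?_)
  rw [Real.norm_of_nonneg (by positivity)]
  exact norm_fourierInv_rpow_le hp U x

end IsBandLimited

lemma energy_indicator_add_compl {d : ℕ} {ω : Rd d → ℝ} {U : Rd d → ℂ}
    (h : Integrable fun ξ => ‖U ξ‖ ^ 2 * ω ξ) {A : Set (Rd d)} (hA : MeasurableSet A) :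
    energy ω (A.indicator U) + energy ω (Aᶜ.indicator U) = energy ω U := by
  have hind (B : Set (Rd d)) (hB : MeasurableSet B) :
      energy ω (B.indicator U) = ∫ ξ in B, ‖U ξ‖ ^ 2 * ω ξ := by
    rw [energy, ← integral_indicator hB]
    congr 1 with ξ
    by_cases hξ : ξ ∈ B <;> simp [hξ]
  rw [hind A hA, hind Aᶜ hA.compl, integral_add_compl hA h, energy]

lemma energy_indicator_le {d : ℕ} {ω : Rd d → ℝ} {U : Rd d → ℂ} (hω : 0 ≤ ω)
    (h : Integrable fun ξ => ‖U ξ‖ ^ 2 * ω ξ) {A : Set (Rd d)} (hA : MeasurableSet A) :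
    energy ω (A.indicator U) ≤ energy ω U := by
  linarith [energy_indicator_add_compl h hA, energy_nonneg hω (Aᶜ.indicator U)]

/-! ### Extension bounds -/

/-- The Fourier extension inequality `‖𝓕⁻ U‖_p² ≤ N ∫ |U|² ω` for band-limited `U` supported in
`A`. Every estimate of the proof is of this form; recording `0 ≤ N` makes the constants of a union
of frequency sets additive. -/
structure ExtensionBound {d : ℕ} (p : ℝ) (A : Set (Rd d)) (ω : Rd d → ℝ) (N : ℝ) : Prop where
  nonneg : 0 ≤ N
  sq_le : ∀ U : Rd d → ℂ, IsBandLimited U → Function.support U ⊆ A →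
    LpN p (𝓕⁻ U) ^ 2 ≤ N * energy ω U

lemma sq_add_le_add_mul_add {x y a b e f : ℝ} (ha : 0 ≤ a) (hb : 0 ≤ b) (he : 0 ≤ e) (hf : 0 ≤ f)
    (hx : x ^ 2 ≤ a * e) (hy : y ^ 2 ≤ b * f) : (x + y) ^ 2 ≤ (a + b) * (e + f) := by
  have hcross : 2 * (x * y) ≤ a * f + b * e := by
    refine le_of_sq_le_sq ?_ (by positivity)
    have hprod : x ^ 2 * y ^ 2 ≤ (a * e) * (b * f) := by gcongr
    nlinarith [sq_nonneg (a * f - b * e)]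
  nlinarith

namespace ExtensionBound

variable {d : ℕ} {p N N₁ N₂ : ℝ} {A B : Set (Rd d)} {ω ω' : Rd d → ℝ}

lemma mono_set (h : ExtensionBound p A ω N) (hBA : B ⊆ A) : ExtensionBound p B ω N :=
  ⟨h.nonneg, fun U hU hUB => h.sq_le U hU (hUB.trans hBA)⟩

lemma mono_const (h : ExtensionBound p A ω N₁) (hω : 0 ≤ ω) (hN : N₁ ≤ N₂) :
    ExtensionBound p A ω N₂ :=
  ⟨h.nonneg.trans hN, fun U hU hUA =>
    (h.sq_le U hU hUA).trans (mul_le_mul_of_nonneg_right hN (energy_nonneg hω U))⟩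

lemma mono_weight (h : ExtensionBound p A ω N) (hω : 0 ≤ ω) (hω' : IsWeight ω') {k : ℝ}
    (hk : 0 ≤ k) (hle : ∀ ξ ∈ A, ω ξ ≤ k * ω' ξ) : ExtensionBound p A ω' (N * k) := by
  refine ⟨mul_nonneg h.nonneg hk, fun U hU hUA => (h.sq_le U hU hUA).trans ?_⟩
  rw [mul_assoc]
  refine mul_le_mul_of_nonneg_left ?_ h.nonneg
  rw [energy, energy, ← integral_const_mul]
  refine integral_mono_of_nonneg (.of_forall fun ξ => mul_nonneg (by positivity) (hω ξ))
    ((hU.integrable_energy hω').const_mul k) (.of_forall fun ξ => ?_)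
  by_cases hξ : U ξ = 0
  · simp [hξ]
  · calc ‖U ξ‖ ^ 2 * ω ξ ≤ ‖U ξ‖ ^ 2 * (k * ω' ξ) := by gcongr; exact hle ξ (hUA hξ)
      _ = k * (‖U ξ‖ ^ 2 * ω' ξ) := by ring

lemma empty (p : ℝ) (ω : Rd d → ℝ) : ExtensionBound p ∅ ω 0 := by
  refine ⟨le_rfl, fun U _ hU => ?_⟩
  rw [Set.subset_empty_iff, Function.support_eq_empty_iff] at hU
  simp [hU, fourierInv_zero_fun, LpN]

lemma union (hp : 2 ≤ p) (hω : IsWeight ω) (hA : MeasurableSet A) (h₁ : ExtensionBound p A ω N₁)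
    (h₂ : ExtensionBound p B ω N₂) : ExtensionBound p (A ∪ B) ω (N₁ + N₂) := by
  refine ⟨add_nonneg h₁.nonneg h₂.nonneg, fun U hU hUAB => ?_⟩
  have hU₁ := hU.indicator hA
  have hU₂ := hU.indicator hA.compl
  have hle₁ := h₁.sq_le _ hU₁ Set.support_indicator_subset
  have hle₂ := h₂.sq_le _ hU₂ fun ξ hξ => by
    rw [Set.support_indicator] at hξ
    exact (hUAB hξ.2).resolve_left hξ.1
  have htri : LpN p (𝓕⁻ U) ≤ LpN p (𝓕⁻ (A.indicator U)) + LpN p (𝓕⁻ (Aᶜ.indicator U)) := by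
    conv_lhs => rw [← Set.indicator_self_add_compl A U,
      fourierInv_add_of_integrable hU₁.integrable hU₂.integrable]
    exact LpN_add_le (by linarith) (hU₁.memLp_fourierInv hp) (hU₂.memLp_fourierInv hp)
  rw [← energy_indicator_add_compl (hU.integrable_energy hω) hA]
  exact (pow_le_pow_left₀ (LpN_nonneg _ _) htri 2).trans
    (sq_add_le_add_mul_add h₁.nonneg h₂.nonneg (energy_nonneg hω.nonneg _)
      (energy_nonneg hω.nonneg _) hle₁ hle₂)

lemma biUnion (hp : 2 ≤ p) (hω : IsWeight ω) {ι : Type*} (J : Finset ι) {A : ι → Set (Rd d)}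
    {N : ι → ℝ} (hA : ∀ i ∈ J, MeasurableSet (A i))
    (h : ∀ i ∈ J, ExtensionBound p (A i) ω (N i)) :
    ExtensionBound p (⋃ i ∈ J, A i) ω (∑ i ∈ J, N i) := by
  classical
  induction J using Finset.induction_on with
  | empty => simpa using empty p ω
  | insert a J ha ih =>
    rw [Finset.forall_mem_insert] at hA h
    rw [Finset.set_biUnion_insert, Finset.sum_insert ha]
    exact h.1.union hp hω hA.1 (ih hA.2 h.2)

open scoped Pointwise in
lemma smul_set (hp : 0 < p) {r : ℝ} (hr : 0 < r)
    (h : ExtensionBound p A (fun ξ => ω (r • ξ)) N) :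
    ExtensionBound p (r • A) ω (N * (r ^ d) ^ (1 - 2 / p)) := by
  refine ⟨mul_nonneg h.nonneg (by positivity), fun U hU hUA => ?_⟩
  have hle := h.sq_le _ (hU.comp_smul hr.ne') fun ξ hξ =>
    (Set.smul_mem_smul_set_iff₀ hr.ne' A ξ).1 (hUA hξ)
  have hLp : LpN p (𝓕⁻ fun ξ => U (r • ξ)) =
      (r ^ d)⁻¹ * ((r ^ d) ^ (1 / p) * LpN p (𝓕⁻ U)) := by
    have hfun : (𝓕⁻ fun ξ => U (r • ξ)) = (r ^ d)⁻¹ • fun x => 𝓕⁻ U (r⁻¹ • x) := by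
      ext x
      rw [fourierInv_comp_smul hr, finrank_euclideanSpace_fin, Pi.smul_apply]
    rw [hfun, LpN_const_smul, LpN_comp_inv_smul hp hr, abs_of_pos (by positivity)]
  have hen : energy (fun ξ => ω (r • ξ)) (fun ξ => U (r • ξ)) = (r ^ d)⁻¹ * energy ω U := by
    have hInt := Measure.integral_comp_smul (volume : Measure (Rd d))
      (fun ξ => ‖U ξ‖ ^ 2 * ω ξ) r
    rwa [finrank_euclideanSpace_fin, abs_of_pos (by positivity)] at hInt
  rw [hLp, hen] at hle
  set y := r ^ d
  have hy : 0 < y := by positivity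
  have hroot : y ^ (2 / p) = (y ^ (1 / p)) ^ 2 := by
    rw [← Real.rpow_mul_natCast hy.le, Nat.cast_two, one_div_mul_eq_div]
  rw [Real.rpow_sub hy, Real.rpow_one, hroot]
  have hz : 0 < y ^ (1 / p) := by positivity
  field_simp at hle ⊢
  linarith

end ExtensionBound

/-! ### Passage to the limit -/

section Density

variable {d : ℕ} {p N : ℝ} {A : Set (Rd d)} {ω : Rd d → ℝ} {U u : Rd d → ℂ}

lemma isBandLimited_indicator_closedBall (hU : MemLp U 2) (ρ : ℝ) :
    IsBandLimited ((Metric.closedBall 0 ρ).indicator U) :=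
  ⟨hU.indicator measurableSet_closedBall,
    Metric.isBounded_closedBall.subset Set.support_indicator_subset⟩

lemma tendsto_eLpNorm_indicator_closedBall_sub (hU : MemLp U 2) :
    Tendsto (fun n : ℕ => eLpNorm ((Metric.closedBall 0 (n : ℝ)).indicator U - U) 2)
      atTop (𝓝 0) := by
  have hmem (n : ℕ) : MemLp ((Metric.closedBall 0 (n : ℝ)).indicator U - U) 2 :=
    (isBandLimited_indicator_closedBall hU n).1.sub hU
  have hlim : Tendsto (fun n : ℕ => energy 1 ((Metric.closedBall 0 (n : ℝ)).indicator U - U))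
      atTop (𝓝 0) := by
    simp only [energy_one]
    rw [← integral_zero (Rd d) ℝ]
    refine tendsto_integral_of_dominated_convergence (fun ξ => ‖U ξ‖ ^ 2)
      (fun n => (integrable_norm_sq (hmem n)).1) (integrable_norm_sq hU)
      (fun n => .of_forall fun ξ => ?_) (.of_forall fun ξ => ?_)
    · by_cases hξ : ξ ∈ Metric.closedBall 0 (n : ℝ) <;> simp [hξ]
    · refine tendsto_const_nhds.congr' ?_
      filter_upwards [eventually_ge_atTop ⌈‖ξ‖⌉₊] with n hn
      simp [Nat.ceil_le.1 hn]
  have hsqrt := ENNReal.tendsto_ofReal ((Real.continuous_sqrt.tendsto 0).comp hlim)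
  rw [Real.sqrt_zero, ENNReal.ofReal_zero] at hsqrt
  refine hsqrt.congr fun n => ?_
  rw [Function.comp_apply, energy_one_eq_toReal_sq (hmem n), Real.sqrt_sq ENNReal.toReal_nonneg,
    ENNReal.ofReal_toReal (hmem n).eLpNorm_ne_top]

lemma IsFT.exists_seq_fourierInv_tendsto_ae (hU : MemLp U 2) (hu : MemLp u 2) (h : IsFT U u) :
    ∃ n : ℕ → ℕ, ∀ᵐ x, Tendsto
      (fun k => 𝓕⁻ ((Metric.closedBall 0 (n k : ℝ)).indicator U) x) atTop (𝓝 (u x)) := by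
  have hBL (n : ℕ) := isBandLimited_indicator_closedBall hU n
  have hdiff (n : ℕ) : eLpNorm (𝓕⁻ ((Metric.closedBall 0 (n : ℝ)).indicator U) - u) 2 =
      eLpNorm ((Metric.closedBall 0 (n : ℝ)).indicator U - U) 2 :=
    have hmem := (hBL n).memLp_two_fourierInv.1
    ((isFT_fourierInv (hBL n).integrable).sub (hBL n).1 hU hmem hu h).memLp_and_eLpNorm_eq
      ((hBL n).1.sub hU) ((hmem.sub hu).locallyIntegrable one_le_two) |>.2
  have hmeas := tendstoInMeasure_of_tendsto_eLpNorm two_ne_zero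
    (fun n => (hBL n).memLp_two_fourierInv.1.1) hu.1
    ((tendsto_eLpNorm_indicator_closedBall_sub hU).congr fun n => (hdiff n).symm)
  obtain ⟨n, -, hn⟩ := hmeas.exists_seq_tendsto_ae
  exact ⟨n, hn⟩

lemma ExtensionBound.LpN_sq_le (hp : 2 ≤ p) (hω : 0 ≤ ω) (h : ExtensionBound p A ω N)
    (hU : MemLp U 2) (hUA : Function.support U ⊆ A)
    (hInt : Integrable fun ξ => ‖U ξ‖ ^ 2 * ω ξ) (hu : MemLp u 2) (hFT : IsFT U u) :
    LpN p u ^ 2 ≤ N * energy ω U := by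
  have hNE : 0 ≤ N * energy ω U := mul_nonneg h.nonneg (energy_nonneg hω U)
  have htrunc (n : ℕ) : eLpNorm (𝓕⁻ ((Metric.closedBall 0 (n : ℝ)).indicator U))
      (ENNReal.ofReal p) ≤ ENNReal.ofReal √(N * energy ω U) := by
    have hBL := isBandLimited_indicator_closedBall hU n
    rw [← ENNReal.ofReal_toReal (hBL.memLp_fourierInv hp).eLpNorm_ne_top]
    refine ENNReal.ofReal_le_ofReal (Real.le_sqrt_of_sq_le ((h.sq_le _ hBL ?_).trans ?_))
    · rw [Set.support_indicator]
      exact Set.inter_subset_right.trans hUA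
    · exact mul_le_mul_of_nonneg_left (energy_indicator_le hω hInt measurableSet_closedBall)
        h.nonneg
  obtain ⟨n, hn⟩ := hFT.exists_seq_fourierInv_tendsto_ae hU hu
  have hfatou := Lp.eLpNorm_lim_le_liminf_eLpNorm (p := ENNReal.ofReal p)
    (fun k => (isBandLimited_indicator_closedBall hU (n k)).memLp_two_fourierInv.1.1) u hn
  have hle : eLpNorm u (ENNReal.ofReal p) ≤ ENNReal.ofReal √(N * energy ω U) :=
    hfatou.trans ((liminf_le_liminf (.of_forall fun k => htrunc (n k))).trans (by simp))
  calc LpN p u ^ 2 ≤ √(N * energy ω U) ^ 2 :=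
        pow_le_pow_left₀ (LpN_nonneg p u)
          (ENNReal.toReal_le_of_le_ofReal (Real.sqrt_nonneg _) hle) 2
    _ = N * energy ω U := Real.sq_sqrt hNE

end Density

/-! ### Bernstein's inequality -/

section

variable {d : ℕ} {p : ℝ} {A : Set (Rd d)} {U : Rd d → ℂ}

lemma rpow_eq_sq_rpow_half {x : ℝ} (hx : 0 ≤ x) (p : ℝ) : x ^ p = (x ^ 2) ^ (p / 2) := by
  rw [← rpow_two, ← rpow_mul hx, mul_div_cancel₀ p two_ne_zero]

lemma sq_integral_norm_le_measureReal_mul_energy (hU : MemLp U 2) (hA : MeasurableSet A)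
    (hA' : volume A ≠ ∞) (hUA : Function.support U ⊆ A) :
    (∫ ξ, ‖U ξ‖) ^ 2 ≤ volume.real A * energy 1 U := by
  have hone : MemLp (A.indicator fun _ => (1 : ℂ)) (ENNReal.ofReal 2) :=
    memLp_indicator_const _ hA 1 (Or.inr hA')
  have hoelder := integral_mul_norm_le_Lp_mul_Lq HolderConjugate.two_two (by simpa using hU) hone
  have hmul : ∀ ξ, ‖U ξ‖ * ‖A.indicator (fun _ => (1 : ℂ)) ξ‖ = ‖U ξ‖ := fun ξ => by
    by_cases hξ : ξ ∈ A
    · simp [hξ]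
    · simp [Function.notMem_support.1 fun h => hξ (hUA h)]
  have hsq : ∀ ξ, ‖A.indicator (fun _ => (1 : ℂ)) ξ‖ ^ (2 : ℝ) = A.indicator 1 ξ := fun ξ => by
    by_cases hξ : ξ ∈ A <;> simp [hξ]
  simp only [hmul, hsq, rpow_two, ← energy_one, integral_indicator_one hA, ← sqrt_eq_rpow]
    at hoelder
  calc (∫ ξ, ‖U ξ‖) ^ 2 ≤ (√(energy 1 U) * √(volume.real A)) ^ 2 :=
        pow_le_pow_left₀ (integral_nonneg fun _ => norm_nonneg _) hoelder 2
    _ = volume.real A * energy 1 U := by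
        rw [mul_pow, sq_sqrt (energy_nonneg zero_le_one U), sq_sqrt measureReal_nonneg, mul_comm]

lemma IsBandLimited.LpN_fourierInv_rpow_le (hU : IsBandLimited U) (hp : 2 ≤ p) :
    LpN p (𝓕⁻ U) ^ p ≤ (∫ ξ, ‖U ξ‖) ^ (p - 2) * energy 1 U := by
  rw [LpN_rpow (by linarith) (hU.memLp_fourierInv hp), ← hU.energy_one_fourierInv, energy_one,
    ← integral_const_mul]
  exact integral_mono_of_nonneg (.of_forall fun x => by positivity)
    ((integrable_norm_sq hU.memLp_two_fourierInv.1).const_mul _)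
    (.of_forall fun x => norm_fourierInv_rpow_le hp U x)

theorem extensionBound_measureReal (hp : 2 ≤ p) (hA : MeasurableSet A) (hA' : volume A ≠ ∞) :
    ExtensionBound p A 1 (volume.real A ^ (1 - 2 / p)) where
  nonneg := by positivity
  sq_le U hU hUA := by
    have : 0 < p := by linarith
    have hE : 0 ≤ energy 1 U := energy_nonneg zero_le_one U
    have hLp : LpN p (𝓕⁻ U) ^ p ≤ (volume.real A ^ (1 - 2 / p) * energy 1 U) ^ (p / 2) :=
      calc LpN p (𝓕⁻ U) ^ p ≤ (∫ ξ, ‖U ξ‖) ^ (p - 2) * energy 1 U := hU.LpN_fourierInv_rpow_le hp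
        _ = ((∫ ξ, ‖U ξ‖) ^ 2) ^ ((p - 2) / 2) * energy 1 U := by
            rw [← rpow_eq_sq_rpow_half (integral_nonneg fun _ => norm_nonneg _)]
        _ ≤ (volume.real A * energy 1 U) ^ ((p - 2) / 2) * energy 1 U := by
            gcongr
            exact sq_integral_norm_le_measureReal_mul_energy hU.memLp hA hA' hUA
        _ = volume.real A ^ ((1 - 2 / p) * (p / 2)) * energy 1 U ^ ((p - 2) / 2 + 1) := by
            rw [mul_rpow measureReal_nonneg hE, mul_assoc,
              rpow_add_of_nonneg hE (by linarith) zero_le_one, rpow_one]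
            congr 2
            field_simp
        _ = (volume.real A ^ (1 - 2 / p) * energy 1 U) ^ (p / 2) := by
            rw [mul_rpow (by positivity) hE, ← rpow_mul measureReal_nonneg]
            ring_nf
    rw [rpow_eq_sq_rpow_half (LpN_nonneg p _)] at hLp
    exact (rpow_le_rpow_iff (by positivity) (by positivity) (by positivity)).1 hLp

end

/-! ### Superposition of modulated translates -/

lemma half_le_norm_sum_fourierChar {K : ℕ} {τ : ℝ} (hτ : K * |τ| ≤ 1 / 6) :
    (K : ℝ) / 2 ≤ ‖∑ k ∈ Finset.range K, (𝐞 (k * τ) : ℂ)‖ := by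
  have hre : ∀ k ∈ Finset.range K, 1 / 2 ≤ (𝐞 (k * τ) : ℂ).re := fun k hk => by
    have hkτ : |2 * π * (k * τ)| ≤ π / 3 := by
      have hk' : (k : ℝ) ≤ K := by exact_mod_cast (Finset.mem_range.1 hk).le
      rw [abs_mul (2 * π), abs_mul (k : ℝ), abs_of_pos two_pi_pos, Nat.abs_cast]
      nlinarith [pi_pos, mul_le_mul_of_nonneg_right hk' (abs_nonneg τ)]
    rw [fourierChar_apply, Complex.exp_ofReal_mul_I_re, ← cos_abs, ← cos_pi_div_three]
    exact cos_le_cos_of_nonneg_of_le_pi (abs_nonneg _) (by linarith [pi_pos]) hkτ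
  calc (K : ℝ) / 2 = ∑ k ∈ Finset.range K, (1 / 2 : ℝ) := by simp [div_eq_mul_inv]
    _ ≤ ∑ k ∈ Finset.range K, (𝐞 (k * τ) : ℂ).re := Finset.sum_le_sum hre
    _ = (∑ k ∈ Finset.range K, (𝐞 (k * τ) : ℂ)).re := (Complex.re_sum _ _).symm
    _ ≤ _ := Complex.re_le_norm _

lemma exists_abs_sub_div_sub_intCast_le {M : ℕ} (hM : 0 < M) (θ : ℝ) :
    ∃ m ∈ Finset.range M, ∃ n : ℤ, |θ - m / M - n| ≤ 1 / (2 * M) := by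
  have hM' : (0 : ℝ) < M := by exact_mod_cast hM
  set j : ℤ := round (M * θ)
  have hmod : 0 ≤ j % M := Int.emod_nonneg _ (by positivity)
  have hlt : j % M < M := Int.emod_lt_of_pos j (by exact_mod_cast hM)
  refine ⟨(j % M).toNat, Finset.mem_range.2 (by omega), j / M, ?_⟩
  have hj : (j : ℝ) = (j % M).toNat + M * (j / M : ℤ) := by
    exact_mod_cast (Int.emod_add_mul_ediv j M).symm.trans (by rw [Int.toNat_of_nonneg hmod])
  have hθ : θ - (j % M).toNat / M - (j / M : ℤ) = (M * θ - j) / M := by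
    rw [hj]
    field_simp
    ring
  rw [hθ, abs_div, abs_of_pos hM', div_le_div_iff₀ hM' (by positivity)]
  nlinarith [abs_sub_round (M * θ : ℝ)]

lemma exists_half_le_norm_sum_fourierChar {K : ℕ} (hK : 0 < K) (θ : ℝ) :
    ∃ m ∈ Finset.range (3 * K), (K : ℝ) / 2 ≤
      ‖∑ k ∈ Finset.range K, (𝐞 (k * (θ - m / (3 * K : ℕ))) : ℂ)‖ := by
  obtain ⟨m, hm, n, hn⟩ := exists_abs_sub_div_sub_intCast_le (show 0 < 3 * K by omega) θ
  refine ⟨m, hm, ?_⟩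
  have hperiod : ∀ k : ℕ, 𝐞 (k * (θ - m / (3 * K : ℕ))) = 𝐞 (k * (θ - m / (3 * K : ℕ) - n)) :=
    fun k => by
    have hInt : 𝐞 ((k * n : ℤ) : ℝ) = 1 := by
      ext
      rw [fourierChar_apply, Circle.coe_one, Complex.exp_eq_one_iff]
      exact ⟨k * n, by push_cast; ring⟩
    rw [mul_sub _ _ (n : ℝ), AddChar.map_sub_eq_div, ← Int.cast_natCast k, ← Int.cast_mul, hInt,
      div_one]
  simp only [hperiod]
  refine half_le_norm_sum_fourierChar ((mul_le_mul_of_nonneg_left hn (by positivity)).trans ?_)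
  have : (0 : ℝ) < K := by exact_mod_cast hK
  push_cast
  exact (by field_simp; norm_num : (K : ℝ) * (1 / (2 * (3 * K))) = 1 / 6).le

/-- The superposition `∑_{k < K} e^{-2πikτ} U(· - ka)` of modulated translates. In physical space
it multiplies `𝓕⁻ U` by a Dirichlet kernel, which has size `K` where `⟪a, x⟫` is close to `τ`
modulo `1`. -/
def translateSum {d : ℕ} (U : Rd d → ℂ) (a : Rd d) (K : ℕ) (τ : ℝ) : Rd d → ℂ :=
  ∑ k ∈ Finset.range K, (𝐞 (-(k * τ)) : ℂ) • fun ξ => U (ξ - (k : ℝ) • a)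

section TranslateSum

variable {d K : ℕ} {p τ M N : ℝ} {U : Rd d → ℂ} {a : Rd d} {A B : Set (Rd d)}

lemma isBandLimited_translateSum (hU : IsBandLimited U) (a : Rd d) (K : ℕ) (τ : ℝ) :
    IsBandLimited (translateSum U a K τ) :=
  .sum _ fun _ _ => (hU.comp_sub_right _).const_smul _

lemma translateSum_apply (ξ : Rd d) : translateSum U a K τ ξ =
    ∑ k ∈ Finset.range K, (𝐞 (-(k * τ)) : ℂ) * U (ξ - (k : ℝ) • a) := by
  simp [translateSum]

lemma fourierInv_translateSum (hU : IsBandLimited U) (x : Rd d) :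
    𝓕⁻ (translateSum U a K τ) x =
      (∑ k ∈ Finset.range K, (𝐞 (k * (⟪a, x⟫ - τ)) : ℂ)) * 𝓕⁻ U x := by
  rw [translateSum, fourierInv_sum_of_integrable _ fun _ _ =>
    ((hU.comp_sub_right _).const_smul _).integrable, Finset.sum_apply, Finset.sum_mul]
  refine Finset.sum_congr rfl fun k _ => ?_
  rw [fourierInv_const_smul, Pi.smul_apply, fourierInv_comp_sub_right, Circle.smul_def,
    smul_eq_mul, smul_eq_mul, ← mul_assoc, ← Circle.coe_mul, ← AddChar.map_add_eq_mul,
    inner_smul_left]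
  congr 3
  simp only [conj_trivial]
  ring

lemma support_translateSum_subset (hUA : Function.support U ⊆ A)
    (hAB : ∀ k < K, ∀ ξ ∈ A, ξ + (k : ℝ) • a ∈ B) :
    Function.support (translateSum U a K τ) ⊆ B := fun ξ hξ => by
  rw [Function.mem_support, translateSum_apply] at hξ
  obtain ⟨k, hk, hne⟩ := Finset.exists_ne_zero_of_sum_ne_zero hξ
  simpa using hAB k (Finset.mem_range.1 hk) _ (hUA (right_ne_zero_of_mul hne))

lemma norm_translateSum_sq_le (hUA : Function.support U ⊆ A)
    (hcard : ∀ (ξ : Rd d) (J : Finset ℕ), (∀ k ∈ J, ξ - (k : ℝ) • a ∈ A) → (J.card : ℝ) ≤ M)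
    (ξ : Rd d) : ‖translateSum U a K τ ξ‖ ^ 2 ≤
      M * ∑ k ∈ Finset.range K, ‖U (ξ - (k : ℝ) • a)‖ ^ 2 := by
  set J := (Finset.range K).filter fun k : ℕ => U (ξ - (k : ℝ) • a) ≠ 0 with hJ
  have hJM : (J.card : ℝ) ≤ M := hcard ξ J fun k hk => hUA (Finset.mem_filter.1 hk).2
  have hsum : ‖translateSum U a K τ ξ‖ ≤ ∑ k ∈ J, ‖U (ξ - (k : ℝ) • a)‖ := by
    rw [translateSum_apply, ← Finset.sum_filter_of_ne (fun k _ hne => right_ne_zero_of_mul hne)]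
    exact (norm_sum_le _ _).trans_eq (by simp only [norm_mul, Circle.norm_coe, one_mul, hJ])
  calc ‖translateSum U a K τ ξ‖ ^ 2 ≤ (∑ k ∈ J, ‖U (ξ - (k : ℝ) • a)‖) ^ 2 := by gcongr
    _ ≤ J.card * ∑ k ∈ J, ‖U (ξ - (k : ℝ) • a)‖ ^ 2 := sq_sum_le_card_mul_sum_sq
    _ ≤ M * ∑ k ∈ Finset.range K, ‖U (ξ - (k : ℝ) • a)‖ ^ 2 := by
        gcongr
        · exact (Nat.cast_nonneg _).trans hJM
        · exact Finset.filter_subset _ _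

lemma energy_translateSum_le (hU : IsBandLimited U) (hUA : Function.support U ⊆ A)
    (hcard : ∀ (ξ : Rd d) (J : Finset ℕ), (∀ k ∈ J, ξ - (k : ℝ) • a ∈ A) → (J.card : ℝ) ≤ M) :
    energy 1 (translateSum U a K τ) ≤ M * K * energy 1 U := by
  have hInt : ∀ k ∈ Finset.range K, Integrable fun ξ => ‖U (ξ - (k : ℝ) • a)‖ ^ 2 :=
    fun _ _ => integrable_norm_sq (hU.comp_sub_right _).memLp
  calc energy 1 (translateSum U a K τ)
      ≤ ∫ ξ, M * ∑ k ∈ Finset.range K, ‖U (ξ - (k : ℝ) • a)‖ ^ 2 := by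
        rw [energy_one]
        exact integral_mono (integrable_norm_sq (isBandLimited_translateSum hU a K τ).memLp)
          ((integrable_finsetSum _ hInt).const_mul M) (norm_translateSum_sq_le hUA hcard)
    _ = M * ∑ k ∈ Finset.range K, ∫ ξ, ‖U (ξ - (k : ℝ) • a)‖ ^ 2 := by
        rw [integral_const_mul, integral_finsetSum _ hInt]
    _ = M * K * energy 1 U := by
        simp only [energy_one, integral_sub_right_eq_self fun ξ => ‖U ξ‖ ^ 2, Finset.sum_const,
          Finset.card_range, nsmul_eq_mul, mul_assoc]

lemma IsBandLimited.integrable_norm_fourierInv_rpow (hU : IsBandLimited U) (hp : 2 ≤ p) :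
    Integrable fun x => ‖𝓕⁻ U x‖ ^ p := by
  have h := (hU.memLp_fourierInv hp).integrable_norm_rpow (by simp; linarith) (by simp)
  rwa [ENNReal.toReal_ofReal (by linarith)] at h

lemma rpow_mul_LpN_rpow_le_sum_translateSum (hp : 2 ≤ p) (hU : IsBandLimited U) (hK : 0 < K) :
    (K / 2 : ℝ) ^ p * LpN p (𝓕⁻ U) ^ p ≤
      ∑ m ∈ Finset.range (3 * K), LpN p (𝓕⁻ (translateSum U a K (m / (3 * K : ℕ)))) ^ p := by
  have hp₀ : 0 < p := by linarith
  have hF (m : ℕ) := isBandLimited_translateSum hU a K (m / (3 * K : ℕ))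
  have hInt : ∀ m ∈ Finset.range (3 * K),
      Integrable fun x => ‖𝓕⁻ (translateSum U a K (m / (3 * K : ℕ))) x‖ ^ p :=
    fun m _ => (hF m).integrable_norm_fourierInv_rpow hp
  have hpointwise : ∀ x, (K / 2 : ℝ) ^ p * ‖𝓕⁻ U x‖ ^ p ≤
      ∑ m ∈ Finset.range (3 * K), ‖𝓕⁻ (translateSum U a K (m / (3 * K : ℕ))) x‖ ^ p := fun x => by
    obtain ⟨m, hm, hle⟩ := exists_half_le_norm_sum_fourierChar hK ⟪a, x⟫
    refine le_trans ?_ (Finset.single_le_sum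
      (f := fun m : ℕ => ‖𝓕⁻ (translateSum U a K (m / (3 * K : ℕ))) x‖ ^ p)
      (fun _ _ => by positivity) hm)
    rw [fourierInv_translateSum hU, norm_mul, mul_rpow (norm_nonneg _) (norm_nonneg _)]
    gcongr
  calc (K / 2 : ℝ) ^ p * LpN p (𝓕⁻ U) ^ p = ∫ x, (K / 2 : ℝ) ^ p * ‖𝓕⁻ U x‖ ^ p := by
        rw [integral_const_mul, LpN_rpow hp₀ (hU.memLp_fourierInv hp)]
    _ ≤ ∫ x, ∑ m ∈ Finset.range (3 * K),
          ‖𝓕⁻ (translateSum U a K (m / (3 * K : ℕ))) x‖ ^ p :=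
        integral_mono ((hU.integrable_norm_fourierInv_rpow hp).const_mul _)
          (integrable_finsetSum _ hInt) hpointwise
    _ = _ := by
        rw [integral_finsetSum _ hInt]
        exact Finset.sum_congr rfl fun m _ => (LpN_rpow hp₀ ((hF m).memLp_fourierInv hp)).symm

lemma sq_le_of_rpow_mul_rpow_le {K x y : ℝ} (hp : 2 ≤ p) (hK : 0 < K) (hx : 0 ≤ x) (hy : 0 ≤ y)
    (h : (K / 2) ^ p * x ^ p ≤ 3 * K * (K * y) ^ (p / 2)) : x ^ 2 ≤ 12 * K ^ (2 / p - 1) * y := by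
  have hp₀ : 0 < p := by linarith
  have hpow : ∀ z : ℝ, 0 ≤ z → (z ^ p) ^ (2 / p) = z ^ 2 := fun z hz => by
    rw [← rpow_mul hz, mul_div_cancel₀ _ hp₀.ne', rpow_two]
  have hroot := rpow_le_rpow (by positivity) h (show 0 ≤ 2 / p by positivity)
  rw [mul_rpow (by positivity) (by positivity), hpow _ (by positivity), hpow _ hx,
    mul_rpow (by positivity) (by positivity), ← rpow_mul (by positivity),
    show p / 2 * (2 / p) = 1 by field_simp, rpow_one, mul_rpow (by norm_num) hK.le] at hroot
  have hthree : (3 : ℝ) ^ (2 / p) ≤ 3 :=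
    rpow_le_self_of_one_le (by norm_num) ((div_le_one hp₀).2 hp)
  have hle : (K / 2) ^ 2 * x ^ 2 ≤ 3 * K ^ (2 / p) * (K * y) := hroot.trans (by gcongr)
  rw [rpow_sub_one hK.ne']
  refine le_of_mul_le_mul_left (a := (K / 2) ^ 2) (hle.trans_eq ?_) (by positivity)
  field_simp
  ring

/-- The `K` translates of `U` have total energy `≲ K` but, for a suitable modulation at each `x`,
add up coherently to `K |𝓕⁻ U x|`. -/
theorem ExtensionBound.of_translates (hp : 2 ≤ p) (h : ExtensionBound p B 1 N) (hK : 0 < K)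
    (hM : 0 ≤ M) (hAB : ∀ k < K, ∀ ξ ∈ A, ξ + (k : ℝ) • a ∈ B)
    (hcard : ∀ (ξ : Rd d) (J : Finset ℕ), (∀ k ∈ J, ξ - (k : ℝ) • a ∈ A) → (J.card : ℝ) ≤ M) :
    ExtensionBound p A 1 (12 * (K : ℝ) ^ (2 / p - 1) * (N * M)) where
  nonneg := by have := h.nonneg; positivity
  sq_le U hU hUA := by
    have hN := h.nonneg
    have hE : 0 ≤ energy 1 U := energy_nonneg zero_le_one U
    have hF : ∀ τ, LpN p (𝓕⁻ (translateSum U a K τ)) ^ p ≤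
        (K * (N * M * energy 1 U)) ^ (p / 2) := fun τ => by
      rw [rpow_eq_sq_rpow_half (LpN_nonneg p _)]
      gcongr
      calc LpN p (𝓕⁻ (translateSum U a K τ)) ^ 2 ≤ N * energy 1 (translateSum U a K τ) :=
            h.sq_le _ (isBandLimited_translateSum hU a K τ) (support_translateSum_subset hUA hAB)
        _ ≤ N * (M * K * energy 1 U) := by gcongr; exact energy_translateSum_le hU hUA hcard
        _ = K * (N * M * energy 1 U) := by ring
    rw [mul_assoc _ (N * M)]
    refine sq_le_of_rpow_mul_rpow_le hp (by exact_mod_cast hK) (LpN_nonneg p _) (by positivity) ?_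
    calc (K / 2 : ℝ) ^ p * LpN p (𝓕⁻ U) ^ p
        ≤ ∑ m ∈ Finset.range (3 * K), LpN p (𝓕⁻ (translateSum U a K (m / (3 * K : ℕ)))) ^ p :=
          rpow_mul_LpN_rpow_le_sum_translateSum hp hU hK
      _ ≤ (Finset.range (3 * K)).card • (K * (N * M * energy 1 U)) ^ (p / 2) :=
          Finset.sum_le_card_nsmul _ _ _ fun _ _ => hF _
      _ = 3 * K * (K * (N * M * energy 1 U)) ^ (p / 2) := by simp

end TranslateSum

/-! ### Shells around the unit sphere -/

/-- The closed shell of half-width `h` around the unit sphere. -/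
def shell (d : ℕ) (h : ℝ) : Set (Rd d) := {ξ | |‖ξ‖ - 1| ≤ h}

/-- The part of the shell of half-width `t` where the direction `e` is transversal to the sphere,
quantitatively in terms of `c`. -/
def shellCap {d : ℕ} (t c : ℝ) (e : Rd d) : Set (Rd d) := shell d t ∩ {ξ | c ≤ ⟪ξ, e⟫}

section Shell

variable {d K : ℕ} {p t h c N : ℝ} {e : Rd d}

lemma mem_shell_iff {ξ : Rd d} : ξ ∈ shell d h ↔ 1 - h ≤ ‖ξ‖ ∧ ‖ξ‖ ≤ 1 + h := by
  rw [shell, Set.mem_ofPred_eq, abs_sub_comm, abs_sub_le_iff]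
  constructor <;> rintro ⟨h₁, h₂⟩ <;> constructor <;> linarith

lemma measurableSet_shell (h : ℝ) : MeasurableSet (shell d h) :=
  (isClosed_le (by fun_prop) continuous_const).measurableSet

lemma measurableSet_shellCap (t c : ℝ) (e : Rd d) : MeasurableSet (shellCap t c e) :=
  (measurableSet_shell t).inter (isClosed_le continuous_const (by fun_prop)).measurableSet

lemma shift_mul_le_of_mem_shellCap (he : ‖e‖ = 1) (ht : t ≤ 1) {r : ℝ} (hr : 0 ≤ r) {η : Rd d}
    (hη : η ∈ shellCap t c e) (hη' : η + r • e ∈ shell d t) : r * c ≤ 2 * t := by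
  have hsq : ‖η + r • e‖ ^ 2 = ‖η‖ ^ 2 + 2 * (r * ⟪η, e⟫) + r ^ 2 := by
    rw [norm_add_sq_real, inner_smul_right, norm_smul, he, mul_one, Real.norm_eq_abs, sq_abs]
  have hupper : ‖η + r • e‖ ^ 2 ≤ (1 + t) ^ 2 :=
    pow_le_pow_left₀ (norm_nonneg _) (mem_shell_iff.1 hη').2 2
  have hlower : (1 - t) ^ 2 ≤ ‖η‖ ^ 2 :=
    pow_le_pow_left₀ (by linarith) (mem_shell_iff.1 hη.1).1 2
  nlinarith [mul_le_mul_of_nonneg_left hη.2 hr, sq_nonneg r]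

lemma card_le_add_one_of_forall_sub_le {J : Finset ℕ} {L : ℝ} (hL : 0 ≤ L)
    (hJ : ∀ k ∈ J, ∀ l ∈ J, k ≤ l → (l : ℝ) - k ≤ L) : (J.card : ℝ) ≤ L + 1 := by
  rcases J.eq_empty_or_nonempty with rfl | hne
  · simp only [Finset.card_empty, Nat.cast_zero]
    linarith
  have hsub : J ⊆ Finset.Icc (J.min' hne) (J.max' hne) := fun k hk =>
    Finset.mem_Icc.2 ⟨J.min'_le k hk, J.le_max' k hk⟩
  have hle : J.min' hne ≤ J.max' hne := J.min'_le_max' hne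
  have hcard := Finset.card_le_card hsub
  rw [Nat.card_Icc] at hcard
  have hcard' : (J.card : ℝ) ≤ J.max' hne + 1 - J.min' hne := by
    rw [← Nat.cast_add_one, ← Nat.cast_sub (by omega)]
    exact_mod_cast hcard
  linarith [hJ _ (J.min'_mem hne) _ (J.max'_mem hne) hle]

lemma card_translates_shellCap_le (he : ‖e‖ = 1) (ht : 0 < t) (ht' : t ≤ 1) (hc : 0 < c)
    (ξ : Rd d) (J : Finset ℕ) (hJ : ∀ k ∈ J, ξ - (k : ℝ) • t • e ∈ shellCap t c e) :
    (J.card : ℝ) ≤ 2 / c + 1 := by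
  refine card_le_add_one_of_forall_sub_le (by positivity) fun k hk l hl hkl => ?_
  have hlk : (0 : ℝ) ≤ l - k := sub_nonneg.2 (by exact_mod_cast hkl)
  have hshift : ξ - (l : ℝ) • t • e + (((l : ℝ) - k) * t) • e = ξ - (k : ℝ) • t • e := by
    module
  have h := shift_mul_le_of_mem_shellCap he ht' (r := (l - k) * t) (by positivity) (hJ l hl)
    (hshift ▸ (hJ k hk).1)
  rw [le_div_iff₀ hc]
  nlinarith

lemma add_smul_mem_shell_of_mem_shell (he : ‖e‖ = 1) (ht : 0 < t) (hKt : K * t ≤ h) {k : ℕ}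
    (hk : k < K) {ξ : Rd d} (hξ : ξ ∈ shell d t) : ξ + (k : ℝ) • t • e ∈ shell d h := by
  have hk' : (k : ℝ) + 1 ≤ K := by exact_mod_cast hk
  have hmove : |‖ξ + (k : ℝ) • t • e‖ - ‖ξ‖| ≤ k * t := by
    refine (abs_norm_sub_norm_le _ _).trans_eq ?_
    rw [add_sub_cancel_left, norm_smul, norm_smul, he, Real.norm_natCast, Real.norm_of_nonneg ht.le,
      mul_one]
  calc |‖ξ + (k : ℝ) • t • e‖ - 1| ≤ |‖ξ + (k : ℝ) • t • e‖ - ‖ξ‖| + |‖ξ‖ - 1| :=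
        abs_sub_le _ _ _
    _ ≤ k * t + t := add_le_add hmove hξ
    _ ≤ h := by nlinarith

lemma extensionBound_shellCap (hp : 2 ≤ p) (hB : ExtensionBound p (shell d h) 1 N) (hK : 0 < K)
    (ht : 0 < t) (ht' : t ≤ 1) (hKt : K * t ≤ h) (hc : 0 < c) (he : ‖e‖ = 1) :
    ExtensionBound p (shellCap t c e) 1 (12 * (K : ℝ) ^ (2 / p - 1) * (N * (2 / c + 1))) :=
  hB.of_translates hp hK (by positivity)
    (fun _ hk _ hξ => add_smul_mem_shell_of_mem_shell he ht hKt hk hξ.1)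
    (card_translates_shellCap_le he ht ht' hc)

lemma exists_le_abs_apply_of_half_le_norm {ξ : Rd d} (hξ : 1 / 2 ≤ ‖ξ‖) :
    ∃ i, 1 / (2 * ((d : ℝ) + 1)) ≤ |ξ i| := by
  by_contra! hsmall
  have hsum : ‖ξ‖ ^ 2 ≤ d * (1 / (2 * ((d : ℝ) + 1))) ^ 2 := by
    rw [EuclideanSpace.real_norm_sq_eq]
    refine (Finset.sum_le_card_nsmul _ _ ((1 / (2 * ((d : ℝ) + 1))) ^ 2) fun i _ => ?_).trans_eq
      (by simp)
    exact sq_le_sq' (by linarith [(abs_lt.1 (hsmall i)).1]) (abs_lt.1 (hsmall i)).2.le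
  have hlt : d * (1 / (2 * ((d : ℝ) + 1))) ^ 2 < (1 / 2) ^ 2 := by
    rw [div_pow, one_pow, mul_one_div, div_lt_iff₀ (by positivity)]
    nlinarith [(Nat.cast_nonneg d : (0 : ℝ) ≤ d)]
  nlinarith

lemma shell_subset_biUnion_shellCap (ht : t ≤ 1 / 2) :
    shell d t ⊆ ⋃ i ∈ (Finset.univ : Finset (Fin d × ℤˣ)),
      shellCap t (1 / (2 * ((d : ℝ) + 1))) (EuclideanSpace.single i.1 ((i.2 : ℤ) : ℝ)) := by
  intro ξ hξ
  obtain ⟨i, hi⟩ := exists_le_abs_apply_of_half_le_norm (d := d) (ξ := ξ)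
    (by linarith [(mem_shell_iff.1 hξ).1])
  simp only [Finset.mem_univ, Set.iUnion_true, Set.mem_iUnion, Prod.exists]
  rcases le_total 0 (ξ i) with h₀ | h₀
  · exact ⟨i, 1, hξ, by simpa [EuclideanSpace.inner_single_right, abs_of_nonneg h₀] using hi⟩
  · exact ⟨i, -1, hξ, by simpa [EuclideanSpace.inner_single_right, abs_of_nonpos h₀] using hi⟩

theorem ExtensionBound.shell_of_shell (hp : 2 ≤ p) (hB : ExtensionBound p (shell d h) 1 N)
    (hK : 0 < K) (ht : 0 < t) (ht' : t ≤ 1 / 2) (hKt : K * t ≤ h) :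
    ExtensionBound p (shell d t) 1 (24 * d * (4 * d + 5) * (N * (K : ℝ) ^ (2 / p - 1))) := by
  have hcaps := ExtensionBound.biUnion hp isWeight_one (Finset.univ : Finset (Fin d × ℤˣ))
    (fun i _ => measurableSet_shellCap t (1 / (2 * ((d : ℝ) + 1)))
      (EuclideanSpace.single i.1 ((i.2 : ℤ) : ℝ)))
    (fun i _ => extensionBound_shellCap hp hB hK ht (by linarith) hKt (by positivity)
      (by rcases Int.units_eq_one_or i.2 with h | h <;> simp [h]))
  refine (hcaps.mono_set (shell_subset_biUnion_shellCap ht')).mono_const zero_le_one (le_of_eq ?_)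
  simp only [Finset.sum_const, Finset.card_univ, Fintype.card_prod, Fintype.card_fin,
    Fintype.card_units_int, nsmul_eq_mul]
  push_cast
  field_simp
  ring

end Shell

/-! ### Away from the unit sphere -/

/-- The weight `|‖ξ‖ - 1| ^ γ` degenerating on the unit sphere. -/
def sphereWeight (d : ℕ) (γ : ℝ) : Rd d → ℝ := fun ξ => |‖ξ‖ - 1| ^ γ

/-- The `k`-th slab in the partition of the radii into intervals of length `b` based at `1`. -/
def radialSlab (d : ℕ) (b : ℝ) (k : ℤ) : Set (Rd d) := {ξ | ‖ξ‖ - 1 ∈ Set.Icc (k * b) ((k + 1) * b)}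

section Slabs

open scoped Pointwise

variable {d : ℕ} {p b h γ L N : ℝ} {k : ℤ}

lemma isWeight_sphereWeight (hγ : 0 ≤ γ) : IsWeight (sphereWeight d γ) :=
  isWeight_of_continuous (by unfold sphereWeight; fun_prop (disch := exact hγ))
    fun ξ => by unfold sphereWeight; positivity

lemma measurableSet_radialSlab (b : ℝ) (k : ℤ) : MeasurableSet (radialSlab d b k) :=
  (isClosed_Icc.preimage (continuous_norm.sub continuous_const)).measurableSet

lemma radialSlab_subset_smul_shell (hkb : |k * b| ≤ 3 / 4) (hbh : 4 * b ≤ h) :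
    radialSlab d b k ⊆ (1 + k * b) • shell d h := by
  have hr : 1 / 4 ≤ 1 + k * b := by linarith [(abs_le.1 hkb).1]
  intro ξ ⟨hlower, hupper⟩
  rw [Set.mem_smul_set_iff_inv_smul_mem₀ (by linarith), mem_shell_iff, norm_smul,
    Real.norm_of_nonneg (by positivity), inv_mul_eq_div, le_div_iff₀ (by linarith),
    div_le_iff₀ (by linarith)]
  have : 0 ≤ b := by linarith
  constructor <;> nlinarith

lemma extensionBound_radialSlab (hp : 2 ≤ p) (hB : ExtensionBound p (shell d h) 1 N)
    (hkb : |k * b| ≤ 3 / 4) (hbh : 4 * b ≤ h) :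
    ExtensionBound p (radialSlab d b k) 1 (2 ^ d * N) := by
  obtain ⟨hr, hr'⟩ := abs_le.1 hkb
  have hscaled := (hB.smul_set (ω := 1) (r := 1 + k * b) (by linarith) (by linarith)).mono_set
    (radialSlab_subset_smul_shell hkb hbh)
  refine hscaled.mono_const zero_le_one ?_
  have hexp : 0 ≤ 1 - 2 / p := sub_nonneg.2 ((div_le_one (by linarith)).2 hp)
  have hr₀ : 0 ≤ 1 + k * b := by linarith
  rw [mul_comm]
  refine mul_le_mul_of_nonneg_right ?_ hB.nonneg
  calc ((1 + k * b) ^ d) ^ (1 - 2 / p) ≤ (2 ^ d) ^ (1 - 2 / p) := by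
        gcongr
        linarith
    _ ≤ 2 ^ d := rpow_le_self_of_one_le (one_le_pow₀ (by norm_num)) (sub_le_self 1 (by positivity))

lemma le_abs_norm_sub_one_of_mem_radialSlab (hb : 0 ≤ b) (hk : 2 ≤ |(k : ℝ)|) {ξ : Rd d}
    (hξ : ξ ∈ radialSlab d b k) : |(k : ℝ)| * b / 2 ≤ |‖ξ‖ - 1| := by
  obtain ⟨hlower, hupper⟩ := hξ
  rcases le_total 0 (k : ℝ) with h₀ | h₀
  · rw [abs_of_nonneg h₀] at hk ⊢
    nlinarith [le_abs_self (‖ξ‖ - 1)]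
  · rw [abs_of_nonpos h₀] at hk ⊢
    nlinarith [neg_le_abs (‖ξ‖ - 1)]

lemma extensionBound_radialSlab_sphereWeight (hp : 2 ≤ p)
    (hB : ExtensionBound p (shell d h) 1 N) (hγ : 0 ≤ γ) (hb : 0 < b) (hbh : 4 * b ≤ h)
    (hk : 2 ≤ |(k : ℝ)|) (hkb : |k * b| ≤ 3 / 4) :
    ExtensionBound p (radialSlab d b k) (sphereWeight d γ)
      (2 ^ d * N * (2 / (|(k : ℝ)| * b)) ^ γ) := by
  refine (extensionBound_radialSlab hp hB hkb hbh).mono_weight zero_le_one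
    (isWeight_sphereWeight hγ) (by positivity) fun ξ hξ => ?_
  have hkb' : 0 < |(k : ℝ)| * b := by positivity
  rw [sphereWeight, ← mul_rpow (by positivity) (abs_nonneg _)]
  refine one_le_rpow ?_ hγ
  rw [div_mul_eq_mul_div, le_div_iff₀ hkb']
  linarith [le_abs_norm_sub_one_of_mem_radialSlab hb.le hk hξ]

/-- The slabs of thickness `b` at distance at least `L * b` from the unit sphere which meet the
shell of half-width `1 / 2`, for `b ≤ 1 / 4`. -/
def outerSlabs (b L : ℝ) : Finset ℤ :=
  {k ∈ Finset.Icc (-⌊3 / (4 * b)⌋) ⌊3 / (4 * b)⌋ | L ≤ |(k : ℝ)|}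

lemma mem_outerSlabs_iff (hb : 0 < b) :
    k ∈ outerSlabs b L ↔ |k * b| ≤ 3 / 4 ∧ L ≤ |(k : ℝ)| := by
  rw [outerSlabs, Finset.mem_filter, Finset.mem_Icc, ← abs_le, Int.le_floor, Int.cast_abs, abs_mul,
    abs_of_pos hb, ← div_div, le_div_iff₀ hb]

lemma outer_subset_biUnion_radialSlab (hb : 0 < b) (hb' : b ≤ 1 / 4) (hL : 1 ≤ L) :
    {ξ : Rd d | L * (4 * b) < |‖ξ‖ - 1| ∧ |‖ξ‖ - 1| ≤ 1 / 2} ⊆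
      ⋃ k ∈ outerSlabs b L, radialSlab d b k := by
  intro ξ ⟨hfar, hnear⟩
  set k : ℤ := ⌊(‖ξ‖ - 1) / b⌋
  have hlower : k * b ≤ ‖ξ‖ - 1 := (le_div_iff₀ hb).1 (Int.floor_le _)
  have hupper : ‖ξ‖ - 1 ≤ (k + 1) * b := ((div_lt_iff₀ hb).1 (Int.lt_floor_add_one _)).le
  refine Set.mem_biUnion ((mem_outerSlabs_iff hb).2 ⟨?_, ?_⟩) ⟨hlower, hupper⟩
  · obtain ⟨h₁, h₂⟩ := abs_le.1 hnear
    exact abs_le.2 ⟨by linarith, by linarith⟩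
  · have hsize : |‖ξ‖ - 1| ≤ (|(k : ℝ)| + 1) * b :=
      abs_le.2 ⟨by nlinarith [neg_abs_le (k : ℝ)], by nlinarith [le_abs_self (k : ℝ)]⟩
    have : 4 * L < |(k : ℝ)| + 1 := lt_of_mul_lt_mul_right (by linarith) hb.le
    linarith

lemma two_div_mul_rpow_le (hγ : 1 < γ) (hh : 0 < h) (hL : 0 < L) {x : ℝ} (hx : L ≤ x) :
    (2 / (x * (h / 4))) ^ γ ≤
      8 ^ γ * h ^ (-γ) * L ^ (-((γ - 1) / 2)) * x ^ (-((γ + 1) / 2)) := by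
  have hx₀ : 0 < x := hL.trans_le hx
  have hmono : x ^ (-((γ - 1) / 2)) ≤ L ^ (-((γ - 1) / 2)) :=
    rpow_le_rpow_of_nonpos hL hx (by linarith)
  calc (2 / (x * (h / 4))) ^ γ = (8 * h⁻¹ * x⁻¹) ^ γ := by
        congr 1
        field_simp
        norm_num
    _ = 8 ^ γ * h ^ (-γ) * x ^ (-γ) := by
        rw [mul_rpow (by positivity) (by positivity), mul_rpow (by positivity) (by positivity),
          inv_rpow hh.le, inv_rpow hx₀.le, rpow_neg hh.le, rpow_neg hx₀.le]
    _ = 8 ^ γ * h ^ (-γ) * x ^ (-((γ - 1) / 2)) * x ^ (-((γ + 1) / 2)) := by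
        rw [mul_assoc _ (x ^ _) (x ^ _), ← rpow_add hx₀]
        ring_nf
    _ ≤ _ := by gcongr

/-- Half of the excess `γ - 1` pays for the summation over the slabs, the other half is the gain
in `L`. -/
theorem exists_extensionBound_outer (d : ℕ) (hp : 2 ≤ p) (hγ : 1 < γ) :
    ∃ D, ∀ h N L : ℝ, 0 < h → h ≤ 1 → 2 ≤ L → ExtensionBound p (shell d h) 1 N →
      ExtensionBound p {ξ : Rd d | L * h < |‖ξ‖ - 1| ∧ |‖ξ‖ - 1| ≤ 1 / 2} (sphereWeight d γ)
        (D * (N * h ^ (-γ)) * L ^ (-((γ - 1) / 2))) := by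
  have hsummable : Summable fun k : ℤ => |(k : ℝ)| ^ (-((γ + 1) / 2)) :=
    summable_abs_int_rpow (by linarith)
  refine ⟨2 ^ d * 8 ^ γ * ∑' k : ℤ, |(k : ℝ)| ^ (-((γ + 1) / 2)),
    fun h N L hh hh' hL hB => ?_⟩
  have hN := hB.nonneg
  have hω := isWeight_sphereWeight (d := d) (show 0 ≤ γ by linarith)
  have hslabs := ExtensionBound.biUnion hp hω (outerSlabs (h / 4) L)
    (fun k _ => measurableSet_radialSlab (d := d) (h / 4) k) fun k hk => by
      obtain ⟨hkb, hkL⟩ := (mem_outerSlabs_iff (by positivity)).1 hk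
      exact extensionBound_radialSlab_sphereWeight hp hB (by linarith) (by positivity) (by linarith)
        (hL.trans hkL) hkb
  have hcover := outer_subset_biUnion_radialSlab (d := d) (b := h / 4) (L := L) (by positivity)
    (by linarith) (by linarith)
  rw [mul_div_cancel₀ h four_ne_zero] at hcover
  refine (hslabs.mono_set hcover).mono_const hω.nonneg ?_
  calc ∑ k ∈ outerSlabs (h / 4) L, 2 ^ d * N * (2 / (|(k : ℝ)| * (h / 4))) ^ γ
      ≤ ∑ k ∈ outerSlabs (h / 4) L, 2 ^ d * N *
          (8 ^ γ * h ^ (-γ) * L ^ (-((γ - 1) / 2)) * |(k : ℝ)| ^ (-((γ + 1) / 2))) := by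
        gcongr with k hk
        exact two_div_mul_rpow_le hγ hh (by linarith)
          ((mem_outerSlabs_iff (by positivity)).1 hk).2
    _ = 2 ^ d * N * (8 ^ γ * h ^ (-γ) * L ^ (-((γ - 1) / 2))) *
          ∑ k ∈ outerSlabs (h / 4) L, |(k : ℝ)| ^ (-((γ + 1) / 2)) := by
        simp only [Finset.mul_sum, mul_assoc]
    _ ≤ 2 ^ d * N * (8 ^ γ * h ^ (-γ) * L ^ (-((γ - 1) / 2))) *
          ∑' k : ℤ, |(k : ℝ)| ^ (-((γ + 1) / 2)) := by
        gcongr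
        exact hsummable.sum_le_tsum _ fun k _ => by positivity
    _ = _ := by ring

end Slabs

/-! ### The Sobolev inequality -/

/-- The inhomogeneous Sobolev weight of order `s`. -/
def sobolevWeight (d : ℕ) (s : ℝ) : Rd d → ℝ := fun ξ => 1 + ‖ξ‖ ^ (2 * s)

/-- The frequencies with `2 ^ (j - 1) ≤ max 1 ‖ξ‖` and `‖ξ‖ ≤ 2 ^ j`. -/
def dyadicAnnulus (d j : ℕ) : Set (Rd d) := {ξ | ‖ξ‖ ≤ 2 ^ j ∧ 2 ^ j ≤ 2 * max 1 ‖ξ‖}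

section Sobolev

variable {d : ℕ} {p s N : ℝ}

lemma isWeight_sobolevWeight (d : ℕ) (hs : 0 < s) : IsWeight (sobolevWeight d s) :=
  isWeight_of_continuous (by unfold sobolevWeight; fun_prop (disch := positivity))
    fun ξ => by unfold sobolevWeight; positivity

lemma measurableSet_dyadicAnnulus (j : ℕ) : MeasurableSet (dyadicAnnulus d j) :=
  (measurableSet_le measurable_norm measurable_const).inter
    (measurableSet_le measurable_const ((measurable_const.max measurable_norm).const_mul 2))

lemma two_pow_rpow_le_sobolevWeight (hs : 0 < s) {j : ℕ} {ξ : Rd d} (hξ : ξ ∈ dyadicAnnulus d j) :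
    ((2 : ℝ) ^ j) ^ (2 * s) ≤ 2 ^ (2 * s) * sobolevWeight d s ξ := by
  have hmax : max 1 ‖ξ‖ ^ (2 * s) ≤ 1 + ‖ξ‖ ^ (2 * s) := by
    rcases max_choice 1 ‖ξ‖ with h | h <;> rw [h]
    · rw [one_rpow]
      exact le_add_of_nonneg_right (by positivity)
    · exact le_add_of_nonneg_left zero_le_one
  calc ((2 : ℝ) ^ j) ^ (2 * s) ≤ (2 * max 1 ‖ξ‖) ^ (2 * s) := by gcongr; exact hξ.2
    _ = 2 ^ (2 * s) * max 1 ‖ξ‖ ^ (2 * s) := mul_rpow (by norm_num) (by positivity)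
    _ ≤ 2 ^ (2 * s) * sobolevWeight d s ξ := by gcongr; exact hmax

lemma extensionBound_closedBall (d : ℕ) (hp : 2 ≤ p) {ρ : ℝ} (hρ : 0 ≤ ρ) :
    ExtensionBound p (Metric.closedBall (0 : Rd d) ρ) 1
      ((ρ ^ d * volume.real (Metric.closedBall (0 : Rd d) 1)) ^ (1 - 2 / p)) := by
  have h := extensionBound_measureReal hp
    (Metric.isClosed_closedBall (x := (0 : Rd d)) (ε := ρ)).measurableSet
    measure_closedBall_lt_top.ne
  rwa [measureReal_def, Measure.addHaar_closedBall' volume 0 hρ, ENNReal.toReal_mul,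
    ENNReal.toReal_ofReal (by positivity), finrank_euclideanSpace_fin] at h

lemma extensionBound_dyadicAnnulus (d : ℕ) (hp : 2 ≤ p) (hs : 0 < s) (j : ℕ) :
    ExtensionBound p (dyadicAnnulus d j) (sobolevWeight d s)
      (volume.real (Metric.closedBall (0 : Rd d) 1) ^ (1 - 2 / p) * 2 ^ (2 * s) *
        ((2 : ℝ) ^ (d * (1 - 2 / p) - 2 * s)) ^ j) := by
  have hball : dyadicAnnulus d j ⊆ Metric.closedBall 0 (2 ^ j) := fun ξ hξ => by simpa using hξ.1
  have hweight := ((extensionBound_closedBall d hp (by positivity)).mono_set hball).mono_weight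
    zero_le_one (isWeight_sobolevWeight d hs) (k := 2 ^ (2 * s) / ((2 : ℝ) ^ j) ^ (2 * s))
    (by positivity) fun ξ hξ => by
      rw [div_mul_eq_mul_div, Pi.one_apply, one_le_div (by positivity)]
      exact two_pow_rpow_le_sobolevWeight hs hξ
  refine hweight.mono_const (isWeight_sobolevWeight d hs).nonneg (le_of_eq ?_)
  have hpow : (((2 : ℝ) ^ j) ^ d) ^ (1 - 2 / p) / ((2 : ℝ) ^ j) ^ (2 * s) =
      ((2 : ℝ) ^ (d * (1 - 2 / p) - 2 * s)) ^ j := by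
    rw [← rpow_natCast _ d, ← rpow_mul (by positivity), ← rpow_sub (by positivity),
      ← rpow_natCast, ← rpow_natCast, ← rpow_mul zero_le_two, ← rpow_mul zero_le_two,
      mul_comm (j : ℝ)]
  rw [mul_rpow (by positivity) measureReal_nonneg, ← hpow]
  ring

lemma closedBall_subset_biUnion_dyadicAnnulus (d : ℕ) (ρ : ℝ) :
    ∃ n, Metric.closedBall (0 : Rd d) ρ ⊆ ⋃ j ∈ Finset.range n, dyadicAnnulus d j := by
  obtain ⟨n, hn⟩ := pow_unbounded_of_one_lt (2 * max 1 ρ) (one_lt_two (α := ℝ))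
  refine ⟨n, fun ξ hξ => ?_⟩
  rw [mem_closedBall_zero_iff] at hξ
  obtain ⟨j, hj, hj'⟩ := exists_nat_pow_near (le_max_left 1 ‖ξ‖) (one_lt_two (α := ℝ))
  have hupper : (2 : ℝ) ^ (j + 1) ≤ 2 * max 1 ‖ξ‖ := by
    rw [pow_succ']
    gcongr
  refine Set.mem_biUnion (x := j + 1) (Finset.mem_coe.2 (Finset.mem_range.2 ?_))
    ⟨(le_max_right _ _).trans hj'.le, hupper⟩
  refine (pow_lt_pow_iff_right₀ (one_lt_two (α := ℝ))).1 (hupper.trans_lt (lt_of_le_of_lt ?_ hn))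
  gcongr

lemma ExtensionBound.univ_of_forall_closedBall {ω : Rd d → ℝ}
    (h : ∀ ρ, ExtensionBound p (Metric.closedBall 0 ρ) ω N) : ExtensionBound p Set.univ ω N where
  nonneg := (h 0).nonneg
  sq_le U hU _ := by
    obtain ⟨ρ, hρ⟩ := hU.isBounded_support.subset_closedBall 0
    exact (h ρ).sq_le U hU hρ

lemma sobolev_exponent_lt (hs : 0 < s) (hp : 2 < p)
    (hps : s < (d : ℝ) / 2 → p < 2 * (d : ℝ) / ((d : ℝ) - 2 * s)) :
    d * (1 - 2 / p) < 2 * s := by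
  have hp0 : 0 < p := by linarith
  rw [one_sub_div hp0.ne', ← mul_div_assoc, div_lt_iff₀ hp0]
  rcases lt_or_ge s ((d : ℝ) / 2) with hsd | hsd
  · have hsub := hps hsd
    rw [lt_div_iff₀ (by linarith)] at hsub
    nlinarith
  · nlinarith

theorem exists_extensionBound_sobolevWeight (hp : 2 ≤ p) (hs : 0 < s)
    (hps : d * (1 - 2 / p) < 2 * s) :
    ∃ S, ExtensionBound p Set.univ (sobolevWeight d s) S := by
  have hratio : (2 : ℝ) ^ (d * (1 - 2 / p) - 2 * s) < 1 :=
    rpow_lt_one_of_one_lt_of_neg one_lt_two (by linarith)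
  have hsummable := (summable_geometric_of_lt_one (by positivity) hratio).mul_left
    (volume.real (Metric.closedBall (0 : Rd d) 1) ^ (1 - 2 / p) * 2 ^ (2 * s))
  refine ⟨∑' j : ℕ, volume.real (Metric.closedBall (0 : Rd d) 1) ^ (1 - 2 / p) * 2 ^ (2 * s) *
    ((2 : ℝ) ^ (d * (1 - 2 / p) - 2 * s)) ^ j, .univ_of_forall_closedBall fun ρ => ?_⟩
  obtain ⟨n, hn⟩ := closedBall_subset_biUnion_dyadicAnnulus d ρ
  have hω := isWeight_sobolevWeight d hs
  exact ((ExtensionBound.biUnion hp hω _ (fun j _ => measurableSet_dyadicAnnulus j)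
    fun j _ => extensionBound_dyadicAnnulus d hp hs j).mono_set hn).mono_const hω.nonneg
      (hsummable.sum_le_tsum _ fun j _ => by positivity)

end Sobolev

/-! ### Lower bounds for extension constants -/

section LowerBound

variable {d : ℕ} {p N : ℝ} {A : Set (Rd d)}

lemma half_le_cos_two_pi_mul {r : ℝ} (hr : |r| ≤ 1 / 10) : 1 / 2 ≤ cos (2 * π * r) := by
  have hle : |2 * π * r| ≤ 1 := by
    rw [abs_mul, abs_of_pos two_pi_pos]
    nlinarith [pi_pos, pi_lt_d2, abs_nonneg r]
  have hsq : (2 * π * r) ^ 2 ≤ 1 := (sq_le_one_iff_abs_le_one _).2 hle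
  linarith [one_sub_sq_div_two_le_cos (x := 2 * π * r)]

lemma half_measureReal_le_norm_fourierInv_indicator (hA : MeasurableSet A) (hA' : volume A ≠ ∞)
    {x : Rd d} (hx : ∀ ξ ∈ A, |⟪ξ, x⟫| ≤ 1 / 10) :
    volume.real A / 2 ≤ ‖𝓕⁻ (A.indicator fun _ => (1 : ℂ)) x‖ := by
  have hInt : IntegrableOn (fun ξ : Rd d => Complex.exp (↑(2 * π * ⟪ξ, x⟫) * Complex.I)) A :=
    IntegrableOn.of_bound hA'.lt_top (Continuous.aestronglyMeasurable (by fun_prop)) 1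
      (.of_forall fun ξ => (Complex.norm_exp_ofReal_mul_I _).le)
  have hcos : IntegrableOn (fun ξ : Rd d => cos (2 * π * ⟪ξ, x⟫)) A := by
    have h := hInt.re
    simp only [RCLike.re_to_complex, Complex.exp_ofReal_mul_I_re] at h
    exact h
  have hre : (𝓕⁻ (A.indicator fun _ => (1 : ℂ)) x).re = ∫ ξ in A, cos (2 * π * ⟪ξ, x⟫) := by
    have hsmul : ∀ ξ, Complex.exp (↑(2 * π * ⟪ξ, x⟫) * Complex.I) •
        A.indicator (fun _ => (1 : ℂ)) ξ =
          A.indicator (fun ξ => Complex.exp (↑(2 * π * ⟪ξ, x⟫) * Complex.I)) ξ := fun ξ => by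
      by_cases hξ : ξ ∈ A <;> simp [hξ]
    simp only [fourierInv_eq', hsmul, integral_indicator hA, ← RCLike.re_to_complex,
      ← integral_re hInt]
    simp only [RCLike.re_to_complex, Complex.exp_ofReal_mul_I_re]
  calc volume.real A / 2 = ∫ _ in A, (1 / 2 : ℝ) := by
        rw [setIntegral_const, smul_eq_mul, mul_one_div]
    _ ≤ ∫ ξ in A, cos (2 * π * ⟪ξ, x⟫) :=
        setIntegral_mono_on (integrableOn_const hA') hcos hA fun ξ hξ =>
          half_le_cos_two_pi_mul (hx ξ hξ)
    _ = (𝓕⁻ (A.indicator fun _ => (1 : ℂ)) x).re := hre.symm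
    _ ≤ _ := Complex.re_le_norm _

lemma measureReal_mul_rpow_le_LpN_rpow (hp : 0 < p) {f : Rd d → ℂ}
    (hf : MemLp f (ENNReal.ofReal p)) {B : Set (Rd d)} (hB : MeasurableSet B)
    (hB' : volume B ≠ ∞) {m : ℝ} (hm : 0 ≤ m) (hle : ∀ x ∈ B, m ≤ ‖f x‖) :
    volume.real B * m ^ p ≤ LpN p f ^ p := by
  have hInt : Integrable fun x => ‖f x‖ ^ p := by
    simpa only [ENNReal.toReal_ofReal hp.le] using
      hf.integrable_norm_rpow (by simpa using hp) ENNReal.ofReal_ne_top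
  calc volume.real B * m ^ p = ∫ _ in B, m ^ p := by rw [setIntegral_const, smul_eq_mul]
    _ ≤ ∫ x in B, ‖f x‖ ^ p :=
        setIntegral_mono_on (integrableOn_const hB') hInt.integrableOn hB fun x hx =>
          rpow_le_rpow hm (hle x hx) hp.le
    _ ≤ ∫ x, ‖f x‖ ^ p := setIntegral_le_integral hInt (.of_forall fun x => by positivity)
    _ = LpN p f ^ p := (LpN_rpow hp hf).symm

lemma measureReal_closedBall_pos (x : Rd d) {ρ : ℝ} (hρ : 0 < ρ) :
    0 < volume.real (Metric.closedBall x ρ) :=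
  ENNReal.toReal_pos (Metric.measure_closedBall_pos _ _ hρ).ne' measure_closedBall_lt_top.ne

lemma energy_one_indicator_one (hA : MeasurableSet A) :
    energy 1 (A.indicator fun _ => (1 : ℂ)) = volume.real A := by
  have hsq : ∀ ξ, ‖A.indicator (fun _ => (1 : ℂ)) ξ‖ ^ 2 = A.indicator 1 ξ := fun ξ => by
    by_cases hξ : ξ ∈ A <;> simp [hξ]
  simp only [energy_one, hsq, integral_indicator_one hA]

lemma exists_mul_measureReal_le_of_extensionBound (d : ℕ) (hp : 2 ≤ p) :
    ∃ κ, 0 < κ ∧ ∀ (A : Set (Rd d)) (N : ℝ), MeasurableSet A → A ⊆ Metric.closedBall 0 2 →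
      ExtensionBound p A 1 N → κ * volume.real A ≤ N := by
  have hp0 : 0 < p := by linarith
  set B : Set (Rd d) := Metric.closedBall 0 (1 / 20)
  have hb : 0 < volume.real B := measureReal_closedBall_pos 0 (by norm_num)
  refine ⟨volume.real B ^ (2 / p) / 4, by positivity, fun A N hA hA2 h => ?_⟩
  have hA' : volume A ≠ ∞ := measure_ne_top_of_subset hA2 measure_closedBall_lt_top.ne
  have hU : IsBandLimited (A.indicator fun _ => (1 : ℂ)) :=
    ⟨memLp_indicator_const 2 hA 1 (Or.inr hA'),
      Metric.isBounded_closedBall.subset (Set.support_indicator_subset.trans hA2)⟩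
  have hpoint : ∀ x ∈ B, volume.real A / 2 ≤ ‖𝓕⁻ (A.indicator fun _ => (1 : ℂ)) x‖ :=
    fun x hx => half_measureReal_le_norm_fourierInv_indicator hA hA' fun ξ hξ => by
      have hξ2 := mem_closedBall_zero_iff.1 (hA2 hξ)
      have hx2 := mem_closedBall_zero_iff.1 hx
      nlinarith [abs_real_inner_le_norm ξ x, norm_nonneg ξ, norm_nonneg x]
  have hlower : volume.real B ^ (2 / p) * (volume.real A / 2) ^ 2 ≤ N * volume.real A := by
    have hLp := measureReal_mul_rpow_le_LpN_rpow hp0 (hU.memLp_fourierInv hp)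
      measurableSet_closedBall measure_closedBall_lt_top.ne (by positivity) hpoint
    have hupper := h.sq_le _ hU Set.support_indicator_subset
    rw [energy_one_indicator_one hA] at hupper
    refine le_trans ?_ hupper
    have hpow := rpow_le_rpow (by positivity) hLp (z := 2 / p) (by positivity)
    rwa [mul_rpow (by positivity) (by positivity), ← rpow_mul (by positivity),
      ← rpow_mul (LpN_nonneg _ _), mul_div_cancel₀ _ hp0.ne', rpow_two, rpow_two] at hpow
  rcases (measureReal_nonneg (μ := volume) (s := A)).eq_or_lt with hzero | hpos
  · rw [← hzero, mul_zero]
    exact h.nonneg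
  · refine le_of_mul_le_mul_right ?_ hpos
    linarith

lemma mul_le_measureReal_shell (hd : 0 < d) {t : ℝ} (ht : 0 ≤ t) :
    volume.real (Metric.closedBall (0 : Rd d) 1) * t ≤ volume.real (shell d t) := by
  have hcover : Metric.closedBall (0 : Rd d) (1 + t) ⊆ shell d t ∪ Metric.closedBall 0 1 := by
    intro ξ hξ
    rw [mem_closedBall_zero_iff] at hξ
    rcases le_total ‖ξ‖ 1 with h | h
    · exact .inr (mem_closedBall_zero_iff.2 h)
    · exact .inl (mem_shell_iff.2 ⟨by linarith, hξ⟩)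
  have hfin : volume (shell d t) ≠ ∞ :=
    measure_ne_top_of_subset (fun ξ hξ => mem_closedBall_zero_iff.2 (mem_shell_iff.1 hξ).2)
      (measure_closedBall_lt_top (x := (0 : Rd d)) (r := 1 + t)).ne
  have hsum := (measureReal_mono hcover
    (measure_union_ne_top hfin measure_closedBall_lt_top.ne)).trans (measureReal_union_le _ _)
  rw [Measure.addHaar_real_closedBall' volume 0 (by linarith), finrank_euclideanSpace_fin] at hsum
  have hpow : 1 + t ≤ (1 + t) ^ d := le_self_pow₀ (by linarith) hd.ne'
  nlinarith [measureReal_nonneg (μ := volume) (s := Metric.closedBall (0 : Rd d) 1)]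

lemma exists_mul_le_of_extensionBound_shell (hd : 0 < d) (hp : 2 ≤ p) :
    ∃ κ, 0 < κ ∧ ∀ t N : ℝ, 0 ≤ t → t ≤ 1 → ExtensionBound p (shell d t) 1 N → κ * t ≤ N := by
  obtain ⟨κ, hκ, hle⟩ := exists_mul_measureReal_le_of_extensionBound d hp
  have hball : 0 < volume.real (Metric.closedBall (0 : Rd d) 1) :=
    measureReal_closedBall_pos 0 one_pos
  refine ⟨κ * volume.real (Metric.closedBall (0 : Rd d) 1), by positivity,
    fun t N ht ht1 h => le_trans ?_ (hle _ N (measurableSet_shell t) (fun ξ hξ => ?_) h)⟩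
  · rw [mul_assoc]
    exact mul_le_mul_of_nonneg_left (mul_le_measureReal_shell hd ht) hκ.le
  · rw [mem_closedBall_zero_iff]
    linarith [(mem_shell_iff.1 hξ).2]

end LowerBound

/-! ### Admissible symbols and the Rayleigh quotient -/

/-- The member `g` at parameter `ε` of an `(s, γ)`-admissible family with constants `c` and `C`,
together with the ranges of the parameters. -/
structure IsAdmissibleSymbol (s γ c C ε : ℝ) (g : ℝ → ℝ) : Prop where
  order_pos : 0 < s
  one_lt_exponent : 1 < γ
  const_pos : 0 < c
  param_pos : 0 < ε
  param_lt_one : ε < 1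
  measurable : Measurable g
  pos : ∀ r, 0 < g r
  far_bounds : ∀ r, 1 / 2 ≤ |r - 1| →
    c * (1 + |r| ^ (2 * s)) ≤ g r ∧ g r ≤ C * (1 + |r| ^ (2 * s))
  near_bounds : ∀ r, |r - 1| ≤ 1 / 2 →
    c * (ε + |r - 1| ^ γ) ≤ g r ∧ g r ≤ C * (ε + |r - 1| ^ γ)

lemma IsAdmissible.isAdmissibleSymbol {s γ c C : ℝ} {g : ℝ → ℝ → ℝ} (hg : IsAdmissible s γ c C g)
    (hs : 0 < s) (hγ : 1 < γ) (hc : 0 < c) {ε : ℝ} (hε : ε ∈ Set.Ioo (0 : ℝ) 1) :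
    IsAdmissibleSymbol s γ c C ε (g ε) :=
  ⟨hs, hγ, hc, hε.1, hε.2, hg.1 ε hε, hg.2.1 ε hε, hg.2.2.1 ε hε, hg.2.2.2 ε hε⟩

section HsFn

variable {d : ℕ} {s : ℝ}

/-- The element of `H^s` with a prescribed band-limited Fourier transform. -/
def IsBandLimited.toHsFn {U : Rd d → ℂ} (hU : IsBandLimited U) (s : ℝ) : HsFn d s where
  toFun := 𝓕⁻ U
  ft := U
  memL2 := hU.memLp_two_fourierInv.1
  ft_memL2 := hU.memLp
  isFT := isFT_fourierInv hU.integrable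
  memHs := hU.integrable_energy <| isWeight_of_continuous
    ((continuous_const.add (continuous_norm.pow 2)).rpow_const
      fun ξ => .inl (show (1 + ‖ξ‖ ^ 2 : ℝ) ≠ 0 by positivity))
    fun ξ => show (0 : ℝ) ≤ (1 + ‖ξ‖ ^ 2) ^ s by positivity

lemma HsFn.toFun_ae_eq_zero (u : HsFn d s) (hu : u.ft =ᵐ[volume] 0) :
    u.toFun =ᵐ[volume] fun _ => 0 := by
  have h := (IsFT.memLp_and_eLpNorm_eq u.ft_memL2 (u.memL2.locallyIntegrable one_le_two) u.isFT).2
  rwa [eLpNorm_congr_ae hu, eLpNorm_zero, eLpNorm_eq_zero_iff u.memL2.1 two_ne_zero] at h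

end HsFn

lemma LpN_pos {d : ℕ} {p : ℝ} (hp : 0 < p) {f : Rd d → ℂ} (hf : MemLp f (ENNReal.ofReal p))
    (hne : ¬ f =ᵐ[volume] fun _ => 0) : 0 < LpN p f :=
  ENNReal.toReal_pos
    (fun h => hne ((eLpNorm_eq_zero_iff hf.1 (by simpa using hp)).1 h)) hf.eLpNorm_ne_top

namespace IsAdmissibleSymbol

variable {d : ℕ} {s γ c C ε p : ℝ} {g : ℝ → ℝ}

lemma const_upper_pos (h : IsAdmissibleSymbol s γ c C ε g) : 0 < C := by
  have hle := (h.pos 1).trans_le (h.near_bounds 1 (by norm_num)).2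
  rw [sub_self, abs_zero, zero_rpow (by linarith [h.one_lt_exponent]), add_zero] at hle
  exact pos_of_mul_pos_left hle h.param_pos.le

lemma width_pos (h : IsAdmissibleSymbol s γ c C ε g) : 0 < ε ^ (1 / γ) :=
  rpow_pos_of_pos h.param_pos _

lemma width_rpow (h : IsAdmissibleSymbol s γ c C ε g) : (ε ^ (1 / γ)) ^ γ = ε := by
  rw [one_div, rpow_inv_rpow h.param_pos.le (by linarith [h.one_lt_exponent])]

lemma le_mul_rpow (h : IsAdmissibleSymbol s γ c C ε g) (ξ : Rd d) :
    g ‖ξ‖ ≤ 2 * C * (1 + ‖ξ‖ ^ 2) ^ s := by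
  have hC := h.const_upper_pos
  have hs := h.order_pos
  have hone : 1 ≤ (1 + ‖ξ‖ ^ 2) ^ s := one_le_rpow (by linarith [sq_nonneg ‖ξ‖]) hs.le
  rcases le_total (1 / 2) |‖ξ‖ - 1| with hfar | hnear
  · have hpow : ‖ξ‖ ^ (2 * s) ≤ (1 + ‖ξ‖ ^ 2) ^ s := by
      rw [rpow_mul (norm_nonneg _), rpow_two]
      gcongr
      linarith
    have hle := (h.far_bounds _ hfar).2
    rw [abs_norm] at hle
    nlinarith
  · have hpow : |‖ξ‖ - 1| ^ γ ≤ 1 :=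
      rpow_le_one (abs_nonneg _) (by linarith) (by linarith [h.one_lt_exponent])
    nlinarith [(h.near_bounds _ hnear).2, h.param_lt_one]

lemma isWeight (h : IsAdmissibleSymbol s γ c C ε g) : IsWeight fun ξ : Rd d => g ‖ξ‖ where
  measurable := h.measurable.comp measurable_norm
  nonneg ξ := (h.pos _).le
  bounded_on_balls ρ := by
    refine ⟨2 * C * (1 + ρ ^ 2) ^ s, fun ξ hξ => (h.le_mul_rpow ξ).trans ?_⟩
    have := h.const_upper_pos
    have := h.order_pos
    gcongr

lemma integrable (h : IsAdmissibleSymbol s γ c C ε g) (u : HsFn d s) :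
    Integrable fun ξ => ‖u.ft ξ‖ ^ 2 * g ‖ξ‖ := by
  refine (u.memHs.const_mul (2 * C)).mono'
    ((integrable_norm_sq u.ft_memL2).1.mul h.isWeight.measurable.aestronglyMeasurable)
    (.of_forall fun ξ => ?_)
  rw [norm_of_nonneg (mul_nonneg (by positivity) (h.pos _).le)]
  calc ‖u.ft ξ‖ ^ 2 * g ‖ξ‖ ≤ ‖u.ft ξ‖ ^ 2 * (2 * C * (1 + ‖ξ‖ ^ 2) ^ s) := by
        gcongr
        exact h.le_mul_rpow ξ
    _ = 2 * C * (‖u.ft ξ‖ ^ 2 * (1 + ‖ξ‖ ^ 2) ^ s) := by ring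

lemma qeps_nonneg (h : IsAdmissibleSymbol s γ c C ε g) (u : HsFn d s) : 0 ≤ qeps g u :=
  energy_nonneg h.isWeight.nonneg u.ft

lemma qeps_pos (h : IsAdmissibleSymbol s γ c C ε g) {u : HsFn d s}
    (hu : ¬ u.toFun =ᵐ[volume] fun _ => 0) : 0 < qeps g u := by
  refine (h.qeps_nonneg u).lt_of_ne fun hzero => hu (u.toFun_ae_eq_zero ?_)
  filter_upwards [(integral_eq_zero_iff_of_nonneg
    (fun ξ => mul_nonneg (by positivity) (h.pos _).le) (h.integrable u)).1 hzero.symm] with ξ hξ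
  simpa [(h.pos _).ne'] using hξ

lemma rayleigh_mul_le (h : IsAdmissibleSymbol s γ c C ε g) (hp : 0 < p) {u : HsFn d s}
    (hu : MemLp u.toFun (ENNReal.ofReal p)) :
    Rayleigh d s p g (fun _ => True) * LpN p u.toFun ^ 2 ≤ qeps g u := by
  by_cases hzero : u.toFun =ᵐ[volume] fun _ => 0
  · simpa [LpN_of_ae_eq_zero hzero] using h.qeps_nonneg u
  · have := LpN_pos hp hu hzero
    rw [← le_div_iff₀ (by positivity)]
    refine csInf_le ⟨0, ?_⟩ ⟨u, trivial, hzero, hu, rfl⟩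
    rintro _ ⟨v, -, -, -, rfl⟩
    exact div_nonneg (h.qeps_nonneg v) (sq_nonneg _)

lemma rayleigh_pos (h : IsAdmissibleSymbol s γ c C ε g) (hp : 0 < p) {u : HsFn d s}
    (hne : ¬ u.toFun =ᵐ[volume] fun _ => 0) (hu : MemLp u.toFun (ENNReal.ofReal p))
    (hmin : qeps g u / LpN p u.toFun ^ 2 = Rayleigh d s p g fun _ => True) :
    0 < Rayleigh d s p g fun _ => True := by
  have := LpN_pos hp hu hne
  have := h.qeps_pos hne
  rw [← hmin]
  positivity

lemma extensionBound_univ (h : IsAdmissibleSymbol s γ c C ε g) (hp : 2 ≤ p)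
    (hR : 0 < Rayleigh d s p g fun _ => True) :
    ExtensionBound p Set.univ (fun ξ : Rd d => g ‖ξ‖) (Rayleigh d s p g fun _ => True)⁻¹ where
  nonneg := by positivity
  sq_le U hU _ := by
    rw [le_inv_mul_iff₀ hR]
    exact h.rayleigh_mul_le (by linarith) (u := hU.toHsFn s) (hU.memLp_fourierInv hp)

lemma le_of_mem_shell (h : IsAdmissibleSymbol s γ c C ε g) (ht : ε ^ (1 / γ) ≤ 1 / 2) {ξ : Rd d}
    (hξ : ξ ∈ shell d (ε ^ (1 / γ))) : g ‖ξ‖ ≤ 2 * C * ε := by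
  have hpow : |‖ξ‖ - 1| ^ γ ≤ ε :=
    (rpow_le_rpow (abs_nonneg _) hξ (by linarith [h.one_lt_exponent])).trans_eq h.width_rpow
  nlinarith [(h.near_bounds _ (hξ.trans ht)).2, h.const_upper_pos]

lemma extensionBound_shell (h : IsAdmissibleSymbol s γ c C ε g) (hp : 2 ≤ p)
    (hR : 0 < Rayleigh d s p g fun _ => True) (ht : ε ^ (1 / γ) ≤ 1 / 2) :
    ExtensionBound p (shell d (ε ^ (1 / γ))) 1
      ((Rayleigh d s p g fun _ => True)⁻¹ * (2 * C * ε)) := by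
  have := h.const_upper_pos
  have := h.param_pos
  refine ((h.extensionBound_univ hp hR).mono_set (Set.subset_univ _)).mono_weight
    h.isWeight.nonneg isWeight_one (by positivity) fun ξ hξ => ?_
  rw [Pi.one_apply, mul_one]
  exact h.le_of_mem_shell ht hξ

end IsAdmissibleSymbol

lemma exists_rayleigh_le {d : ℕ} {p : ℝ} (hd : 0 < d) (hp : 2 ≤ p) (s γ c C : ℝ) :
    ∃ M, ∀ (ε : ℝ) (g : ℝ → ℝ), IsAdmissibleSymbol s γ c C ε g →
      (0 < Rayleigh d s p g fun _ => True) → ε ^ (1 / γ) ≤ 1 / 2 →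
        Rayleigh d s p g (fun _ => True) ≤ M * ε ^ (1 - 1 / γ) := by
  obtain ⟨κ, hκ, hle⟩ := exists_mul_le_of_extensionBound_shell hd hp
  refine ⟨2 * C / κ, fun ε g h hR ht => ?_⟩
  have hwidth := h.width_pos
  have hlower := hle _ _ hwidth.le (by linarith) (h.extensionBound_shell hp hR ht)
  rw [le_inv_mul_iff₀ hR, ← le_div_iff₀ (by positivity)] at hlower
  rw [rpow_sub h.param_pos, rpow_one]
  exact hlower.trans_eq (by field_simp)

/-! ### Leakage away from the critical annulus -/

section Leakage

variable {d : ℕ} {s γ c C ε p δ : ℝ} {g : ℝ → ℝ}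

/-- The bound for the relative energy cost of frequencies off `Aset d γ ε δ`: the three terms come
from the frequencies closer to the unit sphere than `Aset`, those at distance more than `1 / 2` from
the sphere, and those in between. -/
def leakage (p γ M₁ M₂ M₃ ε δ : ℝ) : ℝ :=
  M₁ * (⌊δ⁻¹⌋₊ : ℝ) ^ (2 / p - 1) + M₂ * ε ^ (1 - 1 / γ) + M₃ * δ⁻¹ ^ (-((γ - 1) / 2))

lemma tendsto_leakage (hp : 2 < p) (hγ : 1 < γ) (M₁ M₂ M₃ : ℝ) {δ : ℝ → ℝ}
    (hδ : Tendsto δ (𝓝[>] 0) (𝓝[>] 0)) :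
    Tendsto (fun ε => leakage p γ M₁ M₂ M₃ ε (δ ε)) (𝓝[>] 0) (𝓝 0) := by
  have hinv : Tendsto (fun ε => (δ ε)⁻¹) (𝓝[>] 0) atTop := tendsto_inv_nhdsGT_zero.comp hδ
  have hinner : Tendsto (fun ε => (⌊(δ ε)⁻¹⌋₊ : ℝ) ^ (2 / p - 1)) (𝓝[>] 0) (𝓝 0) := by
    have hexp : 0 < 1 - 2 / p := by
      rw [sub_pos, div_lt_one (by linarith)]
      exact hp
    simpa only [neg_sub, Function.comp_def] using (tendsto_rpow_neg_atTop hexp).comp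
      (tendsto_natCast_atTop_atTop.comp (tendsto_nat_floor_atTop.comp hinv))
  have houter : Tendsto (fun ε => (δ ε)⁻¹ ^ (-((γ - 1) / 2))) (𝓝[>] 0) (𝓝 0) :=
    (tendsto_rpow_neg_atTop (by linarith)).comp hinv
  have hfar : Tendsto (fun ε : ℝ => ε ^ (1 - 1 / γ)) (𝓝[>] 0) (𝓝 0) := by
    have hexp : 0 < 1 - 1 / γ := by
      rw [sub_pos, div_lt_one (by linarith)]
      exact hγ
    simpa only [zero_rpow hexp.ne'] using
      ((continuousAt_rpow_const 0 _ (.inr hexp.le)).tendsto).mono_left nhdsWithin_le_nhds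
  simpa only [leakage, mul_zero, add_zero] using
    ((hinner.const_mul M₁).add (hfar.const_mul M₂)).add (houter.const_mul M₃)

lemma measurableSet_Aset (γ ε δ : ℝ) : MeasurableSet (Aset d γ ε δ) :=
  ((isClosed_le (f := fun _ => δ * ε ^ (1 / γ)) continuous_const (by fun_prop)).inter
    (isClosed_le (g := fun _ => δ⁻¹ * ε ^ (1 / γ)) (by fun_prop) continuous_const)).measurableSet

lemma compl_Aset_subset (d : ℕ) (γ ε δ : ℝ) :
    (Aset d γ ε δ)ᶜ ⊆ shell d (δ * ε ^ (1 / γ)) ∪ (shell d (1 / 2))ᶜ ∪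
      {ξ | δ⁻¹ * ε ^ (1 / γ) < |‖ξ‖ - 1| ∧ |‖ξ‖ - 1| ≤ 1 / 2} := by
  intro ξ hξ
  rcases le_total |‖ξ‖ - 1| (δ * ε ^ (1 / γ)) with hin | hin
  · exact .inl (.inl hin)
  · have hout : δ⁻¹ * ε ^ (1 / γ) < |‖ξ‖ - 1| := not_le.1 fun h => hξ ⟨hin, h⟩
    by_cases hfar : ξ ∈ shell d (1 / 2)
    · exact .inr ⟨hout, hfar⟩
    · exact .inl (.inr hfar)

namespace IsAdmissibleSymbol

lemma extensionBound_inner (h : IsAdmissibleSymbol s γ c C ε g) (hp : 2 ≤ p)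
    (hR : 0 < Rayleigh d s p g fun _ => True) (ht : ε ^ (1 / γ) ≤ 1 / 2) (hδ : 0 < δ)
    (hδ' : δ ≤ 1 / 2) :
    ExtensionBound p (shell d (δ * ε ^ (1 / γ))) (fun ξ => g ‖ξ‖)
      ((Rayleigh d s p g fun _ => True)⁻¹ *
        (24 * d * (4 * d + 5) * (2 * C / c) * (⌊δ⁻¹⌋₊ : ℝ) ^ (2 / p - 1))) := by
  have hε := h.param_pos
  have hc := h.const_pos
  have := h.width_pos
  have hhalf : δ * ε ^ (1 / γ) ≤ 1 / 2 := by nlinarith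
  have hfloor : 0 < ⌊δ⁻¹⌋₊ := Nat.floor_pos.2 ((one_le_inv₀ hδ).2 (by linarith))
  have hfit : (⌊δ⁻¹⌋₊ : ℝ) * (δ * ε ^ (1 / γ)) ≤ ε ^ (1 / γ) :=
    calc (⌊δ⁻¹⌋₊ : ℝ) * (δ * ε ^ (1 / γ)) ≤ δ⁻¹ * (δ * ε ^ (1 / γ)) := by
          gcongr
          exact Nat.floor_le (by positivity)
      _ = ε ^ (1 / γ) := by field_simp
  refine (((h.extensionBound_shell hp hR ht).shell_of_shell hp hfloor (by positivity) hhalf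
    hfit).mono_weight zero_le_one h.isWeight (k := 1 / (c * ε)) (by positivity)
      fun ξ hξ => ?_).mono_const h.isWeight.nonneg (le_of_eq ?_)
  · rw [Pi.one_apply, div_mul_eq_mul_div, one_mul, one_le_div (by positivity)]
    have hpow : 0 ≤ |‖ξ‖ - 1| ^ γ := by positivity
    nlinarith [(h.near_bounds ‖ξ‖ (hξ.trans hhalf)).1]
  · field_simp

lemma extensionBound_far (h : IsAdmissibleSymbol s γ c C ε g) {S : ℝ}
    (hS : ExtensionBound p Set.univ (sobolevWeight d s) S) :
    ExtensionBound p (shell d (1 / 2))ᶜ (fun ξ => g ‖ξ‖) (S / c) := by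
  have hc := h.const_pos
  rw [div_eq_mul_inv S]
  refine (hS.mono_set (Set.subset_univ _)).mono_weight
    (isWeight_sobolevWeight d h.order_pos).nonneg h.isWeight (by positivity) fun ξ hξ => ?_
  have hle := (h.far_bounds ‖ξ‖ (not_le.1 (show ¬ |‖ξ‖ - 1| ≤ 1 / 2 from hξ)).le).1
  rwa [abs_norm, ← le_inv_mul_iff₀ hc] at hle

end IsAdmissibleSymbol

lemma exists_extensionBound_outer_symbol (d : ℕ) (hp : 2 ≤ p) (hγ : 1 < γ) (s c C : ℝ) :
    ∃ M, ∀ (ε δ : ℝ) (g : ℝ → ℝ), IsAdmissibleSymbol s γ c C ε g →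
      (0 < Rayleigh d s p g fun _ => True) → ε ^ (1 / γ) ≤ 1 / 2 → 0 < δ → δ ≤ 1 / 2 →
        ExtensionBound p {ξ : Rd d | δ⁻¹ * ε ^ (1 / γ) < |‖ξ‖ - 1| ∧ |‖ξ‖ - 1| ≤ 1 / 2}
          (fun ξ => g ‖ξ‖)
          ((Rayleigh d s p g fun _ => True)⁻¹ * (M * δ⁻¹ ^ (-((γ - 1) / 2)))) := by
  obtain ⟨D, hD⟩ := exists_extensionBound_outer d hp hγ
  refine ⟨D * (2 * C / c), fun ε δ g h hR ht hδ hδ' => ?_⟩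
  have hε := h.param_pos
  have hc := h.const_pos
  have hinv : 2 ≤ δ⁻¹ := (le_inv_comm₀ two_pos hδ).2 (by linarith)
  refine ((hD _ _ _ h.width_pos (by linarith) hinv (h.extensionBound_shell hp hR ht)).mono_weight
    (isWeight_sphereWeight (by linarith)).nonneg h.isWeight (k := c⁻¹) (by positivity)
      fun ξ hξ => ?_).mono_const h.isWeight.nonneg (le_of_eq ?_)
  · rw [le_inv_mul_iff₀ hc, sphereWeight]
    nlinarith [(h.near_bounds ‖ξ‖ hξ.2).1]
  · rw [rpow_neg h.width_pos.le, h.width_rpow]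
    field_simp

theorem exists_extensionBound_compl_Aset (hd : 0 < d) (hs : 0 < s) (hγ : 1 < γ) (hp : 2 ≤ p)
    (hps : d * (1 - 2 / p) < 2 * s) (c C : ℝ) :
    ∃ M₁ M₂ M₃, ∀ (ε δ : ℝ) (g : ℝ → ℝ), IsAdmissibleSymbol s γ c C ε g →
      (0 < Rayleigh d s p g fun _ => True) → ε ^ (1 / γ) ≤ 1 / 2 → 0 < δ → δ ≤ 1 / 2 →
        ExtensionBound p (Aset d γ ε δ)ᶜ (fun ξ => g ‖ξ‖)
          ((Rayleigh d s p g fun _ => True)⁻¹ * leakage p γ M₁ M₂ M₃ ε δ) := by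
  obtain ⟨S, hS⟩ := exists_extensionBound_sobolevWeight hp hs hps
  obtain ⟨M₃, hM₃⟩ := exists_extensionBound_outer_symbol d hp hγ s c C
  obtain ⟨M, hM⟩ := exists_rayleigh_le hd hp s γ c C
  refine ⟨24 * d * (4 * d + 5) * (2 * C / c), M * (S / c), M₃, fun ε δ g h hR ht hδ hδ' => ?_⟩
  have hfar := (h.extensionBound_far hS).mono_const h.isWeight.nonneg
    (N₂ := (Rayleigh d s p g fun _ => True)⁻¹ * (M * (S / c) * ε ^ (1 - 1 / γ))) <| by
      rw [le_inv_mul_iff₀ hR, mul_right_comm]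
      exact mul_le_mul_of_nonneg_right (hM ε g h hR ht) (h.extensionBound_far hS).nonneg
  have hunion := ((h.extensionBound_inner hp hR ht hδ hδ').union hp h.isWeight
    (measurableSet_shell _) hfar).union hp h.isWeight
      ((measurableSet_shell _).union (measurableSet_shell _).compl) (hM₃ ε δ g h hR ht hδ hδ')
  rw [← mul_add, ← mul_add] at hunion
  exact hunion.mono_set (compl_Aset_subset d γ ε δ)

end Leakage

/-! ### Concentration of minimizers -/

lemma ratio_le_of_near_minimal {R a b n qv qw η : ℝ} (hR : 0 < R) (ha : 0 ≤ a) (hb : 0 ≤ b)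
    (hn : 0 < n) (hη : 0 ≤ η) (hη' : η ≤ 1 / 2) (hv : R * a ^ 2 ≤ qv) (hw : R * b ^ 2 ≤ η * qw)
    (hmin : qv + qw = R * n ^ 2) (hnab : n ≤ a + b) :
    0 < a ∧ b / a ≤ 4 * η ∧ qw / qv ≤ 8 * η + 16 * η ^ 2 := by
  have hqw : qw ≤ R * (2 * a * b + b ^ 2) := by
    nlinarith [pow_le_pow_left₀ hn.le hnab 2]
  have hsq : b ^ 2 ≤ η * (2 * a * b + b ^ 2) := by
    refine le_of_mul_le_mul_left ?_ hR
    nlinarith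
  have hba : b ≤ 4 * η * a := by
    rcases hb.eq_or_lt with rfl | hb
    · positivity
    · refine le_of_mul_le_mul_right ?_ hb
      nlinarith
  have ha : 0 < a := by
    rcases ha.eq_or_lt with rfl | ha
    · linarith
    · exact ha
  have hqv : 0 < qv := lt_of_lt_of_le (by positivity) hv
  have hcross : 2 * a * b + b ^ 2 ≤ (8 * η + 16 * η ^ 2) * a ^ 2 := by
    nlinarith [pow_le_pow_left₀ hb hba 2]
  refine ⟨ha, (div_le_iff₀ ha).2 hba, (div_le_iff₀ hqv).2 ?_⟩
  calc qw ≤ R * ((8 * η + 16 * η ^ 2) * a ^ 2) := hqw.trans (by gcongr)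
    _ = (8 * η + 16 * η ^ 2) * (R * a ^ 2) := by ring
    _ ≤ (8 * η + 16 * η ^ 2) * qv := by gcongr

section Concentration

variable {d : ℕ} {s γ c C ε p η : ℝ} {g : ℝ → ℝ} {u v w : HsFn d s} {A : Set (Rd d)}

lemma qeps_eq_energy (hv : v.ft =ᵐ[volume] A.indicator u.ft) :
    qeps g v = energy (fun ξ => g ‖ξ‖) (A.indicator u.ft) :=
  integral_congr_ae <| hv.mono fun ξ hξ => by simp only [hξ]

namespace IsAdmissibleSymbol

lemma qeps_add_qeps_compl (h : IsAdmissibleSymbol s γ c C ε g) (hA : MeasurableSet A)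
    (hv : v.ft =ᵐ[volume] A.indicator u.ft) (hw : w.ft =ᵐ[volume] Aᶜ.indicator u.ft) :
    qeps g v + qeps g w = qeps g u := by
  rw [qeps_eq_energy hv, qeps_eq_energy hw]
  exact energy_indicator_add_compl (h.integrable u) hA

lemma LpN_sq_le_qeps (h : IsAdmissibleSymbol s γ c C ε g) (hp : 2 ≤ p) (hA : MeasurableSet A)
    {N : ℝ} (hN : ExtensionBound p A (fun ξ => g ‖ξ‖) N)
    (hv : v.ft =ᵐ[volume] A.indicator u.ft) : LpN p v.toFun ^ 2 ≤ N * qeps g v := by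
  have hInt : Integrable fun ξ => ‖A.indicator u.ft ξ‖ ^ 2 * g ‖ξ‖ :=
    (h.integrable v).congr <| hv.mono fun ξ hξ => by simp only [hξ]
  rw [qeps_eq_energy hv]
  exact hN.LpN_sq_le hp h.isWeight.nonneg (u.ft_memL2.indicator hA)
    Set.support_indicator_subset hInt v.memL2
    (v.isFT.congr_left hv)

lemma concentration_of_extensionBound_compl (h : IsAdmissibleSymbol s γ c C ε g) (hp : 2 ≤ p)
    (hA : MeasurableSet A) (hη : η ≤ 1 / 2)
    (hN : ExtensionBound p Aᶜ (fun ξ => g ‖ξ‖) ((Rayleigh d s p g fun _ => True)⁻¹ * η))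
    (hne : ¬ u.toFun =ᵐ[volume] fun _ => 0) (hu : MemLp u.toFun (ENNReal.ofReal p))
    (hmin : qeps g u / LpN p u.toFun ^ 2 = Rayleigh d s p g fun _ => True)
    (huvw : u.toFun =ᵐ[volume] fun x => v.toFun x + w.toFun x)
    (hvA : v.ft =ᵐ[volume] A.indicator u.ft) (hwA : w.ft =ᵐ[volume] Aᶜ.indicator u.ft)
    (hv : MemLp v.toFun (ENNReal.ofReal p)) (hw : MemLp w.toFun (ENNReal.ofReal p)) :
    0 < LpN p v.toFun ∧ LpN p w.toFun / LpN p v.toFun ≤ 4 * η ∧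
      qeps g w / qeps g v ≤ 8 * η + 16 * η ^ 2 := by
  have hp0 : 0 < p := by linarith
  have hR := h.rayleigh_pos hp0 hne hu hmin
  have hnorm := LpN_pos hp0 hu hne
  have hη0 : 0 ≤ η := nonneg_of_mul_nonneg_right hN.nonneg (inv_pos.2 hR)
  have hleak : Rayleigh d s p g (fun _ => True) * LpN p w.toFun ^ 2 ≤ η * qeps g w := by
    rw [← le_inv_mul_iff₀ hR, ← mul_assoc]
    exact h.LpN_sq_le_qeps hp hA.compl hN hwA
  have htriangle : LpN p u.toFun ≤ LpN p v.toFun + LpN p w.toFun :=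
    (LpN_congr huvw).trans_le (LpN_add_le (by linarith) hv hw)
  refine ratio_le_of_near_minimal hR (LpN_nonneg p _) (LpN_nonneg p _) hnorm hη0 hη
    (h.rayleigh_mul_le hp0 hv) hleak ?_ htriangle
  rw [h.qeps_add_qeps_compl hA hvA hwA, ← hmin]
  field_simp

end IsAdmissibleSymbol

end Concentration

lemma eventually_rpow_le_half {a : ℝ} (ha : 0 < a) : ∀ᶠ ε : ℝ in 𝓝[>] 0, ε ^ a ≤ 1 / 2 := by
  have hlim := (continuousAt_rpow_const 0 a (.inr ha.le)).tendsto
  rw [zero_rpow ha.ne'] at hlim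
  exact (hlim.mono_left nhdsWithin_le_nhds).eventually_le_const one_half_pos

theorem stmt6_general (d : ℕ) (hd : 0 < d) (s γ p c C : ℝ) (hs : 0 < s) (hγ : 1 < γ)
    (hp : 2 < p) (hps : s < (d : ℝ) / 2 → p < 2 * (d : ℝ) / ((d : ℝ) - 2 * s)) (hc : 0 < c)
    (g : ℝ → ℝ → ℝ) (hg : IsAdmissible s γ c C g)
    (δ : ℝ → ℝ) (hδpos : ∀ ε : ℝ, 0 < ε → 0 < δ ε) (hδ0 : Tendsto δ (𝓝[>] 0) (𝓝 0))
    (u v w : ℝ → HsFn d s)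
    (hmin : ∀ ε ∈ Set.Ioo (0 : ℝ) 1,
      ¬ (u ε).toFun =ᵐ[volume] (fun _ => (0 : ℂ)) ∧
      MemLp (u ε).toFun (ENNReal.ofReal p) volume ∧
      qeps (g ε) (u ε) / LpN p (u ε).toFun ^ 2 = Rayleigh d s p (g ε) (fun _ => True))
    (hsplit : ∀ ε ∈ Set.Ioo (0 : ℝ) 1,
      (u ε).toFun =ᵐ[volume] (fun x => (v ε).toFun x + (w ε).toFun x) ∧
      (v ε).ft =ᵐ[volume] (Aset d γ ε (δ ε)).indicator (u ε).ft ∧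
      (w ε).ft =ᵐ[volume] ((Aset d γ ε (δ ε))ᶜ).indicator (u ε).ft ∧
      MemLp (v ε).toFun (ENNReal.ofReal p) volume ∧
      MemLp (w ε).toFun (ENNReal.ofReal p) volume) :
    Tendsto (fun ε => LpN p (w ε).toFun / LpN p (v ε).toFun) (𝓝[>] 0) (𝓝 0) ∧
    Tendsto (fun ε => qeps (g ε) (w ε) / qeps (g ε) (v ε)) (𝓝[>] 0) (𝓝 0) ∧
    ∀ᶠ ε in 𝓝[>] (0 : ℝ), ¬ (v ε).toFun =ᵐ[volume] (fun _ => (0 : ℂ)) := by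
  obtain ⟨M₁, M₂, M₃, hM⟩ :=
    exists_extensionBound_compl_Aset hd hs hγ hp.le (sobolev_exponent_lt hs hp hps) c C
  set η : ℝ → ℝ := fun ε => leakage p γ M₁ M₂ M₃ ε (δ ε)
  have hη : Tendsto η (𝓝[>] 0) (𝓝 0) := tendsto_leakage hp hγ M₁ M₂ M₃ <|
    tendsto_nhdsWithin_iff.2 ⟨hδ0, eventually_mem_nhdsWithin.mono hδpos⟩
  have hunit : ∀ᶠ ε in 𝓝[>] (0 : ℝ), ε ∈ Set.Ioo 0 1 := Ioo_mem_nhdsGT one_pos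
  have hbounds : ∀ᶠ ε in 𝓝[>] (0 : ℝ), 0 < LpN p (v ε).toFun ∧
      LpN p (w ε).toFun / LpN p (v ε).toFun ≤ 4 * η ε ∧
      qeps (g ε) (w ε) / qeps (g ε) (v ε) ≤ 8 * η ε + 16 * η ε ^ 2 := by
    filter_upwards [hunit, hδ0.eventually_le_const one_half_pos,
      hη.eventually_le_const one_half_pos, eventually_rpow_le_half (a := 1 / γ) (by positivity)]
      with ε hε hδε hηε ht
    have h := hg.isAdmissibleSymbol hs hγ hc hε
    obtain ⟨hne, hu, hmin⟩ := hmin ε hε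
    obtain ⟨huvw, hvA, hwA, hv, hw⟩ := hsplit ε hε
    exact h.concentration_of_extensionBound_compl hp.le (measurableSet_Aset γ ε (δ ε)) hηε
      (hM ε (δ ε) (g ε) h (h.rayleigh_pos (by linarith) hne hu hmin) ht (hδpos ε hε.1) hδε)
      hne hu hmin huvw hvA hwA hv hw
  refine ⟨squeeze_zero' (.of_forall fun ε => div_nonneg (LpN_nonneg p _) (LpN_nonneg p _))
      (hbounds.mono fun ε h => h.2.1) (by simpa using hη.const_mul 4),
    squeeze_zero' (hunit.mono fun ε hε => ?_) (hbounds.mono fun ε h => h.2.2)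
      (by simpa using (hη.const_mul 8).add ((hη.pow 2).const_mul 16)),
    hbounds.mono fun ε h hzero => ?_⟩
  · have h := hg.isAdmissibleSymbol hs hγ hc hε
    exact div_nonneg (h.qeps_nonneg _) (h.qeps_nonneg _)
  · exact h.1.ne' (LpN_of_ae_eq_zero hzero)

/-- Theorem 1.4, non-symmetric case: Fourier concentration of
minimizers of `R^∘_ε(p)` near the unit sphere. -/
theorem stmt6 (d : ℕ) (hd : 2 ≤ d)
    (s γ p c C : ℝ)
    (hs : (d : ℝ) / ((d : ℝ) + 1) < s) (hγ : 1 < γ)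
    (hp : 2 < p) (hps : s < (d : ℝ) / 2 → p < 2 * (d : ℝ) / ((d : ℝ) - 2 * s))
    (hc : 0 < c) (hcC : c ≤ C)
    (g : ℝ → ℝ → ℝ) (hg : IsAdmissible s γ c C g)
    (δ : ℝ → ℝ) (hδpos : ∀ ε : ℝ, 0 < ε → 0 < δ ε)
    (hδ0 : Tendsto δ (𝓝[>] (0:ℝ)) (𝓝 0))
    (u v w : ℝ → HsFn d s)
    (hmin : ∀ ε ∈ Set.Ioo (0:ℝ) 1,
        ¬ (u ε).toFun =ᵐ[volume] (fun _ => (0 : ℂ)) ∧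
        MemLp (u ε).toFun (ENNReal.ofReal p) volume ∧
        qeps (g ε) (u ε) / LpN p (u ε).toFun ^ 2
          = Rayleigh d s p (g ε) (fun _ => True))
    (hsplit : ∀ ε ∈ Set.Ioo (0:ℝ) 1,
        (u ε).toFun =ᵐ[volume] (fun x => (v ε).toFun x + (w ε).toFun x) ∧
        (v ε).ft =ᵐ[volume] (Aset d γ ε (δ ε)).indicator (u ε).ft ∧
        (w ε).ft =ᵐ[volume] ((Aset d γ ε (δ ε))ᶜ).indicator (u ε).ft ∧
        MemLp (v ε).toFun (ENNReal.ofReal p) volume ∧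
        MemLp (w ε).toFun (ENNReal.ofReal p) volume) :
    Tendsto (fun ε => LpN p (w ε).toFun / LpN p (v ε).toFun) (𝓝[>] (0:ℝ)) (𝓝 0) ∧
    Tendsto (fun ε => qeps (g ε) (w ε) / qeps (g ε) (v ε)) (𝓝[>] (0:ℝ)) (𝓝 0) ∧
    (∀ᶠ ε in 𝓝[>] (0:ℝ), ¬ (v ε).toFun =ᵐ[volume] (fun _ => (0 : ℂ))) := by
  have hs_pos : 0 < s := lt_of_le_of_lt (by positivity) hs
  exact stmt6_general d (by lia) s γ p c C hs_pos hγ hp hps hc g hg δ hδpos hδ0 u v w hmin hsplit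
end
end

section
/- Let d ≥ 2 and k ∈ {1,…,d−1}. There exist constants c₀, c₁, c₂ > 0 with the following property: for every m, δ ∈ (0,1/2) there exist pairwise disjoint measurable sets E_j ⊂ ℝ^d, j ∈ {1,…,⌊c₀/(δ²+m)⌋}, whose Lebesgue measures satisfy |E_j| ≥ c₁ δ^{k−d} j^{k−1}, and such that the real part of ∫_{S^{d−1}} e^{i r x·ω} 1_{C^k_δ}(ω) dσ(ω) is at least c₂ δ^{d−k} j^{(1−k)/2} whenever |r−1| ≤ m and x ∈ E_j. -/
open MeasureTheory Real Filter
open scoped ENNReal FourierTransform RealInnerProductSpace Topology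

noncomputable section

/-- The `G_k`-symmetric pair of spherical caps `C^k_δ ⊆ S^{d-1}`:
points of the unit sphere whose first block of coordinates has norm `< δ`. -/
def sphCap (d k : ℕ) (δ : ℝ) : Set (Rd d) :=
  {ω | ‖ω‖ = 1 ∧ blockSq d k ω < δ ^ 2}

/-! Write `d = n + k`, `x = (x', x'')` and `ω = (η, ζ)` in `ℝ^n × ℝ^k`. The cap is invariant under
rotations of `ζ`, so averaging over them replaces the factor `exp (i r ⟪x'', ζ⟫)` by the spherical
mean `M (|r| |x''| |ζ|)`, where `M` is the radial profile of the Fourier transform of the uniform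
measure on `S^{k-1}`.

Because `M` solves a Bessel equation, `u ρ = ρ^{(k-1)/2} M ρ` solves `u'' = -(1 - a / ρ²) u`. Hence
`(u + i u') e^{iρ}` has a nonzero limit at infinity, and `u` is bounded below by a positive constant
on windows of fixed width around the points `2πj + R₀`.

On the cap `|η| < δ` and `|ζ| = 1 + O(δ²)`. Take for `E_j` the points with `|x'| ≤ 1 / (2δ)` and
`|x''|` within `1/4` of `2πj + R₀`. Then the phase `r ⟪x', η⟫` is at most `1` in absolute value, and
`|r| |x''| |ζ|` differs from `|x''|` by `O(j (δ² + m))`, so it stays inside the `j`-th window. The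
factor `δ^n` is the size of the cap, bounded below by projecting the cap orthogonally onto a
coordinate hyperplane. -/

section PerturbedOscillator

lemma hasDerivAt_const_div (c : ℝ) {x : ℝ} (hx : x ≠ 0) :
    HasDerivAt (fun y => c / y) (-(c / x ^ 2)) x := by
  simpa only [div_eq_mul_inv, mul_neg] using (hasDerivAt_inv hx).const_mul c

lemma monotoneOn_mul_exp_neg_div {f f' : ℝ → ℝ} {b x₀ : ℝ} (hx₀ : 0 < x₀)
    (hf : ∀ x, x₀ ≤ x → HasDerivAt f (f' x) x)
    (hf' : ∀ x, x₀ ≤ x → -(b / x ^ 2 * f x) ≤ f' x) :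
    MonotoneOn (fun x => f x * exp (-b / x)) (Set.Ici x₀) := by
  have hderiv : ∀ x ∈ Set.Ici x₀, HasDerivAt (fun x => f x * exp (-b / x))
      ((f' x + b / x ^ 2 * f x) * exp (-b / x)) x := fun x hx =>
    ((hf x hx).mul (hasDerivAt_const_div (-b) (hx₀.trans_le hx).ne').exp).congr_deriv (by ring)
  refine monotoneOn_of_hasDerivWithinAt_nonneg (convex_Ici x₀)
    (fun x hx => (hderiv x hx).continuousAt.continuousWithinAt)
    (fun x hx => (hderiv x (interior_subset hx)).hasDerivWithinAt) fun x hx => ?_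
  exact mul_nonneg (by linarith [hf' x (interior_subset hx)]) (exp_pos _).le

section NormBounds

variable {F : Type*} [NormedAddCommGroup F] [InnerProductSpace ℝ F]
  {ζ ζ' : ℝ → F} {b x₀ : ℝ}

lemma abs_two_mul_inner_le_of_norm_le {v w : F} {c : ℝ} (h : ‖w‖ ≤ c * ‖v‖) :
    |2 * ⟪v, w⟫| ≤ 2 * c * ‖v‖ ^ 2 := by
  calc |2 * ⟪v, w⟫| = 2 * |⟪v, w⟫| := by rw [abs_mul, abs_two]
    _ ≤ 2 * (‖v‖ * (c * ‖v‖)) := by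
        gcongr
        exact (abs_real_inner_le_norm v w).trans (by gcongr)
    _ = 2 * c * ‖v‖ ^ 2 := by ring

lemma norm_sq_mul_exp_le_of_norm_deriv_le (hx₀ : 0 < x₀) (hb : 0 ≤ b)
    (hζ : ∀ x, x₀ ≤ x → HasDerivAt ζ (ζ' x) x)
    (hζ' : ∀ x, x₀ ≤ x → ‖ζ' x‖ ≤ b / x ^ 2 * ‖ζ x‖) {x : ℝ} (hx : x₀ ≤ x) :
    ‖ζ x₀‖ ^ 2 * exp (-(2 * b) / x₀) ≤ ‖ζ x‖ ^ 2 := by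
  have hmono := monotoneOn_mul_exp_neg_div (b := 2 * b) hx₀ (fun x hx => (hζ x hx).norm_sq)
    fun x hx => (neg_le_neg (by ring_nf; rfl)).trans
      (abs_le.1 (abs_two_mul_inner_le_of_norm_le (hζ' x hx))).1
  refine (hmono Set.self_mem_Ici hx hx).trans (mul_le_of_le_one_right (sq_nonneg _) ?_)
  rw [exp_le_one_iff, neg_div, neg_nonpos]
  exact div_nonneg (by positivity) (hx₀.le.trans hx)

lemma norm_sq_le_mul_exp_of_norm_deriv_le (hx₀ : 0 < x₀) (hb : 0 ≤ b)
    (hζ : ∀ x, x₀ ≤ x → HasDerivAt ζ (ζ' x) x)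
    (hζ' : ∀ x, x₀ ≤ x → ‖ζ' x‖ ≤ b / x ^ 2 * ‖ζ x‖) {x : ℝ} (hx : x₀ ≤ x) :
    ‖ζ x‖ ^ 2 ≤ ‖ζ x₀‖ ^ 2 * exp (2 * b / x₀) := by
  have hmono := monotoneOn_mul_exp_neg_div (b := -(2 * b)) hx₀ (fun x hx => (hζ x hx).norm_sq.neg)
    fun x hx => (by
      have := (abs_le.1 (abs_two_mul_inner_le_of_norm_le (hζ' x hx))).2
      simp only [Pi.neg_apply]
      linarith [(by ring : -(2 * b) / x ^ 2 * -‖ζ x‖ ^ 2 = 2 * (b / x ^ 2) * ‖ζ x‖ ^ 2)])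
  have hle := hmono Set.self_mem_Ici hx hx
  simp only [neg_neg, Pi.neg_apply, neg_mul, neg_le_neg_iff] at hle
  refine le_trans (le_mul_of_one_le_right (sq_nonneg _) (one_le_exp ?_)) hle
  exact div_nonneg (by positivity) (hx₀.le.trans hx)

lemma exists_tendsto_ne_zero_of_norm_deriv_le [CompleteSpace F] (hx₀ : 0 < x₀) (hb : 0 ≤ b)
    (hζ : ∀ x, x₀ ≤ x → HasDerivAt ζ (ζ' x) x)
    (hζ' : ∀ x, x₀ ≤ x → ‖ζ' x‖ ≤ b / x ^ 2 * ‖ζ x‖) (hne : ζ x₀ ≠ 0) :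
    ∃ L : F, L ≠ 0 ∧ Tendsto ζ atTop (𝓝 L) := by
  set M := √(‖ζ x₀‖ ^ 2 * exp (2 * b / x₀))
  have hupper : ∀ x, x₀ ≤ x → ‖ζ x‖ ≤ M := fun x hx =>
    le_sqrt_of_sq_le (norm_sq_le_mul_exp_of_norm_deriv_le hx₀ hb hζ hζ' hx)
  have hinteg : IntegrableOn ζ' (Set.Ioi x₀) := by
    have hdom : IntegrableOn (fun x : ℝ => b * M * x ^ (-2 : ℝ)) (Set.Ioi x₀) :=
      (integrableOn_Ioi_rpow_of_lt (by norm_num) hx₀).const_mul _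
    have hderiv : deriv ζ =ᵐ[volume.restrict (Set.Ioi x₀)] ζ' :=
      (ae_restrict_mem measurableSet_Ioi).mono fun x hx => (hζ x (le_of_lt hx)).deriv
    refine hdom.mono' ((aestronglyMeasurable_deriv ζ _).congr hderiv) ?_
    filter_upwards [ae_restrict_mem measurableSet_Ioi] with x hx
    have hx' : x₀ ≤ x := le_of_lt hx
    calc ‖ζ' x‖ ≤ b / x ^ 2 * M := (hζ' x hx').trans (by gcongr; exact hupper x hx')
      _ = b * M * x ^ (-2 : ℝ) := by
        rw [rpow_neg (hx₀.le.trans hx'), rpow_two]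
        ring
  have hlim := tendsto_limUnder_of_hasDerivAt_of_integrableOn_Ioi
    (fun x hx => hζ x (le_of_lt hx)) hinteg
  refine ⟨_, fun hzero => ?_, hlim⟩
  have hlower : ‖ζ x₀‖ ^ 2 * exp (-(2 * b) / x₀) ≤ ‖limUnder atTop ζ‖ ^ 2 :=
    ge_of_tendsto (hlim.norm.pow 2) <| (eventually_ge_atTop x₀).mono fun x hx =>
      norm_sq_mul_exp_le_of_norm_deriv_le hx₀ hb hζ hζ' hx
  rw [hzero, norm_zero, zero_pow two_ne_zero] at hlower
  have : 0 < ‖ζ x₀‖ := norm_pos_iff.2 hne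
  exact hlower.not_gt (by positivity)

end NormBounds

-- `(u + i u') e^{iρ}` is constant along solutions of the free equation `u'' = -u`.
lemma exists_tendsto_mul_exp_of_perturbed_oscillator {u v : ℝ → ℝ} {a x₀ : ℝ}
    (hu : ∀ x, 0 < x → HasDerivAt u (v x) x)
    (hv : ∀ x, 0 < x → HasDerivAt v (-(1 - a / x ^ 2) * u x) x)
    (hx₀ : 0 < x₀) (hne : u x₀ ≠ 0) :
    ∃ L : ℂ, L ≠ 0 ∧
      Tendsto (fun x => (u x + v x * Complex.I) * Complex.exp (x * Complex.I)) atTop (𝓝 L) := by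
  have hderiv : ∀ x, 0 < x →
      HasDerivAt (fun x : ℝ => (u x + v x * Complex.I) * Complex.exp (x * Complex.I))
        (a / x ^ 2 * u x * Complex.I * Complex.exp (x * Complex.I)) x := fun x hx => by
    refine (((hu x hx).ofReal_comp.add ((hv x hx).ofReal_comp.mul_const Complex.I)).mul
      ((Complex.ofRealCLM.hasDerivAt (x := x)).mul_const Complex.I).cexp).congr_deriv ?_
    simp only [Pi.add_apply, Complex.ofRealCLM_apply]
    push_cast
    linear_combination (v x * Complex.exp (x * Complex.I)) * Complex.I_mul_I
  have hnorm : ∀ x, 0 < x →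
      ‖a / x ^ 2 * u x * Complex.I * Complex.exp (x * Complex.I)‖ ≤
        |a| / x ^ 2 * ‖(u x + v x * Complex.I) * Complex.exp (x * Complex.I)‖ := fun x hx => by
    simp only [norm_mul, norm_div, norm_pow, Complex.norm_real, Complex.norm_I, mul_one,
      Complex.norm_exp_ofReal_mul_I, Real.norm_eq_abs, sq_abs]
    gcongr
    simpa using Complex.abs_re_le_norm (u x + v x * Complex.I)
  refine exists_tendsto_ne_zero_of_norm_deriv_le hx₀ (abs_nonneg a)
    (fun x hx => hderiv x (hx₀.trans_le hx)) (fun x hx => hnorm x (hx₀.trans_le hx)) ?_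
  refine mul_ne_zero (fun hzero => hne ?_) (Complex.exp_ne_zero _)
  simpa using congrArg Complex.re hzero

lemma seven_eighths_le_cos_of_abs_le {t : ℝ} (ht : |t| ≤ 1 / 2) : 7 / 8 ≤ cos t := by
  have hsq : t ^ 2 ≤ (1 / 2) ^ 2 := sq_le_sq' (abs_le.1 ht).1 (abs_le.1 ht).2
  linarith [one_sub_sq_div_two_le_cos (x := t)]

lemma re_mul_exp_neg_mul_I (L : ℂ) (x : ℝ) :
    (L * Complex.exp (-x * Complex.I)).re = ‖L‖ * cos (x - L.arg) := by
  conv_lhs => rw [← Complex.norm_mul_exp_arg_mul_I L]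
  have hexp : L.arg * Complex.I + -x * Complex.I = ((L.arg - x : ℝ) : ℂ) * Complex.I := by
    push_cast
    ring
  rw [mul_assoc, ← Complex.exp_add, hexp, Complex.re_ofReal_mul, Complex.exp_ofReal_mul_I_re,
    ← cos_neg, neg_sub]

lemma exists_forall_le_re_mul_exp_neg_of_tendsto {ζ : ℝ → ℂ} {L : ℂ} (hL : L ≠ 0)
    (hζ : Tendsto ζ atTop (𝓝 L)) :
    ∃ A R₀ : ℝ, 0 < A ∧ 1 ≤ R₀ ∧ ∀ (j : ℕ) (x : ℝ), |x - (2 * π * j + R₀)| ≤ 1 / 2 →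
      A ≤ (ζ x * Complex.exp (-x * Complex.I)).re := by
  have hL' : 0 < ‖L‖ := norm_pos_iff.2 hL
  obtain ⟨R, hR⟩ := eventually_atTop.1 (Metric.tendsto_nhds.1 hζ (‖L‖ / 8) (by positivity))
  obtain ⟨N, hN⟩ := exists_nat_gt ((max R 1 + 1 - L.arg) / (2 * π))
  rw [div_lt_iff₀ (by positivity)] at hN
  refine ⟨‖L‖ / 2, L.arg + 2 * π * N, by positivity, by linarith [le_max_right R 1],
    fun j x hx => ?_⟩
  have hRx : R ≤ x := by
    have : 0 ≤ 2 * π * j := by positivity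
    linarith [(abs_le.1 hx).1, le_max_left R 1]
  have hmain : 7 / 8 * ‖L‖ ≤ (L * Complex.exp (-x * Complex.I)).re := by
    have hcos : cos (x - L.arg) = cos (x - (2 * π * j + (L.arg + 2 * π * N))) := by
      rw [← cos_add_nat_mul_two_pi (x - (2 * π * j + (L.arg + 2 * π * N))) (j + N)]
      congr 1
      push_cast
      ring
    rw [re_mul_exp_neg_mul_I, mul_comm, hcos]
    gcongr
    exact seven_eighths_le_cos_of_abs_le hx
  have herror : |((ζ x - L) * Complex.exp (-x * Complex.I)).re| ≤ ‖L‖ / 8 := by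
    refine (Complex.abs_re_le_norm _).trans ?_
    rw [norm_mul, ← Complex.ofReal_neg, Complex.norm_exp_ofReal_mul_I, mul_one, ← dist_eq_norm]
    exact (hR x hRx).le
  have hsplit : (ζ x * Complex.exp (-x * Complex.I)).re =
      (L * Complex.exp (-x * Complex.I)).re + ((ζ x - L) * Complex.exp (-x * Complex.I)).re := by
    rw [← Complex.add_re]
    ring_nf
  linarith [(abs_le.1 herror).1]

lemma exists_forall_le_of_perturbed_oscillator {u v : ℝ → ℝ} {a x₀ : ℝ}
    (hu : ∀ x, 0 < x → HasDerivAt u (v x) x)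
    (hv : ∀ x, 0 < x → HasDerivAt v (-(1 - a / x ^ 2) * u x) x)
    (hx₀ : 0 < x₀) (hne : u x₀ ≠ 0) :
    ∃ A R₀ : ℝ, 0 < A ∧ 1 ≤ R₀ ∧
      ∀ (j : ℕ) (x : ℝ), |x - (2 * π * j + R₀)| ≤ 1 / 2 → A ≤ u x := by
  obtain ⟨L, hL, hlim⟩ := exists_tendsto_mul_exp_of_perturbed_oscillator hu hv hx₀ hne
  obtain ⟨A, R₀, hA, hR₀, hle⟩ := exists_forall_le_re_mul_exp_neg_of_tendsto hL hlim
  refine ⟨A, R₀, hA, hR₀, fun j x hx => (hle j x hx).trans_eq ?_⟩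
  rw [mul_assoc, ← Complex.exp_add, neg_mul, add_neg_cancel, Complex.exp_zero, mul_one]
  simp

lemma exists_forall_le_rpow_mul_of_bessel_equation {f g : ℝ → ℝ} {α x₀ : ℝ}
    (hf : ∀ x, 0 < x → HasDerivAt f (g x) x)
    (hg : ∀ x, 0 < x → HasDerivAt g (-f x - 2 * α * (g x / x)) x)
    (hx₀ : 0 < x₀) (hne : f x₀ ≠ 0) :
    ∃ A R₀ : ℝ, 0 < A ∧ 1 ≤ R₀ ∧
      ∀ (j : ℕ) (x : ℝ), |x - (2 * π * j + R₀)| ≤ 1 / 2 → A ≤ x ^ α * f x := by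
  have hpow : ∀ β x : ℝ, 0 < x → HasDerivAt (fun x : ℝ => x ^ β) (β * x ^ (β - 1)) x :=
    fun β x hx => hasDerivAt_rpow_const (Or.inl hx.ne')
  refine exists_forall_le_of_perturbed_oscillator (a := α * (α - 1))
    (fun x hx => (hpow α x hx).mul (hf x hx)) (fun x hx => ?_) hx₀
    (mul_ne_zero (rpow_pos_of_pos hx₀ α).ne' hne)
  refine ((((hpow (α - 1) x hx).const_mul α).mul (hf x hx)).add
    ((hpow α x hx).mul (hg x hx))).congr_deriv ?_
  simp only [rpow_sub_one hx.ne']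
  field_simp
  ring

end PerturbedOscillator

section ParametricDerivative

variable {X : Type*} [MeasurableSpace X] {μ : Measure X} {a b c : X → ℝ}

lemma hasDerivAt_integral_mul_cos (ha : Measurable a) (hb : Measurable b) (hc : Integrable c μ)
    (hcb : Integrable (fun x => c x * b x) μ) (s : ℝ) :
    HasDerivAt (fun s : ℝ => ∫ x, c x * cos (a x + s * b x) ∂μ)
      (-∫ x, c x * b x * sin (a x + s * b x) ∂μ) s := by
  have hmeas : ∀ {f : X → ℝ} {g : ℝ → ℝ}, Integrable f μ → Measurable g → ∀ s : ℝ,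
      AEStronglyMeasurable (fun x => f x * g (a x + s * b x)) μ := fun hf hg s =>
    hf.aestronglyMeasurable.mul (hg.comp (ha.add (hb.const_mul s))).aestronglyMeasurable
  rw [← integral_neg]
  refine (hasDerivAt_integral_of_dominated_loc_of_deriv_le (s := Set.univ)
    (F := fun s x => c x * cos (a x + s * b x))
    (F' := fun s x => -(c x * b x * sin (a x + s * b x)))
    univ_mem (Eventually.of_forall (hmeas hc measurable_cos)) ?_ (hmeas hcb measurable_sin s).neg
    (Eventually.of_forall fun x t _ => ?_) hcb.norm (Eventually.of_forall fun x t _ => ?_)).2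
  · refine hc.mono (hmeas hc measurable_cos s) (Eventually.of_forall fun x => ?_)
    rw [norm_mul]
    exact mul_le_of_le_one_right (norm_nonneg _) (abs_cos_le_one _)
  · rw [norm_neg, norm_mul]
    exact mul_le_of_le_one_right (norm_nonneg _) (abs_sin_le_one _)
  · have hphase : HasDerivAt (fun t : ℝ => a x + t * b x) (b x) t :=
      (hasDerivAt_mul_const (b x)).const_add (a x)
    exact (hphase.cos.const_mul (c x)).congr_deriv (by ring)

lemma hasDerivAt_integral_mul_sin (ha : Measurable a) (hb : Measurable b) (hc : Integrable c μ)
    (hcb : Integrable (fun x => c x * b x) μ) (s : ℝ) :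
    HasDerivAt (fun s : ℝ => ∫ x, c x * sin (a x + s * b x) ∂μ)
      (∫ x, c x * b x * cos (a x + s * b x) ∂μ) s := by
  have hshift : ∀ u v : ℝ, u - π / 2 + v = u + v - π / 2 := fun u v => by ring
  simpa only [hshift, cos_sub_pi_div_two, sin_sub_pi_div_two, mul_neg, integral_neg, neg_neg] using
    hasDerivAt_integral_mul_cos (ha.sub_const (π / 2)) hb hc hcb s

end ParametricDerivative

section SphericalMean

variable {E : Type*} [NormedAddCommGroup E] [InnerProductSpace ℝ E] [MeasurableSpace E]

variable (E) in
/-- The rotation-invariant probability measure on the unit sphere, seen as a measure on the ambient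
space: the law of `x / ‖x‖` for `x` uniformly distributed in the unit ball. -/
def uniformSphere [FiniteDimensional ℝ E] [BorelSpace E] : Measure E :=
  (ProbabilityTheory.cond volume (Metric.ball 0 1)).map fun x : E => ‖x‖⁻¹ • x

variable [FiniteDimensional ℝ E] [BorelSpace E]

instance : IsProbabilityMeasure (uniformSphere E) := by
  have : IsProbabilityMeasure (ProbabilityTheory.cond volume (Metric.ball (0 : E) 1)) :=
    ProbabilityTheory.cond_isProbabilityMeasure_of_finite
      (Metric.measure_ball_pos _ _ one_pos).ne' measure_ball_lt_top.ne
  exact Measure.isProbabilityMeasure_map (by fun_prop)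

lemma measurePreserving_uniformSphere (L : E ≃ₗᵢ[ℝ] E) :
    MeasurePreserving L (uniformSphere E) (uniformSphere E) := by
  refine ⟨L.continuous.measurable, ?_⟩
  have hball : (ProbabilityTheory.cond volume (Metric.ball (0 : E) 1)).map L =
      ProbabilityTheory.cond volume (Metric.ball 0 1) := by
    have := (L.measurePreserving.restrict_preimage (s := Metric.ball 0 1) measurableSet_ball).map_eq
    rw [ProbabilityTheory.cond, Measure.map_smul]
    simpa using congrArg _ this
  have hcomm : L ∘ (fun x : E => ‖x‖⁻¹ • x) = (fun x : E => ‖x‖⁻¹ • x) ∘ L := by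
    ext x
    simp
  rw [uniformSphere, Measure.map_map L.continuous.measurable (by fun_prop), hcomm,
    ← Measure.map_map (by fun_prop) L.continuous.measurable, hball]

lemma integral_uniformSphere_comp (L : E ≃ₗᵢ[ℝ] E) (f : E → ℝ) :
    ∫ θ, f (L θ) ∂uniformSphere E = ∫ θ, f θ ∂uniformSphere E :=
  (measurePreserving_uniformSphere L).integral_comp L.toHomeomorph.measurableEmbedding f

/-- The mean of the plane wave `θ ↦ exp (i ⟪θ, w⟫)` over the unit sphere, that is, the Fourier
transform of the uniform measure; it is real, so only the cosine is recorded. -/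
def sphereCosMean (w : E) : ℝ := ∫ θ, cos ⟪θ, w⟫ ∂uniformSphere E

lemma sphereCosMean_eq_of_norm_eq {w w' : E} (h : ‖w‖ = ‖w'‖) :
    sphereCosMean w = sphereCosMean w' := by
  have hinner : ∀ θ, ⟪θ, w⟫ = ⟪(ℝ ∙ (w - w'))ᗮ.reflection θ, w'⟫ := fun θ => by
    rw [← (ℝ ∙ (w - w'))ᗮ.reflection.inner_map_map θ w, Submodule.reflection_sub h]
  simp only [sphereCosMean, hinner]
  exact integral_uniformSphere_comp _ fun θ => cos ⟪θ, w'⟫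

lemma abs_sphereCosMean_le_one (w : E) : |sphereCosMean w| ≤ 1 := by
  simpa [sphereCosMean] using norm_integral_le_of_norm_le_const (μ := uniformSphere E)
    (f := fun θ => cos ⟪θ, w⟫) (C := 1) (Eventually.of_forall fun θ => abs_cos_le_one _)

lemma continuous_sphereCosMean : Continuous (sphereCosMean : E → ℝ) :=
  continuous_of_dominated (fun _ => (by fun_prop : Continuous _).aestronglyMeasurable)
    (fun _ => Eventually.of_forall fun _ => abs_cos_le_one _) (integrable_const 1)
    (Eventually.of_forall fun _ => by fun_prop)

lemma sphereCosMean_zero : sphereCosMean (0 : E) = 1 := by simp [sphereCosMean]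

lemma integral_sin_inner_uniformSphere (w : E) : ∫ θ, sin ⟪θ, w⟫ ∂uniformSphere E = 0 := by
  have h := integral_uniformSphere_comp (LinearIsometryEquiv.neg ℝ) fun θ : E => sin ⟪θ, w⟫
  simp only [LinearIsometryEquiv.coe_neg, inner_neg_left, sin_neg, integral_neg] at h
  linarith

lemma integral_inner_mul_sin_inner_eq_zero {v w : E} (h : ⟪v, w⟫ = 0) :
    ∫ θ, ⟪θ, v⟫ * sin ⟪θ, w⟫ ∂uniformSphere E = 0 := by
  set L := (ℝ ∙ v)ᗮ.reflection
  have hv : L v = -v := Submodule.reflection_orthogonalComplement_singleton_eq_neg v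
  have hw : L w = w := Submodule.reflection_mem_subspace_eq_self
    (Submodule.mem_orthogonal_singleton_iff_inner_right.2 h)
  have hflip : ∀ θ, ⟪L θ, v⟫ * sin ⟪L θ, w⟫ = -(⟪θ, v⟫ * sin ⟪θ, w⟫) := fun θ => by
    rw [← L.inner_map_map θ v, ← L.inner_map_map θ w, hv, hw, inner_neg_right]
    ring
  have := integral_uniformSphere_comp L fun θ => ⟪θ, v⟫ * sin ⟪θ, w⟫
  simp only [hflip, integral_neg] at this
  linarith

variable {Y : Type*} [MeasurableSpace Y] {μ : Measure Y} {φ : Y → ℝ} {p : Y → E}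
  {U : (E ≃ₗᵢ[ℝ] E) → Y → Y}

lemma integral_cos_add_inner_eq_of_norm_eq (hφ : Measurable φ) (hp : Measurable p)
    (hU : ∀ L, MeasurePreserving (U L) μ μ) (hUφ : ∀ L y, φ (U L y) = φ y)
    (hUp : ∀ L y, p (U L y) = L (p y)) {z z' : E} (h : ‖z‖ = ‖z'‖) :
    ∫ y, cos (φ y + ⟪z, p y⟫) ∂μ = ∫ y, cos (φ y + ⟪z', p y⟫) ∂μ := by
  set L := (ℝ ∙ (z - z'))ᗮ.reflection
  have hL : L z = z' := Submodule.reflection_sub h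
  have hmeas : Measurable fun y => cos (φ y + ⟪z', p y⟫) := by fun_prop
  rw [← (hU L).map_eq, integral_map (hU L).measurable.aemeasurable hmeas.aestronglyMeasurable,
    (hU L).map_eq]
  simp only [hUφ, hUp, ← hL, L.inner_map_map]

variable [Nontrivial E]

lemma ae_norm_eq_one_uniformSphere : ∀ᵐ θ ∂uniformSphere E, ‖θ‖ = 1 := by
  rw [uniformSphere, ae_map_iff (by fun_prop) (measurableSet_eq_fun (by fun_prop) (by fun_prop))]
  refine Measure.ae_smul_measure (ae_restrict_of_ae ?_) _
  filter_upwards [Measure.ae_ne volume (0 : E)] with x hx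
  rw [norm_smul, norm_inv, norm_norm, inv_mul_cancel₀ (norm_ne_zero_iff.2 hx)]

lemma integrable_uniformSphere_of_continuous {f : E → ℝ} (hf : Continuous f) :
    Integrable f (uniformSphere E) := by
  obtain ⟨C, hC⟩ := (isCompact_sphere (0 : E) 1).exists_bound_of_continuousOn hf.continuousOn
  refine Integrable.of_bound hf.aestronglyMeasurable C ?_
  filter_upwards [ae_norm_eq_one_uniformSphere] with θ hθ
  exact hC θ (mem_sphere_zero_iff_norm.2 hθ)

lemma hasDerivAt_integral_mul_cos_inner {c : E → ℝ} (hc : Continuous c) (x y : E) (s : ℝ) :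
    HasDerivAt (fun s : ℝ => ∫ θ, c θ * cos ⟪θ, x + s • y⟫ ∂uniformSphere E)
      (-∫ θ, c θ * ⟪θ, y⟫ * sin ⟪θ, x + s • y⟫ ∂uniformSphere E) s := by
  simp only [inner_add_right, inner_smul_right]
  exact hasDerivAt_integral_mul_cos (by fun_prop) (by fun_prop)
    (integrable_uniformSphere_of_continuous hc)
    (integrable_uniformSphere_of_continuous (by fun_prop)) s

lemma hasDerivAt_integral_mul_sin_inner {c : E → ℝ} (hc : Continuous c) (x y : E) (s : ℝ) :
    HasDerivAt (fun s : ℝ => ∫ θ, c θ * sin ⟪θ, x + s • y⟫ ∂uniformSphere E)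
      (∫ θ, c θ * ⟪θ, y⟫ * cos ⟪θ, x + s • y⟫ ∂uniformSphere E) s := by
  simp only [inner_add_right, inner_smul_right]
  exact hasDerivAt_integral_mul_sin (by fun_prop) (by fun_prop)
    (integrable_uniformSphere_of_continuous hc)
    (integrable_uniformSphere_of_continuous (by fun_prop)) s

lemma hasDerivAt_sphereCosMean_smul (e : E) (s : ℝ) :
    HasDerivAt (fun s : ℝ => sphereCosMean (s • e))
      (-∫ θ, ⟪θ, e⟫ * sin ⟪θ, s • e⟫ ∂uniformSphere E) s := by
  simpa only [sphereCosMean, one_mul, zero_add] using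
    hasDerivAt_integral_mul_cos_inner (c := fun _ => 1) continuous_const 0 e s

-- Differentiate `integral_inner_mul_sin_inner_eq_zero` for `x + s • y ⟂ y - s • x` at `s = 0`.
lemma integral_inner_sq_mul_cos_inner_of_inner_eq_zero {x y : E} (hxy : ⟪x, y⟫ = 0)
    (hnorm : ‖x‖ = ‖y‖) :
    ∫ θ, ⟪θ, y⟫ ^ 2 * cos ⟪θ, x⟫ ∂uniformSphere E =
      ∫ θ, ⟪θ, x⟫ * sin ⟪θ, x⟫ ∂uniformSphere E := by
  have hrotate : ∀ s : ℝ, (∫ θ, ⟪θ, y⟫ * sin ⟪θ, x + s • y⟫ ∂uniformSphere E) -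
      s * ∫ θ, ⟪θ, x⟫ * sin ⟪θ, x + s • y⟫ ∂uniformSphere E = 0 := fun s => by
    rw [← integral_const_mul, ← integral_sub
      (integrable_uniformSphere_of_continuous (by fun_prop))
      (integrable_uniformSphere_of_continuous (by fun_prop)),
      ← integral_inner_mul_sin_inner_eq_zero (v := y - s • x) (w := x + s • y)]
    · simp only [inner_sub_right, inner_smul_right, sub_mul, mul_assoc]
    · simp only [inner_sub_left, inner_add_right, inner_smul_left, inner_smul_right, hxy,
        real_inner_comm, real_inner_self_eq_norm_sq, hnorm]
      simp
  have hderiv := (hasDerivAt_integral_mul_sin_inner (c := fun θ => ⟪θ, y⟫) (by fun_prop) x y 0).sub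
    ((hasDerivAt_id (0 : ℝ)).mul
      (hasDerivAt_integral_mul_sin_inner (c := fun θ => ⟪θ, x⟫) (by fun_prop) x y 0))
  have hzero := hderiv.unique
    ((hasDerivAt_const (0 : ℝ) (0 : ℝ)).congr_of_eventuallyEq (Eventually.of_forall hrotate))
  simp only [zero_smul, add_zero, id_eq, one_mul, zero_mul, ← sq] at hzero
  linarith

lemma sum_integral_inner_sq_mul_cos_inner {ι : Type*} [Fintype ι] (b : OrthonormalBasis ι ℝ E)
    (w : E) :
    ∑ i, ∫ θ, ⟪θ, b i⟫ ^ 2 * cos ⟪θ, w⟫ ∂uniformSphere E = sphereCosMean w := by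
  rw [← integral_finsetSum _ fun i _ => integrable_uniformSphere_of_continuous (by fun_prop),
    sphereCosMean]
  refine integral_congr_ae ?_
  filter_upwards [ae_norm_eq_one_uniformSphere] with θ hθ
  rw [← Finset.sum_mul, b.sum_sq_inner_left, hθ, one_pow, one_mul]

-- The Helmholtz equation `Δm = -m` for the radial function `m = sphereCosMean`.
lemma sq_mul_sphereCosMean_smul {e : E} (he : ‖e‖ = 1) (s : ℝ) :
    s ^ 2 * sphereCosMean (s • e) = s ^ 2 * ∫ θ, ⟪θ, e⟫ ^ 2 * cos ⟪θ, s • e⟫ ∂uniformSphere E +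
      (Module.finrank ℝ E - 1) * (s * ∫ θ, ⟪θ, e⟫ * sin ⟪θ, s • e⟫ ∂uniformSphere E) := by
  classical
  obtain ⟨u, b, hu, hb⟩ := Orthonormal.exists_orthonormalBasis_extension
    (orthonormal_subtype_iff_ite.2 fun v hv w hw => by
      simp_all : Orthonormal ℝ ((↑) : ({e} : Set E) → E))
  have heu : e ∈ u := hu rfl
  have hoff : ∀ i : u, i ≠ ⟨e, heu⟩ → s ^ 2 * ∫ θ, ⟪θ, b i⟫ ^ 2 * cos ⟪θ, s • e⟫ ∂uniformSphere E =
      s * ∫ θ, ⟪θ, e⟫ * sin ⟪θ, s • e⟫ ∂uniformSphere E := fun i hi => by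
    have horth : ⟪e, b i⟫ = 0 := by
      simpa [hb] using b.orthonormal.2 hi.symm
    have := integral_inner_sq_mul_cos_inner_of_inner_eq_zero (x := s • e) (y := s • b i)
      (by simp [inner_smul_left, inner_smul_right, horth])
      (by simp [norm_smul, he])
    simpa only [inner_smul_right _ _ s, mul_pow, mul_assoc, integral_const_mul] using this
  have hcard : (Fintype.card u : ℝ) = Module.finrank ℝ E := by
    rw [Module.finrank_eq_card_basis b.toBasis]
  rw [← sum_integral_inner_sq_mul_cos_inner b, Finset.mul_sum,
    ← Finset.add_sum_erase _ _ (Finset.mem_univ ⟨e, heu⟩),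
    Finset.sum_congr rfl fun i hi => hoff i (Finset.ne_of_mem_erase hi), Finset.sum_const,
    Finset.card_erase_of_mem (Finset.mem_univ _), Finset.card_univ, nsmul_eq_mul,
    Nat.cast_pred (Fintype.card_pos_iff.2 ⟨⟨e, heu⟩⟩), hcard, hb]

variable (E) in
lemma exists_forall_le_norm_rpow_mul_sphereCosMean :
    ∃ A R₀ : ℝ, 0 < A ∧ 1 ≤ R₀ ∧ ∀ (j : ℕ) (w : E), |‖w‖ - (2 * π * j + R₀)| ≤ 1 / 2 →
      A ≤ ‖w‖ ^ (((Module.finrank ℝ E : ℝ) - 1) / 2) * sphereCosMean w := by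
  obtain ⟨e, he⟩ := exists_norm_eq E zero_le_one
  have hsin : ∀ x, 0 < x →
      HasDerivAt (fun x : ℝ => -∫ θ, ⟪θ, e⟫ * sin ⟪θ, x • e⟫ ∂uniformSphere E)
        (-sphereCosMean (x • e) - 2 * (((Module.finrank ℝ E : ℝ) - 1) / 2) *
          (-(∫ θ, ⟪θ, e⟫ * sin ⟪θ, x • e⟫ ∂uniformSphere E) / x)) x := fun x hx => by
    have hderiv := hasDerivAt_integral_mul_sin_inner (c := fun θ : E => ⟪θ, e⟫) (by fun_prop) 0 e x
    simp only [zero_add, ← sq] at hderiv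
    refine hderiv.neg.congr_deriv ?_
    field_simp
    refine mul_left_cancel₀ hx.ne' ?_
    linear_combination sq_mul_sphereCosMean_smul he x
  obtain ⟨x₀, hne, hx₀⟩ : ∃ x : ℝ, sphereCosMean (x • e) ≠ 0 ∧ 0 < x := by
    have hcont := (hasDerivAt_sphereCosMean_smul e 0).continuousAt
    have h0 : sphereCosMean ((0 : ℝ) • e) ≠ 0 := by
      rw [zero_smul, sphereCosMean_zero]
      exact one_ne_zero
    exact (((hcont.eventually_ne h0).filter_mono nhdsWithin_le_nhds).and
      self_mem_nhdsWithin : ∀ᶠ x in 𝓝[>] (0 : ℝ), _).exists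
  obtain ⟨A, R₀, hA, hR₀, hle⟩ := exists_forall_le_rpow_mul_of_bessel_equation
    (fun x _ => hasDerivAt_sphereCosMean_smul e x) hsin hx₀ hne
  refine ⟨A, R₀, hA, hR₀, fun j w hw => (hle j _ hw).trans_eq ?_⟩
  rw [sphereCosMean_eq_of_norm_eq (w := ‖w‖ • e) (w' := w) (by simp [norm_smul, he])]

variable (E) in
lemma exists_forall_le_sphereCosMean :
    ∃ A R₀ : ℝ, 0 < A ∧ 1 ≤ R₀ ∧ ∀ j : ℕ, 1 ≤ j → ∀ w : E, |‖w‖ - (2 * π * j + R₀)| ≤ 1 / 2 →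
      A * (j : ℝ) ^ ((1 - (Module.finrank ℝ E : ℝ)) / 2) ≤ sphereCosMean w := by
  obtain ⟨A, R₀, hA, hR₀, hle⟩ := exists_forall_le_norm_rpow_mul_sphereCosMean E
  set α := ((Module.finrank ℝ E : ℝ) - 1) / 2 with hα
  have hα₀ : 0 ≤ α := by
    have : (1 : ℝ) ≤ Module.finrank ℝ E := mod_cast Module.finrank_pos (R := ℝ) (M := E)
    linarith
  set C := 2 * π + (R₀ + 1 / 2) with hCdef
  have hC : 0 < C := by positivity
  refine ⟨A * C ^ (-α), R₀, by positivity, hR₀, fun j hj w hw => ?_⟩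
  have hj' : (1 : ℝ) ≤ j := mod_cast hj
  obtain ⟨hlower, hupper⟩ := abs_le.1 hw
  have hw₀ : 0 < ‖w‖ := by
    have : 0 ≤ 2 * π * j := by positivity
    linarith
  have hwC : ‖w‖ ≤ C * j := by
    have : (R₀ + 1 / 2) * 1 ≤ (R₀ + 1 / 2) * j := by gcongr
    linarith [(by rw [hCdef]; ring : C * j = 2 * π * j + (R₀ + 1 / 2) * j)]
  calc A * C ^ (-α) * (j : ℝ) ^ ((1 - (Module.finrank ℝ E : ℝ)) / 2)
      = A * (C * j) ^ (-α) := by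
        rw [mul_rpow hC.le (by positivity), mul_assoc, hα, ← neg_div, neg_sub]
    _ ≤ A * ‖w‖ ^ (-α) := by
        gcongr 1
        exact rpow_le_rpow_of_nonpos hw₀ hwC (neg_nonpos.2 hα₀)
    _ ≤ ‖w‖ ^ α * sphereCosMean w * ‖w‖ ^ (-α) := by
        gcongr
        exact hle j w hw
    _ = sphereCosMean w := by
        rw [rpow_neg hw₀.le]
        field_simp

lemma integral_cos_add_inner_uniformSphere (t : ℝ) (w : E) :
    ∫ θ, cos (t + ⟪θ, w⟫) ∂uniformSphere E = cos t * sphereCosMean w := by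
  simp only [cos_add]
  rw [integral_sub (integrable_uniformSphere_of_continuous (by fun_prop))
    (integrable_uniformSphere_of_continuous (by fun_prop)), integral_const_mul, integral_const_mul,
    integral_sin_inner_uniformSphere, mul_zero, sub_zero, sphereCosMean]

lemma integral_cos_add_inner_eq_integral_mul_sphereCosMean [IsFiniteMeasure μ]
    (hφ : Measurable φ) (hp : Measurable p)
    (hU : ∀ L, MeasurePreserving (U L) μ μ) (hUφ : ∀ L y, φ (U L y) = φ y)
    (hUp : ∀ L y, p (U L y) = L (p y)) (z : E) :
    ∫ y, cos (φ y + ⟪z, p y⟫) ∂μ = ∫ y, cos (φ y) * sphereCosMean (‖z‖ • p y) ∂μ := by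
  have hrotate : ∀ᵐ θ ∂uniformSphere E,
      ∫ y, cos (φ y + ⟪θ, ‖z‖ • p y⟫) ∂μ = ∫ y, cos (φ y + ⟪z, p y⟫) ∂μ := by
    filter_upwards [ae_norm_eq_one_uniformSphere] with θ hθ
    simp only [inner_smul_right, ← real_inner_smul_left]
    exact integral_cos_add_inner_eq_of_norm_eq hφ hp hU hUφ hUp (by simp [norm_smul, hθ])
  have hinteg : Integrable (fun q : E × Y => cos (φ q.2 + ⟪q.1, ‖z‖ • p q.2⟫))
      ((uniformSphere E).prod μ) :=
    Integrable.of_bound (by fun_prop : Measurable _).aestronglyMeasurable 1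
      (Eventually.of_forall fun _ => abs_cos_le_one _)
  calc ∫ y, cos (φ y + ⟪z, p y⟫) ∂μ
      = ∫ θ, ∫ y, cos (φ y + ⟪θ, ‖z‖ • p y⟫) ∂μ ∂uniformSphere E := by
        rw [integral_congr_ae hrotate, integral_const, probReal_univ, one_smul]
    _ = ∫ y, ∫ θ, cos (φ y + ⟪θ, ‖z‖ • p y⟫) ∂uniformSphere E ∂μ := integral_integral_swap hinteg
    _ = ∫ y, cos (φ y) * sphereCosMean (‖z‖ • p y) ∂μ := by
        simp only [integral_cos_add_inner_uniformSphere]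

lemma half_mul_le_integral_cos_add_inner [IsFiniteMeasure μ] (hφ : Measurable φ)
    (hp : Measurable p) (hU : ∀ L, MeasurePreserving (U L) μ μ) (hUφ : ∀ L y, φ (U L y) = φ y)
    (hUp : ∀ L y, p (U L y) = L (p y)) {z : E} {B : ℝ} (hB : 0 ≤ B) (hφ₁ : ∀ᵐ y ∂μ, |φ y| ≤ 1)
    (hmean : ∀ᵐ y ∂μ, B ≤ sphereCosMean (‖z‖ • p y)) :
    B / 2 * μ.real Set.univ ≤ ∫ y, cos (φ y + ⟪z, p y⟫) ∂μ := by
  rw [integral_cos_add_inner_eq_integral_mul_sphereCosMean hφ hp hU hUφ hUp]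
  have hmeas : Measurable fun y => cos (φ y) * sphereCosMean (‖z‖ • p y) :=
    (measurable_cos.comp hφ).mul (continuous_sphereCosMean.measurable.comp (hp.const_smul _))
  have hinteg : Integrable (fun y => cos (φ y) * sphereCosMean (‖z‖ • p y)) μ := by
    refine Integrable.of_bound hmeas.aestronglyMeasurable 1 (Eventually.of_forall fun y => ?_)
    rw [norm_mul]
    exact mul_le_one₀ (abs_cos_le_one _) (norm_nonneg _) (abs_sphereCosMean_le_one _)
  calc B / 2 * μ.real Set.univ = ∫ _, B / 2 ∂μ := by
        rw [integral_const, smul_eq_mul, mul_comm]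
    _ ≤ ∫ y, cos (φ y) * sphereCosMean (‖z‖ • p y) ∂μ := by
        refine integral_mono_ae (integrable_const _) hinteg ?_
        filter_upwards [hφ₁, hmean] with y hy hBy
        have hcos : 1 / 2 ≤ cos (φ y) := by
          have : φ y ^ 2 ≤ 1 := (sq_le_one_iff_abs_le_one _).2 hy
          linarith [one_sub_sq_div_two_le_cos (x := φ y)]
        calc B / 2 = 1 / 2 * B := by ring
          _ ≤ cos (φ y) * sphereCosMean (‖z‖ • p y) := by gcongr

end SphericalMean

section SphereMeasure

variable {E : Type*} [NormedAddCommGroup E] [InnerProductSpace ℝ E]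

lemma stereoToFun_mem_closedBall {v x : E} (hx : ‖x‖ = 1) (hvx : ⟪v, x⟫ ≤ 0) :
    stereoToFun v x ∈ Metric.closedBall (0 : (ℝ ∙ v)ᗮ) 2 := by
  rw [mem_closedBall_zero_iff, stereoToFun_apply, norm_smul, innerSL_apply_apply]
  have hproj : ‖(ℝ ∙ v)ᗮ.orthogonalProjectionOnto x‖ ≤ 1 :=
    (Submodule.norm_orthogonalProjectionOnto_apply_le _ x).trans_eq hx
  have hfactor : ‖2 / (1 - ⟪v, x⟫)‖ ≤ 2 := by
    rw [norm_div, Real.norm_two, Real.norm_of_nonneg (by linarith)]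
    exact div_le_self zero_le_two (by linarith)
  calc ‖2 / (1 - ⟪v, x⟫)‖ * ‖(ℝ ∙ v)ᗮ.orthogonalProjectionOnto x‖ ≤ 2 * 1 := by gcongr
    _ = 2 := mul_one 2

variable [MeasurableSpace E] [BorelSpace E] {d : ℕ} [Fact (Module.finrank ℝ E = d + 1)]

lemma hausdorffMeasure_hemisphere_lt_top {v : E} (hv : ‖v‖ = 1) :
    μH[(d : ℝ)] {x : E | ‖x‖ = 1 ∧ ⟪v, x⟫ ≤ 0} < ⊤ := by
  have : FiniteDimensional ℝ E := .of_fact_finrank_eq_succ d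
  have hv₀ : v ≠ 0 := norm_ne_zero_iff.1 (by simp [hv])
  have hsmooth : ContDiff ℝ 1 (fun w : (ℝ ∙ v)ᗮ => stereoInvFunAux v (w : E)) :=
    contDiff_stereoInvFunAux.comp (ℝ ∙ v)ᗮ.subtypeL.contDiff
  obtain ⟨K, hK⟩ := hsmooth.contDiffOn.exists_lipschitzOnWith one_ne_zero
    (convex_closedBall (0 : (ℝ ∙ v)ᗮ) 2) (isCompact_closedBall _ _)
  have hball : μH[(d : ℝ)] (Metric.closedBall (0 : (ℝ ∙ v)ᗮ) 2) < ⊤ := by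
    have := isAddHaarMeasure_hausdorffMeasure (E := (ℝ ∙ v)ᗮ)
    rw [Submodule.finrank_orthogonal_span_singleton (n := d) hv₀] at this
    exact (isCompact_closedBall _ _).measure_lt_top
  have himage := (hK.hausdorffMeasure_image_le (d := d) (by positivity)).trans_lt
    (ENNReal.mul_lt_top (by finiteness) hball)
  refine (measure_mono ?_).trans_lt himage
  rintro x ⟨hx, hvx⟩
  have hxv : x ≠ v := by
    rintro rfl
    rw [real_inner_self_eq_norm_sq, hx] at hvx
    norm_num at hvx
  exact ⟨stereoToFun v x, stereoToFun_mem_closedBall hx hvx,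
    congrArg Subtype.val (stereo_left_inv hv (x := ⟨x, mem_sphere_zero_iff_norm.2 hx⟩) hxv)⟩

lemma hausdorffMeasure_sphere_lt_top : μH[(d : ℝ)] (Metric.sphere (0 : E) 1) < ⊤ := by
  have : Nontrivial E := Module.nontrivial_of_finrank_eq_succ (R := ℝ) (n := d) Fact.out
  obtain ⟨v, hv⟩ := exists_norm_eq E zero_le_one
  have hcover : Metric.sphere (0 : E) 1 ⊆
      {x | ‖x‖ = 1 ∧ ⟪v, x⟫ ≤ 0} ∪ {x | ‖x‖ = 1 ∧ ⟪-v, x⟫ ≤ 0} := fun x hx => by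
    rw [mem_sphere_zero_iff_norm] at hx
    exact (le_total ⟪v, x⟫ 0).imp (fun h => ⟨hx, h⟩) fun h => ⟨hx, by simpa using h⟩
  exact (measure_mono hcover).trans_lt (measure_union_lt_top
    (hausdorffMeasure_hemisphere_lt_top hv)
    (hausdorffMeasure_hemisphere_lt_top (by rwa [norm_neg])))

end SphereMeasure

section Blocks

variable {n k : ℕ}

variable (n k) in
/-- The orthogonal splitting `ℝ^{n+k} = ℝ^n × ℝ^k` into the first `n` and the last `k`
coordinates. -/
def blockEquiv : Rd (n + k) ≃ₗᵢ[ℝ] WithLp 2 (Rd n × Rd k) :=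
  (LinearIsometryEquiv.piLpCongrLeft 2 ℝ ℝ finSumFinEquiv.symm).trans
    (PiLp.sumPiLpEquivProdLpPiLp 2 _)

lemma blockEquiv_fst_apply (x : Rd (n + k)) (i : Fin n) :
    (blockEquiv n k x).fst i = x (Fin.castAdd k i) := rfl

lemma continuous_blockEquiv_fst : Continuous fun x : Rd (n + k) => (blockEquiv n k x).fst :=
  continuous_fst.comp ((WithLp.prod_continuous_ofLp 2 _ _).comp (blockEquiv n k).continuous)

lemma continuous_blockEquiv_snd : Continuous fun x : Rd (n + k) => (blockEquiv n k x).snd :=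
  continuous_snd.comp ((WithLp.prod_continuous_ofLp 2 _ _).comp (blockEquiv n k).continuous)

lemma norm_sq_eq_add_blockEquiv (x : Rd (n + k)) :
    ‖x‖ ^ 2 = ‖(blockEquiv n k x).fst‖ ^ 2 + ‖(blockEquiv n k x).snd‖ ^ 2 := by
  rw [← WithLp.prod_norm_sq_eq_of_L2, LinearIsometryEquiv.norm_map]

lemma inner_eq_add_blockEquiv (x y : Rd (n + k)) :
    ⟪x, y⟫ = ⟪(blockEquiv n k x).fst, (blockEquiv n k y).fst⟫ +
      ⟪(blockEquiv n k x).snd, (blockEquiv n k y).snd⟫ :=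
  ((blockEquiv n k).inner_map_map x y).symm.trans (WithLp.prod_inner_apply _ _)

lemma blockSq_eq_norm_blockEquiv_fst_sq (x : Rd (n + k)) :
    blockSq (n + k) k x = ‖(blockEquiv n k x).fst‖ ^ 2 := by
  rw [EuclideanSpace.real_norm_sq_eq, blockSq, Fin.sum_univ_add]
  simp [blockEquiv_fst_apply]

variable (n) in
/-- The isometry of `ℝ^{n+k} = ℝ^n × ℝ^k` acting by `L` on the second factor only. -/
def sndBlockIsometry (L : Rd k ≃ₗᵢ[ℝ] Rd k) : Rd (n + k) ≃ₗᵢ[ℝ] Rd (n + k) :=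
  ((blockEquiv n k).trans
    (LinearIsometryEquiv.withLpProdCongr 2 (LinearIsometryEquiv.refl ℝ (Rd n)) L)).trans
    (blockEquiv n k).symm

lemma blockEquiv_sndBlockIsometry_fst (L : Rd k ≃ₗᵢ[ℝ] Rd k) (x : Rd (n + k)) :
    (blockEquiv n k (sndBlockIsometry n L x)).fst = (blockEquiv n k x).fst := by
  simp [sndBlockIsometry]

lemma blockEquiv_sndBlockIsometry_snd (L : Rd k ≃ₗᵢ[ℝ] Rd k) (x : Rd (n + k)) :
    (blockEquiv n k (sndBlockIsometry n L x)).snd = L (blockEquiv n k x).snd := by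
  simp [sndBlockIsometry]

end Blocks

section Cap

variable {n k : ℕ} {δ : ℝ}

lemma mem_sphCap {ω : Rd (n + k)} :
    ω ∈ sphCap (n + k) k δ ↔ ‖ω‖ = 1 ∧ ‖(blockEquiv n k ω).fst‖ ^ 2 < δ ^ 2 := by
  rw [← blockSq_eq_norm_blockEquiv_fst_sq]
  rfl

lemma measurableSet_sphCap : MeasurableSet (sphCap (n + k) k δ) := by
  have hcap : sphCap (n + k) k δ =
      {ω | ‖ω‖ = 1} ∩ {ω | ‖(blockEquiv n k ω).fst‖ ^ 2 < δ ^ 2} :=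
    Set.ext fun _ => mem_sphCap
  rw [hcap]
  exact (isClosed_eq continuous_norm continuous_const).measurableSet.inter
    (isOpen_lt (continuous_blockEquiv_fst.norm.pow 2) continuous_const).measurableSet

lemma hausdorffMeasure_sphCap_lt_top {d : ℕ} : μH[(d : ℝ)] (sphCap (d + 1) k δ) < ⊤ := by
  have : Fact (Module.finrank ℝ (Rd (d + 1)) = d + 1) := ⟨by simp⟩
  exact (measure_mono fun ω hω => mem_sphere_zero_iff_norm.2 hω.1).trans_lt
    hausdorffMeasure_sphere_lt_top

lemma measurePreserving_sndBlockIsometry_sphCap (s : ℝ) (L : Rd k ≃ₗᵢ[ℝ] Rd k) :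
    MeasurePreserving (sndBlockIsometry n L) (μH[s].restrict (sphCap (n + k) k δ))
      (μH[s].restrict (sphCap (n + k) k δ)) := by
  have hpre : sndBlockIsometry n L ⁻¹' sphCap (n + k) k δ = sphCap (n + k) k δ := by
    ext ω
    simp only [Set.mem_preimage, mem_sphCap, LinearIsometryEquiv.norm_map,
      blockEquiv_sndBlockIsometry_fst]
  have := ((sndBlockIsometry n L).toIsometryEquiv.measurePreserving_hausdorffMeasure s
    ).restrict_preimage (measurableSet_sphCap (n := n) (k := k) (δ := δ))
  rwa [LinearIsometryEquiv.coe_toIsometryEquiv, hpre] at this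

lemma norm_blockEquiv_fst_le_of_mem_sphCap (hδ : 0 ≤ δ) {ω : Rd (n + k)}
    (hω : ω ∈ sphCap (n + k) k δ) : ‖(blockEquiv n k ω).fst‖ ≤ δ :=
  (lt_of_pow_lt_pow_left₀ 2 hδ (mem_sphCap.1 hω).2).le

lemma abs_norm_blockEquiv_snd_sub_one_le_of_mem_sphCap {ω : Rd (n + k)}
    (hω : ω ∈ sphCap (n + k) k δ) : |‖(blockEquiv n k ω).snd‖ - 1| ≤ δ ^ 2 := by
  obtain ⟨hnorm, hfst⟩ := mem_sphCap.1 hω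
  have hsum := norm_sq_eq_add_blockEquiv (n := n) (k := k) ω
  rw [hnorm, one_pow] at hsum
  have hle : ‖(blockEquiv n k ω).snd‖ ≤ 1 := by
    rw [← sq_le_one_iff₀ (norm_nonneg _)]
    linarith [sq_nonneg ‖(blockEquiv n k ω).fst‖]
  have hsq : ‖(blockEquiv n k ω).snd‖ ^ 2 ≤ ‖(blockEquiv n k ω).snd‖ :=
    pow_le_of_le_one (norm_nonneg _) hle two_ne_zero
  rw [abs_le]
  constructor <;> linarith [sq_nonneg δ]

lemma volume_image_castSucc_le_hausdorffMeasure {m : ℕ} (s : Set (Rd (m + 1))) :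
    volume ((fun (x : Rd (m + 1)) (i : Fin m) => x i.castSucc) '' s) ≤ μH[(m : ℝ)] s := by
  have hlip : LipschitzWith 1 fun (x : Rd (m + 1)) (i : Fin m) => x i.castSucc := by
    refine LipschitzWith.of_dist_le_mul fun x y => ?_
    rw [NNReal.coe_one, one_mul, dist_pi_le_iff dist_nonneg]
    intro i
    rw [dist_eq_norm, dist_eq_norm]
    exact PiLp.norm_apply_le (x - y) i.castSucc
  have hvol : (volume : Measure (Fin m → ℝ)) = μH[(m : ℝ)] := by
    rw [← hausdorffMeasure_pi_real, Fintype.card_fin]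
  simpa [hvol] using hlip.hausdorffMeasure_image_le (d := (m : ℝ)) (by positivity) s

lemma exists_norm_eq_one_castSucc_eq {m : ℕ} {w : Fin m → ℝ} (hw : ∑ i, w i ^ 2 ≤ 1) :
    ∃ ω : Rd (m + 1), ‖ω‖ = 1 ∧ ∀ i : Fin m, ω i.castSucc = w i := by
  refine ⟨WithLp.toLp 2 (Fin.snoc (α := fun _ => ℝ) w √(1 - ∑ i, w i ^ 2)), ?_, fun i => by simp⟩
  rw [← pow_eq_one_iff_of_nonneg (norm_nonneg _) two_ne_zero, EuclideanSpace.real_norm_sq_eq,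
    Fin.sum_univ_castSucc]
  simp only [Fin.snoc_castSucc, Fin.snoc_last]
  rw [sq_sqrt (by linarith)]
  ring

lemma volume_Icc_neg_append {a b : ℝ} (ha : 0 ≤ a) (hb : 0 ≤ b) :
    volume (Set.Icc (-Fin.append (fun _ : Fin n => a) (fun _ : Fin k => b))
      (Fin.append (fun _ => a) fun _ => b)) = ENNReal.ofReal ((2 * a) ^ n * (2 * b) ^ k) := by
  rw [volume_Icc_pi, Fin.prod_univ_add]
  simp only [Pi.neg_apply, Fin.append_left, Fin.append_right, sub_neg_eq_add, ← two_mul,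
    Finset.prod_const, Finset.card_univ, Fintype.card_fin]
  rw [← ENNReal.ofReal_pow (by positivity), ← ENNReal.ofReal_pow (by positivity),
    ← ENNReal.ofReal_mul (by positivity)]

lemma Icc_neg_append_subset_image_sphCap {ε : ℝ} (hε : (n + k) * ε ^ 2 < 1) (hδ : 0 < δ)
    (hδ₁ : δ ≤ 1) :
    Set.Icc (-Fin.append (fun _ : Fin n => ε * δ) (fun _ : Fin k => ε))
        (Fin.append (fun _ => ε * δ) fun _ => ε) ⊆
      (fun (x : Rd (n + k + 1)) (i : Fin (n + k)) => x i.castSucc) ''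
        sphCap (n + (k + 1)) (k + 1) δ := by
  intro w hw
  have hleft : ∀ i, w (Fin.castAdd k i) ^ 2 ≤ (ε * δ) ^ 2 := fun i =>
    sq_le_sq' (by simpa using hw.1 (Fin.castAdd k i)) (by simpa using hw.2 (Fin.castAdd k i))
  have hright : ∀ i, w (Fin.natAdd n i) ^ 2 ≤ ε ^ 2 := fun i =>
    sq_le_sq' (by simpa using hw.1 (Fin.natAdd n i)) (by simpa using hw.2 (Fin.natAdd n i))
  have hsumleft : ∑ i, w (Fin.castAdd k i) ^ 2 ≤ n * ε ^ 2 * δ ^ 2 := by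
    refine (Finset.sum_le_sum fun i _ => hleft i).trans_eq ?_
    simp [mul_pow, mul_assoc]
  have hsumright : ∑ i, w (Fin.natAdd n i) ^ 2 ≤ k * ε ^ 2 := by
    refine (Finset.sum_le_sum fun i _ => hright i).trans_eq ?_
    simp
  have hδsq : δ ^ 2 ≤ 1 := pow_le_one₀ hδ.le hδ₁
  obtain ⟨ω, hω, hωw⟩ := exists_norm_eq_one_castSucc_eq (w := w) (by
    rw [Fin.sum_univ_add]
    linarith [mul_le_of_le_one_right (by positivity : 0 ≤ n * ε ^ 2) hδsq])
  refine ⟨ω, mem_sphCap.2 ⟨hω, ?_⟩, funext hωw⟩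
  calc ‖(blockEquiv n (k + 1) ω).fst‖ ^ 2 = ∑ i, w (Fin.castAdd k i) ^ 2 := by
        rw [EuclideanSpace.real_norm_sq_eq]
        exact Finset.sum_congr rfl fun i _ => congrArg (· ^ 2) (hωw (Fin.castAdd k i))
    _ ≤ n * ε ^ 2 * δ ^ 2 := hsumleft
    _ < δ ^ 2 := mul_lt_of_lt_one_left (by positivity) (by nlinarith [sq_nonneg ε])

variable (n k) in
lemma exists_mul_pow_le_hausdorffMeasure_sphCap :
    ∃ c : ℝ, 0 < c ∧ ∀ δ : ℝ, 0 < δ → δ ≤ 1 →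
      c * δ ^ n ≤ (μH[((n + k : ℕ) : ℝ)]).real (sphCap (n + (k + 1)) (k + 1) δ) := by
  set ε : ℝ := 1 / (n + k + 1) with hε
  have hε₀ : 0 < ε := by positivity
  have hε₁ : (n + k) * ε ^ 2 < 1 := by
    rw [hε]
    field_simp
    nlinarith [(n.cast_nonneg : (0 : ℝ) ≤ n), (k.cast_nonneg : (0 : ℝ) ≤ k)]
  refine ⟨(2 * ε) ^ (n + k), by positivity, fun δ hδ hδ₁ => ?_⟩
  refine (ENNReal.ofReal_le_iff_le_toReal (hausdorffMeasure_sphCap_lt_top (d := n + k)).ne).1 ?_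
  calc ENNReal.ofReal ((2 * ε) ^ (n + k) * δ ^ n)
      = ENNReal.ofReal ((2 * (ε * δ)) ^ n * (2 * ε) ^ k) := by ring_nf
    _ = volume (Set.Icc (-Fin.append (fun _ : Fin n => ε * δ) (fun _ : Fin k => ε))
          (Fin.append (fun _ => ε * δ) fun _ => ε)) :=
        (volume_Icc_neg_append (by positivity) hε₀.le).symm
    _ ≤ _ := measure_mono (Icc_neg_append_subset_image_sphCap hε₁ hδ hδ₁)
    _ ≤ _ := volume_image_castSucc_le_hausdorffMeasure (m := n + k) _

lemma re_integral_exp_I_mul {Y : Type*} [MeasurableSpace Y] {μ : Measure Y} [IsFiniteMeasure μ]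
    {g : Y → ℝ} (hg : Measurable g) :
    (∫ y, Complex.exp (Complex.I * (g y : ℂ)) ∂μ).re = ∫ y, cos (g y) ∂μ := by
  have hinteg : Integrable (fun y => Complex.exp (Complex.I * (g y : ℂ))) μ :=
    Integrable.of_bound (by fun_prop : Measurable _).aestronglyMeasurable 1
      (Eventually.of_forall fun y => by rw [mul_comm, Complex.norm_exp_ofReal_mul_I])
  refine (Complex.reCLM.integral_comp_comm hinteg).symm.trans ?_
  simp only [Complex.reCLM_apply, mul_comm Complex.I, Complex.exp_ofReal_mul_I_re]

lemma half_mul_le_re_integral_sphCap (hδ : 0 ≤ δ) {B r : ℝ} (hB : 0 ≤ B) {x : Rd (n + (k + 1))}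
    (hfst : |r| * ‖(blockEquiv n (k + 1) x).fst‖ * δ ≤ 1)
    (hsnd : ∀ ω ∈ sphCap (n + (k + 1)) (k + 1) δ,
      B ≤ sphereCosMean (‖r • (blockEquiv n (k + 1) x).snd‖ • (blockEquiv n (k + 1) ω).snd)) :
    B / 2 * (μH[((n + k : ℕ) : ℝ)]).real (sphCap (n + (k + 1)) (k + 1) δ) ≤
      (∫ ω in sphCap (n + (k + 1)) (k + 1) δ,
        Complex.exp (Complex.I * ((r * ⟪x, ω⟫ : ℝ) : ℂ)) ∂μH[((n + k : ℕ) : ℝ)]).re := by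
  have : IsFiniteMeasure (μH[((n + k : ℕ) : ℝ)].restrict (sphCap (n + (k + 1)) (k + 1) δ)) :=
    ⟨by
      rw [Measure.restrict_apply_univ]
      exact hausdorffMeasure_sphCap_lt_top (d := n + k)⟩
  have hcap := ae_restrict_mem (μ := μH[((n + k : ℕ) : ℝ)])
    (measurableSet_sphCap (n := n) (k := k + 1) (δ := δ))
  have hphase : ∀ ω, r * ⟪x, ω⟫ = ⟪r • (blockEquiv n (k + 1) x).fst, (blockEquiv n (k + 1) ω).fst⟫ +
      ⟪r • (blockEquiv n (k + 1) x).snd, (blockEquiv n (k + 1) ω).snd⟫ := fun ω => by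
    rw [inner_eq_add_blockEquiv, real_inner_smul_left, real_inner_smul_left, mul_add]
  rw [re_integral_exp_I_mul (by fun_prop), ← measureReal_restrict_apply_univ]
  simp only [hphase]
  refine half_mul_le_integral_cos_add_inner (U := fun L => sndBlockIsometry n L)
    (continuous_const.inner continuous_blockEquiv_fst).measurable
    continuous_blockEquiv_snd.measurable (measurePreserving_sndBlockIsometry_sphCap _)
    (fun L ω => by rw [blockEquiv_sndBlockIsometry_fst]) blockEquiv_sndBlockIsometry_snd hB ?_
    (hcap.mono hsnd)
  filter_upwards [hcap] with ω hω
  calc |⟪r • (blockEquiv n (k + 1) x).fst, (blockEquiv n (k + 1) ω).fst⟫|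
      ≤ ‖r • (blockEquiv n (k + 1) x).fst‖ * ‖(blockEquiv n (k + 1) ω).fst‖ :=
        abs_real_inner_le_norm _ _
    _ ≤ |r| * ‖(blockEquiv n (k + 1) x).fst‖ * δ := by
        rw [norm_smul, Real.norm_eq_abs]
        gcongr
        exact norm_blockEquiv_fst_le_of_mem_sphCap hδ hω
    _ ≤ 1 := hfst

end Cap

section Shell

lemma le_addHaar_annulus {E : Type*} [NormedAddCommGroup E] [NormedSpace ℝ E] [MeasurableSpace E]
    [BorelSpace E] [FiniteDimensional ℝ E] (μ : Measure E) [μ.IsAddHaarMeasure] {N : ℕ}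
    (hN : Module.finrank ℝ E = N + 1) {R h : ℝ} (hh : 0 ≤ h) (hR : h ≤ R) :
    ENNReal.ofReal (2 * h * R ^ N) * μ (Metric.ball 0 1) ≤ μ {z : E | |‖z‖ - R| ≤ h} := by
  have : Nontrivial E := Module.nontrivial_of_finrank_eq_succ hN
  have hsub : Metric.ball (0 : E) (R + h) \ Metric.ball 0 (R - h) ⊆ {z : E | |‖z‖ - R| ≤ h} := by
    rintro z ⟨hlt, hge⟩
    rw [mem_ball_zero_iff] at hlt
    rw [mem_ball_zero_iff, not_lt] at hge
    rw [Set.mem_ofPred_eq, abs_le]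
    constructor <;> linarith
  have hpow : 2 * h * R ^ N ≤ (R + h) ^ (N + 1) - (R - h) ^ (N + 1) := by
    have hupper : R ^ N * (R + h) ≤ (R + h) ^ N * (R + h) := by gcongr <;> linarith
    have hlower : (R - h) ^ N * (R - h) ≤ R ^ N * (R - h) := by
      gcongr
      linarith
    rw [pow_succ, pow_succ]
    linarith
  calc ENNReal.ofReal (2 * h * R ^ N) * μ (Metric.ball 0 1)
      ≤ ENNReal.ofReal ((R + h) ^ (N + 1) - (R - h) ^ (N + 1)) * μ (Metric.ball 0 1) := by gcongr
    _ = μ (Metric.ball 0 (R + h) \ Metric.ball 0 (R - h)) := by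
        rw [measure_sdiff (Metric.ball_subset_ball (by linarith))
          measurableSet_ball.nullMeasurableSet measure_ball_lt_top.ne,
          Measure.addHaar_ball μ 0 (by linarith : 0 ≤ R + h),
          Measure.addHaar_ball μ 0 (by linarith : 0 ≤ R - h), hN,
          ENNReal.ofReal_sub _ (pow_nonneg (by linarith) _),
          ENNReal.sub_mul fun _ _ => measure_ball_lt_top.ne]
    _ ≤ μ {z : E | |‖z‖ - R| ≤ h} := measure_mono hsub

variable {n k : ℕ}

variable (n k) in
/-- The points of `ℝ^{n+k} = ℝ^n × ℝ^k` whose first block has norm at most `a` and whose second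
block lies in the annulus of radius `R` and half-width `h`. -/
def blockShell (a R h : ℝ) : Set (Rd (n + k)) :=
  {x | ‖(blockEquiv n k x).fst‖ ≤ a ∧ |‖(blockEquiv n k x).snd‖ - R| ≤ h}

lemma measurableSet_blockShell (a R h : ℝ) : MeasurableSet (blockShell n k a R h) :=
  ((isClosed_le continuous_blockEquiv_fst.norm continuous_const).inter
    (isClosed_le (continuous_blockEquiv_snd.norm.sub continuous_const).abs
      continuous_const)).measurableSet

lemma pairwise_disjoint_blockShell (a R₀ : ℝ) :
    Pairwise (Function.onFun Disjoint fun j : ℕ => blockShell n k a (2 * π * j + R₀) (1 / 4)) := by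
  refine (pairwise_disjoint_on _).2 fun i j hij => Set.disjoint_left.2 fun x hi hj => ?_
  have hgap : 2 * π * (i + 1) ≤ 2 * π * j := by
    gcongr
    exact_mod_cast hij
  linarith [pi_gt_three, (abs_le.1 hi.2).2, (abs_le.1 hj.2).1]

lemma volume_blockShell (a R h : ℝ) :
    volume (blockShell n k a R h) =
      volume (Metric.closedBall (0 : Rd n) a) * volume {z : Rd k | |‖z‖ - R| ≤ h} := by
  have hpres : MeasurePreserving (fun x : Rd (n + k) => WithLp.ofLp (blockEquiv n k x)) :=
    (WithLp.volume_preserving_ofLp (U := Rd n) (V := Rd k)).comp (blockEquiv n k).measurePreserving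
  have hpre : blockShell n k a R h = (fun x : Rd (n + k) => WithLp.ofLp (blockEquiv n k x)) ⁻¹'
      (Metric.closedBall (0 : Rd n) a ×ˢ {z : Rd k | |‖z‖ - R| ≤ h}) := by
    ext x
    simp [blockShell]
  have hannulus : MeasurableSet {z : Rd k | |‖z‖ - R| ≤ h} :=
    (isClosed_le (by fun_prop) continuous_const).measurableSet
  rw [hpre, hpres.measure_preimage (measurableSet_closedBall.prod hannulus).nullMeasurableSet,
    Measure.volume_eq_prod, Measure.prod_prod]

variable (n k) in
lemma exists_le_volume_blockShell :
    ∃ c : ℝ, 0 < c ∧ ∀ a R h : ℝ, 0 ≤ a → 0 ≤ h → h ≤ R →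
      ENNReal.ofReal (c * a ^ n * h * R ^ k) ≤ volume (blockShell n (k + 1) a R h) := by
  have hball : ∀ d : ℕ, 0 < volume.real (Metric.ball (0 : Rd d) 1) := fun d =>
    ENNReal.toReal_pos (Metric.measure_ball_pos _ _ one_pos).ne' measure_ball_lt_top.ne
  refine ⟨volume.real (Metric.ball (0 : Rd n) 1) * 2 * volume.real (Metric.ball (0 : Rd (k + 1)) 1),
    mul_pos (mul_pos (hball n) two_pos) (hball (k + 1)), fun a R h ha hh hR => ?_⟩
  have hR₀ : 0 ≤ R := hh.trans hR
  calc ENNReal.ofReal (volume.real (Metric.ball (0 : Rd n) 1) * 2 *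
          volume.real (Metric.ball (0 : Rd (k + 1)) 1) * a ^ n * h * R ^ k)
      = ENNReal.ofReal (a ^ n * volume.real (Metric.ball (0 : Rd n) 1) *
          (2 * h * R ^ k * volume.real (Metric.ball (0 : Rd (k + 1)) 1))) := by ring_nf
    _ = ENNReal.ofReal (a ^ n) * volume (Metric.ball (0 : Rd n) 1) *
          (ENNReal.ofReal (2 * h * R ^ k) * volume (Metric.ball (0 : Rd (k + 1)) 1)) := by
        rw [ENNReal.ofReal_mul (by positivity), ENNReal.ofReal_mul (by positivity),
          ENNReal.ofReal_mul (by positivity), ofReal_measureReal measure_ball_lt_top.ne,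
          ofReal_measureReal measure_ball_lt_top.ne]
    _ ≤ volume (Metric.closedBall (0 : Rd n) a) * volume {z : Rd (k + 1) | |‖z‖ - R| ≤ h} := by
        gcongr
        · rw [Measure.addHaar_closedBall _ _ ha, finrank_euclideanSpace_fin]
        · exact le_addHaar_annulus volume finrank_euclideanSpace_fin hh hR
    _ = volume (blockShell n (k + 1) a R h) := (volume_blockShell a R h).symm

variable (n k) in
lemma exists_le_volume_blockShell_inv :
    ∃ c : ℝ, 0 < c ∧ ∀ (δ R₀ : ℝ) (j : ℕ), 0 < δ → 1 ≤ R₀ →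
      ENNReal.ofReal (c * (δ ^ n)⁻¹ * j ^ k) ≤
        volume (blockShell n (k + 1) (1 / (2 * δ)) (2 * π * j + R₀) (1 / 4)) := by
  obtain ⟨c, hc, hvol⟩ := exists_le_volume_blockShell n k
  refine ⟨c * (1 / 2) ^ n / 4, by positivity, fun δ R₀ j hδ hR₀ => ?_⟩
  have hj : (j : ℝ) ≤ 2 * π * j + R₀ := by
    linarith [le_mul_of_one_le_left j.cast_nonneg (by linarith [pi_gt_three] : 1 ≤ 2 * π)]
  refine le_trans (ENNReal.ofReal_le_ofReal ?_) (hvol (1 / (2 * δ)) (2 * π * j + R₀) (1 / 4)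
    (by positivity) (by norm_num) (by linarith [(by positivity : 0 ≤ 2 * π * j)]))
  calc c * (1 / 2) ^ n / 4 * (δ ^ n)⁻¹ * j ^ k = c * (1 / (2 * δ)) ^ n * (1 / 4) * j ^ k := by
        rw [← one_div_mul_one_div, mul_pow, one_div_pow δ]
        ring
    _ ≤ c * (1 / (2 * δ)) ^ n * (1 / 4) * (2 * π * j + R₀) ^ k := by gcongr

lemma abs_abs_mul_norm_blockEquiv_snd_sub_one_le {δ m r : ℝ} (hm : m ≤ 1) (hr : |r - 1| ≤ m)
    {ω : Rd (n + k)} (hω : ω ∈ sphCap (n + k) k δ) :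
    |(|r| * ‖(blockEquiv n k ω).snd‖ - 1)| ≤ 2 * (δ ^ 2 + m) := by
  have hr₁ : |(|r| - 1)| ≤ m := by simpa using (abs_abs_sub_abs_le_abs_sub r 1).trans hr
  have hr₂ : |r| ≤ 2 := by linarith [(abs_le.1 hr₁).2]
  have hω₁ := abs_norm_blockEquiv_snd_sub_one_le_of_mem_sphCap hω
  calc |(|r| * ‖(blockEquiv n k ω).snd‖ - 1)|
      = |(|r| * (‖(blockEquiv n k ω).snd‖ - 1) + (|r| - 1))| := by ring_nf
    _ ≤ |r| * |‖(blockEquiv n k ω).snd‖ - 1| + |(|r| - 1)| := by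
        refine (abs_add_le _ _).trans_eq ?_
        rw [abs_mul, abs_abs]
    _ ≤ 2 * δ ^ 2 + m := by gcongr
    _ ≤ 2 * (δ ^ 2 + m) := by linarith [(abs_nonneg _).trans hr]

lemma abs_norm_smul_smul_blockEquiv_snd_sub_le {δ m r : ℝ} (hm : m ≤ 1) (hr : |r - 1| ≤ m)
    (z : Rd k) (R : ℝ) {ω : Rd (n + k)} (hω : ω ∈ sphCap (n + k) k δ) :
    |‖‖r • z‖ • (blockEquiv n k ω).snd‖ - R| ≤ 2 * (δ ^ 2 + m) * ‖z‖ + |‖z‖ - R| := by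
  have hnorm : ‖‖r • z‖ • (blockEquiv n k ω).snd‖ - R =
      (|r| * ‖(blockEquiv n k ω).snd‖ - 1) * ‖z‖ + (‖z‖ - R) := by
    rw [norm_smul, norm_norm, norm_smul, Real.norm_eq_abs]
    ring
  calc |‖‖r • z‖ • (blockEquiv n k ω).snd‖ - R|
      ≤ |(|r| * ‖(blockEquiv n k ω).snd‖ - 1)| * ‖z‖ + |‖z‖ - R| := by
        rw [hnorm]
        refine (abs_add_le _ _).trans_eq ?_
        rw [abs_mul, abs_norm]
    _ ≤ 2 * (δ ^ 2 + m) * ‖z‖ + |‖z‖ - R| := by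
        gcongr
        exact abs_abs_mul_norm_blockEquiv_snd_sub_one_le hm hr hω

variable (n k) in
lemma exists_le_re_integral_sphCap :
    ∃ c₀ c₂ R₀ : ℝ, 0 < c₀ ∧ 0 < c₂ ∧ 1 ≤ R₀ ∧
      ∀ (δ m r : ℝ) (j : ℕ), 0 < δ → δ ≤ 1 → m ≤ 1 → |r - 1| ≤ m → 1 ≤ j →
        j * (δ ^ 2 + m) ≤ c₀ →
        ∀ x ∈ blockShell n (k + 1) (1 / (2 * δ)) (2 * π * j + R₀) (1 / 4),
          c₂ * δ ^ n * (j : ℝ) ^ ((1 - ((k + 1 : ℕ) : ℝ)) / 2) ≤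
            (∫ ω in sphCap (n + (k + 1)) (k + 1) δ,
              Complex.exp (Complex.I * ((r * ⟪x, ω⟫ : ℝ) : ℂ)) ∂μH[((n + k : ℕ) : ℝ)]).re := by
  obtain ⟨A, R₀, hA, hR₀, hmean⟩ := exists_forall_le_sphereCosMean (Rd (k + 1))
  obtain ⟨c, hc, hcap⟩ := exists_mul_pow_le_hausdorffMeasure_sphCap n k
  rw [finrank_euclideanSpace_fin] at hmean
  set C := 2 * π + (R₀ + 1 / 4) with hC
  have hC₀ : 0 < C := by positivity
  refine ⟨1 / (8 * C), A / 2 * c, R₀, by positivity, by positivity, hR₀,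
    fun δ m r j hδ hδ₁ hm hr hj hjc x hx => ?_⟩
  obtain ⟨hfst, hsnd⟩ := hx
  have hj' : (1 : ℝ) ≤ j := mod_cast hj
  have hm₀ : 0 ≤ m := (abs_nonneg _).trans hr
  have hr₂ : |r| ≤ 2 := by
    linarith [abs_sub_abs_le_abs_sub r 1, abs_one (α := ℝ)]
  have hsndC : ‖(blockEquiv n (k + 1) x).snd‖ ≤ C * j := by
    have : (R₀ + 1 / 4) * 1 ≤ (R₀ + 1 / 4) * j := by gcongr
    linarith [(abs_le.1 hsnd).2, (by rw [hC]; ring : C * j = 2 * π * j + (R₀ + 1 / 4) * j)]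
  calc A / 2 * c * δ ^ n * (j : ℝ) ^ ((1 - ((k + 1 : ℕ) : ℝ)) / 2)
      = A * (j : ℝ) ^ ((1 - ((k + 1 : ℕ) : ℝ)) / 2) / 2 * (c * δ ^ n) := by ring
    _ ≤ A * (j : ℝ) ^ ((1 - ((k + 1 : ℕ) : ℝ)) / 2) / 2 *
          (μH[((n + k : ℕ) : ℝ)]).real (sphCap (n + (k + 1)) (k + 1) δ) := by
        gcongr
        exact hcap δ hδ hδ₁
    _ ≤ _ := half_mul_le_re_integral_sphCap hδ.le (by positivity) ?_ fun ω hω => hmean j hj _ ?_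
  · calc |r| * ‖(blockEquiv n (k + 1) x).fst‖ * δ ≤ 2 * (1 / (2 * δ)) * δ := by gcongr
      _ = 1 := by field_simp
  · calc |‖‖r • (blockEquiv n (k + 1) x).snd‖ • (blockEquiv n (k + 1) ω).snd‖ - (2 * π * j + R₀)|
        ≤ 2 * (δ ^ 2 + m) * ‖(blockEquiv n (k + 1) x).snd‖ +
            |‖(blockEquiv n (k + 1) x).snd‖ - (2 * π * j + R₀)| :=
          abs_norm_smul_smul_blockEquiv_snd_sub_le hm hr _ _ hω
      _ ≤ 2 * (δ ^ 2 + m) * (C * j) + 1 / 4 := by gcongr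
      _ = 2 * C * (j * (δ ^ 2 + m)) + 1 / 4 := by ring
      _ ≤ 2 * C * (1 / (8 * C)) + 1 / 4 := by gcongr
      _ = 1 / 2 := by
          field_simp
          norm_num

end Shell

/-- Proposition 2.4: pointwise lower bounds for the extension operator
applied to `1_{C^k_δ}` on large disjoint sets `E_j`.  The surface measure on `S^{d-1}` is
realised as the `(d-1)`-dimensional Hausdorff measure. -/
theorem stmt7 (d k : ℕ) (hd : 2 ≤ d) (hk1 : 1 ≤ k) (hkd : k ≤ d - 1) :
    ∃ c₀ c₁ c₂ : ℝ, 0 < c₀ ∧ 0 < c₁ ∧ 0 < c₂ ∧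
      ∀ m δ : ℝ, m ∈ Set.Ioo (0:ℝ) (1/2) → δ ∈ Set.Ioo (0:ℝ) (1/2) →
        ∃ E : ℕ → Set (Rd d),
          (∀ j ∈ Finset.Icc 1 ⌊c₀ / (δ ^ 2 + m)⌋₊, MeasurableSet (E j)) ∧
          ((Finset.Icc 1 ⌊c₀ / (δ ^ 2 + m)⌋₊ : Set ℕ).PairwiseDisjoint E) ∧
          (∀ j ∈ Finset.Icc 1 ⌊c₀ / (δ ^ 2 + m)⌋₊,
            ENNReal.ofReal (c₁ * δ ^ ((k : ℝ) - (d : ℝ)) * (j : ℝ) ^ ((k : ℝ) - 1))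
              ≤ volume (E j)) ∧
          (∀ j ∈ Finset.Icc 1 ⌊c₀ / (δ ^ 2 + m)⌋₊, ∀ r : ℝ, |r - 1| ≤ m → ∀ x ∈ E j,
            c₂ * δ ^ ((d : ℝ) - (k : ℝ)) * (j : ℝ) ^ ((1 - (k : ℝ)) / 2)
              ≤ (∫ ω in sphCap d k δ,
                  Complex.exp (Complex.I * ((r * ⟪x, ω⟫ : ℝ) : ℂ))
                    ∂ μH[(d : ℝ) - 1]).re) := by
  obtain ⟨n, rfl⟩ : ∃ n, d = n + k := ⟨d - k, by omega⟩
  obtain ⟨k, rfl⟩ : ∃ l, k = l + 1 := ⟨k - 1, by omega⟩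
  obtain ⟨c₁, hc₁, hvol⟩ := exists_le_volume_blockShell_inv n k
  obtain ⟨c₀, c₂, R₀, hc₀, hc₂, hR₀, hinteg⟩ := exists_le_re_integral_sphCap n k
  have hcodim : ((n + (k + 1) : ℕ) : ℝ) - ((k + 1 : ℕ) : ℝ) = n := by push_cast; ring
  have hsphere : ((n + (k + 1) : ℕ) : ℝ) - 1 = (n + k : ℕ) := by push_cast; ring
  have hsubsphere : ((k + 1 : ℕ) : ℝ) - 1 = k := by push_cast; ring
  refine ⟨c₀, c₁, c₂, hc₀, hc₁, hc₂, fun m δ ⟨hm, hm'⟩ ⟨hδ, hδ'⟩ =>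
    ⟨fun j => blockShell n (k + 1) (1 / (2 * δ)) (2 * π * j + R₀) (1 / 4),
      fun j _ => measurableSet_blockShell _ _ _,
      (pairwise_disjoint_blockShell _ R₀).set_pairwise _, fun j _ => ?_, fun j hj r hr x hx => ?_⟩⟩
  · rw [← neg_sub ((n + (k + 1) : ℕ) : ℝ), hcodim, hsubsphere, rpow_neg hδ.le, rpow_natCast,
      rpow_natCast]
    exact hvol δ R₀ j hδ hR₀
  · obtain ⟨hj₁, hjle⟩ := Finset.mem_Icc.1 hj
    have hjc : j * (δ ^ 2 + m) ≤ c₀ :=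
      (le_div_iff₀ (by positivity)).1 ((Nat.le_floor_iff' (by omega)).1 hjle)
    rw [hcodim, hsphere, rpow_natCast]
    exact hinteg δ m r j hδ (by linarith) (by linarith) hr hj₁ hjc x hx
end
end
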